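/- arXiv:1912.10403 — 4 statements merged into one kernel-verified Lean document; each statement's English description precedes it below -/
import Mathlib

section
/- Assume m_j > 0, k_j > 0, b_j ≥ 0 for all j = 1,…,n. Fix j ∈ [1, n−1] and suppose (−λ)·g_j(λ)/(f_j, g_j) ≪ f_j(λ)/(f_j, g_j). If b_{j+1} ≠ 0 and the linear polynomial k_{j+1} − λ·b_{j+1} does not divide f_j(λ)/(f_j, g_j), then (f_{j+1}, g_{j+1}) = (f_j, g_j) and f_{j+1}(λ)/(f_{j+1}, g_{j+1}) ≪ f_j(λ)·(k_{j+1} − λ b_{j+1})/(f_j, g_j). -/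
open Polynomial

/-- The tridiagonal matrix of order `j` built from `k 1, …, k j` (1-indexed):
diagonal entries `k r + k (r+1)` for `r < j`, last diagonal entry `k j`,
off-diagonal entries `-(k (r+1))`. -/
noncomputable def triMat (k : ℕ → ℝ) (j : ℕ) : Matrix (Fin j) (Fin j) ℝ :=
  Matrix.of fun r c =>
    if (r : ℕ) = (c : ℕ) then
      (if (r : ℕ) = j - 1 then k j else k ((r : ℕ) + 1) + k ((r : ℕ) + 2))
    else if (r : ℕ) + 1 = (c : ℕ) then -k ((c : ℕ) + 1)
    else if (c : ℕ) + 1 = (r : ℕ) then -k ((r : ℕ) + 1)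
    else 0

/-- The matrix `K_j - λ (M_j + B_j)` with entries in `ℝ[λ]`. -/
noncomputable def sysMat (m k b : ℕ → ℝ) (j : ℕ) :
    Matrix (Fin j) (Fin j) (Polynomial ℝ) :=
  (triMat k j).map Polynomial.C -
    (Polynomial.X : Polynomial ℝ) •
      ((Matrix.diagonal (fun i : Fin j => m ((i : ℕ) + 1)) + triMat b j).map Polynomial.C)

/-- `f_j(λ) = det (K_j - λ (M_j + B_j))`. -/
noncomputable def fpoly (m k b : ℕ → ℝ) (j : ℕ) : Polynomial ℝ :=
  (sysMat m k b j).det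

/-- `g_j(λ)`: the leading principal minor of order `j-1` of `K_j - λ (M_j + B_j)`
(so `g 1 = 1`, the determinant of the empty matrix). -/
noncomputable def gpoly (m k b : ℕ → ℝ) (j : ℕ) : Polynomial ℝ :=
  ((sysMat m k b j).submatrix (Fin.castLE (Nat.sub_le j 1))
    (Fin.castLE (Nat.sub_le j 1))).det

/-- `Prec g f` formalizes `g ≪ f`: both polynomials have degree `s ≥ 1`, each has `s`
distinct real roots, the leading coefficients `c`, `d` have the same sign, and the roots
strictly interlace as `β 0 < α 0 < β 1 < α 1 < ⋯ < β (s-1) < α (s-1)`. -/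
def Prec (g f : Polynomial ℝ) : Prop :=
  ∃ (s : ℕ) (c d : ℝ) (α β : Fin s → ℝ),
    0 < s ∧ 0 < c * d ∧ StrictMono α ∧ StrictMono β ∧
    f = Polynomial.C c * ∏ i, (Polynomial.X - Polynomial.C (α i)) ∧
    g = Polynomial.C d * ∏ i, (Polynomial.X - Polynomial.C (β i)) ∧
    (∀ i, β i < α i) ∧
    ∀ (i : Fin s) (h : (i : ℕ) + 1 < s), α i < β ⟨(i : ℕ) + 1, h⟩

theorem det_tri {R : Type*} [CommRing R] (t : ℕ) (M : Matrix (Fin (t+2)) (Fin (t+2)) R)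
    (hr : ∀ i : Fin t, M (Fin.last _) i.castSucc.castSucc = 0)
    (hc : ∀ i : Fin t, M i.castSucc.castSucc (Fin.last _) = 0) :
    M.det = M (Fin.last _) (Fin.last _) * (M.submatrix Fin.castSucc Fin.castSucc).det
      - M (Fin.last _) (Fin.last _).castSucc * M (Fin.last _).castSucc (Fin.last _) *
        (M.submatrix (fun i : Fin t => i.castSucc.castSucc) (fun i : Fin t => i.castSucc.castSucc)).det := by
  rw [Matrix.det_succ_row M (Fin.last _), Fin.sum_univ_castSucc, Fin.sum_univ_castSucc]
  have h1 : (M.submatrix (Fin.last (t+1)).succAbove (Fin.last t).castSucc.succAbove).det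
     = M (Fin.last _).castSucc (Fin.last _) * (M.submatrix (fun i : Fin t => i.castSucc.castSucc) (fun i : Fin t => i.castSucc.castSucc)).det := by
    rw [Matrix.det_succ_column _ (Fin.last _), Fin.sum_univ_castSucc]
    have : ∀ i : Fin t, M i.castSucc.castSucc (Fin.succAbove (Fin.last t).castSucc (Fin.last t)) = 0 := by
      intro i; rw [← hc i]; congr 1; simp
    have h2 : (Fin.succAbove (Fin.last t).castSucc (Fin.last t)) = Fin.last _ := by simp
    have h3 : ∀ i : Fin t, (Fin.last t).castSucc.succAbove i.castSucc = i.castSucc.castSucc := by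
      intro i
      rw [Fin.succAbove_of_castSucc_lt]
      simp [Fin.lt_def]
    have e : (-1 : R)^(t + t) = 1 := by rw [← two_mul, pow_mul]; simp
    simp [hc, e, Matrix.submatrix_submatrix, Function.comp_def, h2, h3, -Fin.succAbove_castSucc_self]
  have e1 : (-1 : R)^(t + 1 + t) = -1 := by 
    rw [show t+1+t = 2*t+1 by ring, pow_succ, pow_mul]; simp
  have e2 : (-1 : R)^(t + 1 + (t + 1)) = 1 := by 
    rw [← two_mul, pow_mul]; simp
  rw [h1]
  simp [hr, e1, e2]
  ring

theorem det_last {R : Type*} [CommRing R] (t : ℕ) (M N : Matrix (Fin (t+1)) (Fin (t+1)) R) (p : R)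
    (h0 : M (Fin.last _) (Fin.last _) = N (Fin.last _) (Fin.last _) + p)
    (h1 : ∀ i j, ¬ (i = Fin.last _ ∧ j = Fin.last _) → M i j = N i j) :
    M.det = N.det + p * (N.submatrix Fin.castSucc Fin.castSucc).det := by
  rw [Matrix.det_succ_row M (Fin.last _), Matrix.det_succ_row N (Fin.last _)]
  have h2 : ∀ j, (M.submatrix (Fin.last t).succAbove (Fin.succAbove j)) = 
     (N.submatrix (Fin.last t).succAbove (Fin.succAbove j)) := by
    intro f
    ext i j
    simp only [Matrix.submatrix_apply]
    apply h1
    simp [Fin.ext_iff]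
    omega
  simp only [h2]
  rw [Fin.sum_univ_castSucc, Fin.sum_univ_castSucc]
  have e2 : (-1 : R)^(t + t) = 1 := by 
    rw [← two_mul, pow_mul]; simp
  have h3 : ∀ i : Fin t, M (Fin.last _) i.castSucc = N (Fin.last _) i.castSucc := by
    intro i; apply h1; simp [Fin.ext_iff]; omega
  simp [h3, h0, e2]
  ring

theorem rec_g (m k b : ℕ → ℝ) (t : ℕ) :
    gpoly m k b (t+2) = fpoly m k b (t+1) + (C (k (t+2)) - C (b (t+2)) * X) * gpoly m k b (t+1) := by
  have key := det_last t ((sysMat m k b (t+2)).submatrix Fin.castSucc Fin.castSucc)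
    (sysMat m k b (t+1)) (C (k (t+2)) - C (b (t+2)) * X) ?_ ?_
  · exact key
  · simp [sysMat, triMat, Matrix.diagonal]
    ring
  · intro i j hij
    have hi := i.isLt
    have hj := j.isLt
    simp only [Fin.ext_iff, Fin.val_last] at hij
    simp only [sysMat, triMat, Matrix.diagonal, Matrix.submatrix_apply, Matrix.sub_apply,
      Matrix.map_apply, Matrix.of_apply, Matrix.smul_apply, Matrix.add_apply, Fin.val_castSucc,
      Fin.ext_iff]
    by_cases h : (i : ℕ) = j
    · have h1 : ¬ ((j:ℕ) = t + 2 - 1) := by omega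
      have h2 : ¬ ((j:ℕ) = t + 1 - 1) := by omega
      simp only [h, h1, h2, if_true, if_false]
    · simp only [h, if_false]

theorem rec_f0 (m k b : ℕ → ℝ) (t : ℕ) :
    fpoly m k b (t+2) = (C (k (t+2)) - C (b (t+2)) * X - C (m (t+2)) * X) * gpoly m k b (t+2) -
      (C (k (t+2)) - C (b (t+2)) * X)^2 * gpoly m k b (t+1) := by
  have key := det_tri t (sysMat m k b (t+2)) ?_ ?_
  · have h1 : (sysMat m k b (t+2)) (Fin.last _) (Fin.last _) =
      C (k (t+2)) - C (b (t+2)) * X - C (m (t+2)) * X := by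
      simp [sysMat, triMat, Matrix.diagonal]
      ring
    have h2 : (sysMat m k b (t+2)) (Fin.last _) (Fin.last _).castSucc =
      -(C (k (t+2)) - C (b (t+2)) * X) := by
      have hne : ¬ (t + 1 + 1 = t) := by omega
      simp [sysMat, triMat, Matrix.diagonal, Fin.ext_iff, hne]
      ring
    have h3 : (sysMat m k b (t+2)) (Fin.last _).castSucc (Fin.last _) =
      -(C (k (t+2)) - C (b (t+2)) * X) := by
      simp [sysMat, triMat, Matrix.diagonal, Fin.ext_iff]
      ring
    have h4 : ((sysMat m k b (t+2)).submatrix (fun i : Fin t => i.castSucc.castSucc)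
        (fun i : Fin t => i.castSucc.castSucc)) =
        (sysMat m k b (t+1)).submatrix Fin.castSucc Fin.castSucc := by
      ext1 i j
      have hi := i.isLt
      have hj := j.isLt
      simp only [sysMat, triMat, Matrix.diagonal, Matrix.submatrix_apply, Matrix.sub_apply,
        Matrix.map_apply, Matrix.of_apply, Matrix.smul_apply, Matrix.add_apply, Fin.val_castSucc,
        Fin.ext_iff]
      have h1 : ¬ ((i:ℕ) = t + 2 - 1) := by omega
      have h2 : ¬ ((i:ℕ) = t + 1 - 1) := by omega
      simp only [h1, h2, if_false]
    rw [h1, h2, h3, h4] at key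
    have key2 : fpoly m k b (t+2) = _ := key
    rw [key2]
    change _ * gpoly m k b (t+2) - _ * gpoly m k b (t+1) = _
    ring
  · intro i
    have hi := i.isLt
    have h1 : ¬ (t + 1 = (i:ℕ)) := by omega
    have h2 : ¬ (t + 1 + 1 = (i:ℕ)) := by omega
    have h3 : ¬ ((i:ℕ) = t) := by omega
    simp [sysMat, triMat, Matrix.diagonal, Fin.ext_iff, h1, h2, h3]
  · intro i
    have hi := i.isLt
    have h1 : ¬ ((i:ℕ) = t + 1) := by omega
    have h2 : ¬ (t + 1 + 1 = (i:ℕ)) := by omega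
    have h3 : ¬ ((i:ℕ) = t) := by omega
    simp [sysMat, triMat, Matrix.diagonal, Fin.ext_iff, h1, h2, h3]

theorem rec_f (m k b : ℕ → ℝ) (t : ℕ) :
    fpoly m k b (t+2) = (C (k (t+2)) - C (b (t+2)) * X) * fpoly m k b (t+1)
      - C (m (t+2)) * X * gpoly m k b (t+2) := by
  rw [rec_f0, rec_g]
  ring

theorem root_between (H : ℝ[X]) (x y : ℝ) (hxy : x < y) (h : H.eval x * H.eval y < 0) :
    ∃ z, x < z ∧ z < y ∧ H.eval z = 0 := by
  have hc : ContinuousOn (fun z => H.eval z) (Set.Icc x y) := H.continuous.continuousOn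
  rcases mul_neg_iff.1 h with ⟨h1, h2⟩ | ⟨h1, h2⟩
  · obtain ⟨z, hz, hz'⟩ := intermediate_value_Ioo' hxy.le hc ⟨h2, h1⟩
    exact ⟨z, hz.1, hz.2, hz'⟩
  · obtain ⟨z, hz, hz'⟩ := intermediate_value_Ioo hxy.le hc ⟨h1, h2⟩
    exact ⟨z, hz.1, hz.2, hz'⟩

theorem eq_prod_of_roots {s : ℕ} (H : ℝ[X]) (hH : H ≠ 0) (hd : H.natDegree = s) (β : Fin s → ℝ)
    (hβ : Function.Injective β) (h : ∀ i, H.eval (β i) = 0) :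
    H = C H.leadingCoeff * ∏ i, (X - C (β i)) := by
  have hle : (Finset.univ.val.map β) ≤ H.roots := by
    rw [Multiset.le_iff_subset]
    · intro x hx
      simp only [Multiset.mem_map] at hx
      obtain ⟨i, -, rfl⟩ := hx
      rw [mem_roots hH]
      exact h i
    · exact Finset.univ.nodup.map hβ
  have hcard : Multiset.card H.roots ≤ Multiset.card (Finset.univ.val.map β) := by
    simpa [hd] using H.card_roots'
  have he := Multiset.eq_of_le_of_card_le hle hcard
  have h2 : Multiset.card H.roots = H.natDegree := by
    rw [← he]; simp [hd]
  conv_lhs => rw [← C_leadingCoeff_mul_prod_multiset_X_sub_C h2, ← he]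
  rw [Multiset.map_map]
  rfl

theorem prec_of_signs (S : Finset ℝ) (hS : 0 < S.card) (c : ℝ) (H : ℝ[X])
    (hd : H.natDegree = S.card) (hc : 0 < c * H.leadingCoeff)
    (hsign : ∀ x ∈ S, 0 < H.eval x * (c * ∏ y ∈ S.erase x, (x - y))) :
    Prec H (C c * ∏ x ∈ S, (X - C x)) := by
  have hc0 : c ≠ 0 := by rintro rfl; simp at hc
  have hH : H ≠ 0 := by rintro rfl; simp at hc
  set γ := S.orderEmbOfFin rfl with hγ
  have hmem : ∀ i, γ i ∈ S := fun i => S.orderEmbOfFin_mem rfl i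
  have hsurj : ∀ x ∈ S, ∃ i, γ i = x := by
    intro x hx
    have hx' : x ∈ Finset.image γ Finset.univ := by
      rw [hγ, S.image_orderEmbOfFin_univ rfl]; exact hx
    obtain ⟨i, -, hi⟩ := Finset.mem_image.1 hx'
    exact ⟨i, hi⟩
  -- sign comparison on a gap
  have gap : ∀ i : Fin S.card, ∃ x, x < γ i ∧ (∀ l, l < i → γ l ≤ x) ∧
      H.eval x * H.eval (γ i) < 0 := by
    intro i
    have hi := hsign _ (hmem i)
    by_cases h0 : (i : ℕ) = 0
    · -- point near minus infinity
      set P := C c * ∏ x ∈ S, (X - C x) with hP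
      have hmon : (∏ x ∈ S, (X - C x)).Monic := monic_prod_of_monic _ _ fun x _ => monic_X_sub_C x
      have hPl : P.leadingCoeff = c := by
        rw [hP, leadingCoeff_mul, hmon.leadingCoeff]; simp
      have hPd : P.natDegree = S.card := by
        rw [hP, natDegree_C_mul hc0, natDegree_prod_of_monic _ _ fun x _ => monic_X_sub_C x]
        simp
      have hP0 : P ≠ 0 := by
        intro h; rw [h] at hPl; simp at hPl; exact hc0 hPl.symm
      have hdeg : H.degree = P.degree := by
        rw [degree_eq_natDegree hH, degree_eq_natDegree hP0, hd, hPd]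
      have ht := div_tendsto_atBot_leadingCoeff_div_of_degree_eq H P hdeg
      have hpos : 0 < H.leadingCoeff / P.leadingCoeff := by
        rw [hPl, ← mul_pos_iff_of_pos_right (sq_pos_of_ne_zero hc0)]
        rw [show H.leadingCoeff / c * c^2 = c * H.leadingCoeff by field_simp]
        exact hc
      have hev := ht.eventually (lt_mem_nhds hpos)
      obtain ⟨x, hx1, hx2⟩ := (hev.and (Filter.eventually_lt_atBot (γ i))).exists
      refine ⟨x, hx2, ?_, ?_⟩
      · intro l hl; rw [Fin.lt_def] at hl; omega
      · have hPx : P.eval x = c * ((x - γ i) * ∏ y ∈ S.erase (γ i), (x - y)) := by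
          rw [hP, Finset.mul_prod_erase S (fun y => x - y) (hmem i)]
          simp [eval_prod]
        have hpp : 0 < (∏ y ∈ S.erase (γ i), (x - y)) * ∏ y ∈ S.erase (γ i), (γ i - y) := by
          rw [← Finset.prod_mul_distrib]
          apply Finset.prod_pos
          intro y hy
          obtain ⟨hy1, hy2⟩ := Finset.mem_erase.1 hy
          obtain ⟨l, rfl⟩ := hsurj y hy2
          have : γ i < γ l := by
            apply γ.strictMono
            rw [Fin.lt_def]
            have : l ≠ i := by rintro rfl; exact hy1 rfl
            rw [Ne, Fin.ext_iff] at this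
            omega
          apply mul_pos_of_neg_of_neg <;> linarith
        have hHP : 0 < H.eval x * P.eval x := by
          rcases div_pos_iff.1 hx1 with ⟨h1, h2⟩ | ⟨h1, h2⟩
          · exact mul_pos h1 h2
          · exact mul_pos_of_neg_of_neg h1 h2
        rw [hPx] at hHP
        have h4 := mul_pos hHP hi
        set A := ∏ y ∈ S.erase (γ i), (x - y)
        set B := ∏ y ∈ S.erase (γ i), (γ i - y)
        have h5 : 0 < (γ i - x) * (c^2 * (A * B)) := by
          have : 0 < γ i - x := by linarith
          have := sq_pos_of_ne_zero hc0
          positivity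
        by_contra hcon
        push Not at hcon
        nlinarith [mul_nonneg hcon h5.le]
    · let l : Fin S.card := ⟨i - 1, by omega⟩
      have hli : l < i := by rw [Fin.lt_def]; show (i:ℕ) - 1 < i; omega
      have hlt : γ l < γ i := γ.strictMono hli
      refine ⟨γ l, hlt, ?_, ?_⟩
      · intro l' hl'
        apply γ.monotone
        rw [Fin.lt_def] at hl'
        rw [Fin.le_def]; show (l' : ℕ) ≤ i - 1; omega
      · have hl := hsign _ (hmem l)
        have e1 : ∏ y ∈ S.erase (γ l), (γ l - y) =
            (γ l - γ i) * ∏ y ∈ (S.erase (γ l)).erase (γ i), (γ l - y) :=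
          (Finset.mul_prod_erase _ (fun y => γ l - y)
            (Finset.mem_erase.2 ⟨hlt.ne', hmem i⟩)).symm
        have e2 : ∏ y ∈ S.erase (γ i), (γ i - y) =
            (γ i - γ l) * ∏ y ∈ (S.erase (γ l)).erase (γ i), (γ i - y) := by
          rw [Finset.erase_right_comm]
          exact (Finset.mul_prod_erase _ (fun y => γ i - y)
            (Finset.mem_erase.2 ⟨hlt.ne, hmem l⟩)).symm
        have hpp : 0 < (∏ y ∈ (S.erase (γ l)).erase (γ i), (γ l - y)) *
            ∏ y ∈ (S.erase (γ l)).erase (γ i), (γ i - y) := by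
          rw [← Finset.prod_mul_distrib]
          apply Finset.prod_pos
          intro y hy
          obtain ⟨hy1, hy2⟩ := Finset.mem_erase.1 hy
          obtain ⟨hy3, hy4⟩ := Finset.mem_erase.1 hy2
          obtain ⟨r, rfl⟩ := hsurj y hy4
          have hr1 : r ≠ i := by rintro rfl; exact hy1 rfl
          have hr2 : r ≠ l := by rintro rfl; exact hy3 rfl
          rw [Ne, Fin.ext_iff] at hr1 hr2
          have hr3 : (r:ℕ) ≠ i - 1 := hr2
          rcases lt_or_ge (r : ℕ) i with h | h
          · have : γ r < γ l := by
              apply γ.strictMono; rw [Fin.lt_def]; show (r:ℕ) < i - 1; omega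
            apply mul_pos <;> linarith
          · have : γ i < γ r := by
              apply γ.strictMono; rw [Fin.lt_def]; omega
            apply mul_pos_of_neg_of_neg <;> linarith
        rw [e1] at hl
        rw [e2] at hi
        have h4 := mul_pos hl hi
        set A := ∏ y ∈ (S.erase (γ l)).erase (γ i), (γ l - y)
        set B := ∏ y ∈ (S.erase (γ l)).erase (γ i), (γ i - y)
        have h5 : 0 < (γ i - γ l)^2 * (c^2 * (A * B)) := by
          have : 0 < γ i - γ l := by linarith
          have := sq_pos_of_ne_zero hc0
          positivity
        by_contra hcon
        push Not at hcon
        nlinarith [mul_nonneg hcon h5.le]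
  have hroot : ∀ i : Fin S.card, ∃ z, z < γ i ∧ (∀ l, l < i → γ l < z) ∧ H.eval z = 0 := by
    intro i
    obtain ⟨x, h1, h2, h3⟩ := gap i
    obtain ⟨z, hz1, hz2, hz3⟩ := root_between H x (γ i) h1 h3
    exact ⟨z, hz2, fun l hl => (h2 l hl).trans_lt hz1, hz3⟩
  choose β hβ1 hβ2 hβ3 using hroot
  have hβm : StrictMono β := fun i l hil => (hβ1 i).trans (hβ2 l i hil)
  refine ⟨S.card, c, H.leadingCoeff, γ, β, hS, hc, γ.strictMono, hβm, ?_,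
    eq_prod_of_roots H hH hd β hβm.injective hβ3, hβ1, ?_⟩
  · congr 1
    conv_lhs => rw [← S.image_orderEmbOfFin_univ rfl]
    rw [Finset.prod_image (fun a _ b _ h => γ.injective h)]
  · intro i h
    apply hβ2
    rw [Fin.lt_def]; simp

theorem main_poly (F G : ℝ[X]) (m k b : ℝ) (hm : 0 < m) (hk : 0 < k) (hb : 0 < b)
    (hyp : Prec (-X * G) F) (hnd : ¬ (C k - C b * X) ∣ F) :
    Prec ((C k - C b * X) * F - C m * X * (F + (C k - C b * X) * G)) (F * (C k - C b * X)) := by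
  obtain ⟨s, c, d, α, β, hs, hcd, hα, hβ, hF, hQ, hβα, hαβ⟩ := hyp
  have hc0 : c ≠ 0 := by rintro rfl; simp at hcd
  have hd0 : d ≠ 0 := by rintro rfl; simp at hcd
  set τ := k / b with hτ
  have hτ0 : 0 < τ := div_pos hk hb
  have hp : C k - C b * X = C (-b) * (X - C τ) := by
    have : k = b * τ := by rw [hτ]; field_simp
    rw [this]; simp only [map_neg, map_mul]; ring
  have hFτ : F.eval τ ≠ 0 := by
    intro h
    apply hnd
    rw [hp, C_mul_dvd (by simpa using hb.ne'), dvd_iff_isRoot]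
    exact h
  set A := Finset.univ.image α with hA
  have hAF : F = C c * ∏ x ∈ A, (X - C x) := by
    rw [hF, hA, Finset.prod_image (fun a _ b _ h => hα.injective h)]
  have hAc : A.card = s := by
    rw [hA, Finset.card_image_of_injective _ hα.injective]; simp
  have hτA : τ ∉ A := by
    intro h
    apply hFτ
    rw [hAF, eval_mul, eval_prod, Finset.prod_eq_zero h (by simp), mul_zero]
  set Q := -X * G with hQdef
  set H := (C k - C b * X) * F - C m * X * (F + (C k - C b * X) * G) with hH
  have hH' : H = C (-b) * (X - C τ) * F - C m * X * F + C m * (C (-b) * (X - C τ)) * Q := by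
    rw [hH, hQdef, hp]; ring
  have hP : F * (C k - C b * X) = C (-b * c) * ∏ x ∈ insert τ A, (X - C x) := by
    rw [Finset.prod_insert hτA, hp, hAF, C_mul]; ring
  rw [hP]
  have hScard : (insert τ A).card = s + 1 := by rw [Finset.card_insert_of_notMem hτA, hAc]
  have hFd : F.natDegree = s := by
    rw [hF, natDegree_C_mul hc0, natDegree_prod_of_monic _ _ fun x _ => monic_X_sub_C _]; simp
  have hQd : Q.natDegree = s := by
    rw [hQ, natDegree_C_mul hd0, natDegree_prod_of_monic _ _ fun x _ => monic_X_sub_C _]; simp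
  have hFl : F.coeff s = c := by
    have : F.leadingCoeff = c := by
      rw [hF, leadingCoeff_mul,
        (monic_prod_of_monic _ _ fun x _ => monic_X_sub_C _ : Monic _).leadingCoeff]; simp
    rw [← hFd]; exact this
  have hQl : Q.coeff s = d := by
    have : Q.leadingCoeff = d := by
      rw [hQ, leadingCoeff_mul,
        (monic_prod_of_monic _ _ fun x _ => monic_X_sub_C _ : Monic _).leadingCoeff]; simp
    rw [← hQd]; exact this
  have hF1 : F.coeff (s+1) = 0 := coeff_eq_zero_of_natDegree_lt (by omega)
  have hQ1 : Q.coeff (s+1) = 0 := coeff_eq_zero_of_natDegree_lt (by omega)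
  have hHe : H = C (-b) * (X * F) + C (b * τ) * F - C m * (X * F) + C (- m * b) * (X * Q)
      + C (m * b * τ) * Q := by
    rw [hH']; simp only [map_neg, map_mul]; ring
  have hHl : H.coeff (s+1) = -b * c - m * c - m * b * d := by
    rw [hHe]
    simp only [coeff_add, coeff_sub, coeff_C_mul, coeff_X_mul, hFl, hQl, hF1, hQ1]
    ring
  have hprod : 0 < (-b * c) * (-b * c - m * c - m * b * d) := by
    have : 0 < c^2 := sq_pos_of_ne_zero hc0
    have e : (-b * c) * (-b * c - m * c - m * b * d) = b*b*c^2 + b*m*c^2 + m*b*b*(c*d) := by ring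
    rw [e]; positivity
  have hHdle : H.natDegree ≤ s + 1 := by
    have h1 : (X * F).natDegree ≤ s + 1 := by
      refine natDegree_mul_le.trans ?_; rw [hFd, natDegree_X]; omega
    have h2 : (X * Q).natDegree ≤ s + 1 := by
      refine natDegree_mul_le.trans ?_; rw [hQd, natDegree_X]; omega
    have h3 : F.natDegree ≤ s + 1 := by omega
    have h4 : Q.natDegree ≤ s + 1 := by omega
    have cm : ∀ (a : ℝ) (R : ℝ[X]), R.natDegree ≤ s + 1 → (C a * R).natDegree ≤ s + 1 :=
      fun a R h => (natDegree_C_mul_le a R).trans h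
    rw [hHe]
    exact natDegree_add_le_of_degree_le (natDegree_add_le_of_degree_le (natDegree_sub_le_of_le
      (natDegree_add_le_of_degree_le (cm _ _ h1) (cm _ _ h3)) (cm _ _ h1) |>.trans (by simp))
      (cm _ _ h2)) (cm _ _ h4)
  have hHd : H.natDegree = s + 1 := by
    apply natDegree_eq_of_le_of_coeff_ne_zero hHdle
    rw [hHl]; intro h; rw [h] at hprod; simp at hprod
  have hHlead : H.leadingCoeff = -b * c - m * c - m * b * d := by
    rw [← hHl, ← hHd]; rfl
  apply prec_of_signs
  · omega
  · rw [hHd, hScard]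
  · rw [hHlead]; exact hprod
  · intro x hx
    rcases Finset.mem_insert.1 hx with rfl | hxA
    · rw [Finset.erase_insert hτA]
      have e1 : F.eval τ = c * ∏ y ∈ A, (τ - y) := by
        conv_lhs => rw [hAF]
        simp [eval_prod]
      have e2 : H.eval τ = - m * τ * F.eval τ := by
        rw [hH']; simp
      rw [e2]
      have : 0 < F.eval τ ^ 2 := sq_pos_of_ne_zero hFτ
      have e3 : -m * τ * F.eval τ * (-b * c * ∏ y ∈ A, (τ - y)) = m * τ * b * F.eval τ ^ 2 := by
        rw [show -b * c * ∏ y ∈ A, (τ - y) = -b * F.eval τ by rw [e1]; ring]; ring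
      rw [e3]; positivity
    · obtain ⟨i, -, rfl⟩ := Finset.mem_image.1 hxA
      have hne : α i ≠ τ := by intro h; rw [h] at hxA; exact hτA hxA
      have hFi : F.eval (α i) = 0 := by
        rw [hAF, eval_mul, eval_prod, Finset.prod_eq_zero hxA (by simp), mul_zero]
      have e2 : H.eval (α i) = m * (-b * (α i - τ)) * Q.eval (α i) := by
        rw [hH']; simp [hFi]
      have eA : A.erase (α i) = (Finset.univ.erase i).image α := by
        rw [hA, Finset.image_erase hα.injective]
      have e3 : ∏ y ∈ (insert τ A).erase (α i), (α i - y) =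
          (α i - τ) * ∏ l ∈ Finset.univ.erase i, (α i - α l) := by
        rw [Finset.erase_insert_of_ne hne.symm, Finset.prod_insert (by simp [hτA]), eA,
          Finset.prod_image (fun a _ b _ h => hα.injective h)]
      have e4 : Q.eval (α i) = d * ((α i - β i) * ∏ l ∈ Finset.univ.erase i, (α i - β l)) := by
        rw [Finset.mul_prod_erase _ (fun l => α i - β l) (Finset.mem_univ i), hQ]
        simp [eval_prod]
      have hpp : 0 < (∏ l ∈ Finset.univ.erase i, (α i - β l)) *
          ∏ l ∈ Finset.univ.erase i, (α i - α l) := by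
        rw [← Finset.prod_mul_distrib]
        apply Finset.prod_pos
        intro l hl
        have hli := (Finset.mem_erase.1 hl).1
        rcases lt_or_gt_of_ne hli with h | h
        · have := hα h
          have := hβα l
          apply mul_pos <;> linarith
        · have h1 := hα h
          have h' := h
          rw [Fin.lt_def] at h'
          have hl := l.isLt
          have h2 := hαβ i (by omega)
          have h3 : β ⟨i + 1, by omega⟩ ≤ β l := by
            apply hβ.monotone; rw [Fin.le_def]; exact h'
          apply mul_pos_of_neg_of_neg <;> linarith
      rw [e2, e3, e4]
      set U := ∏ l ∈ Finset.univ.erase i, (α i - β l)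
      set V := ∏ l ∈ Finset.univ.erase i, (α i - α l)
      have e5 : m * (-b * (α i - τ)) * (d * ((α i - β i) * U)) * (-b * c * ((α i - τ) * V)) =
        m * b^2 * (α i - τ)^2 * (c * d) * (α i - β i) * (U * V) := by ring
      rw [e5]
      have h1 : 0 < α i - β i := by linarith [hβα i]
      have h2 : 0 < (α i - τ)^2 := sq_pos_of_ne_zero (sub_ne_zero.2 hne)
      positivity

/-- Lemma `two`(ii): the case `b_{j+1} ≠ 0` and `(k_{j+1} − λ b_{j+1}) ∤ f_j/(f_j,g_j)`.
Here `gcd` is the monic-normalized gcd in `ℝ[λ]`. -/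
theorem stmt_6 (n : ℕ) (m k b : ℕ → ℝ)
    (hm : ∀ j, 1 ≤ j → j ≤ n → 0 < m j)
    (hk : ∀ j, 1 ≤ j → j ≤ n → 0 < k j)
    (hb : ∀ j, 1 ≤ j → j ≤ n → 0 ≤ b j)
    (j : ℕ) (hj1 : 1 ≤ j) (hj2 : j ≤ n - 1)
    (hyp : Prec (-Polynomial.X * gpoly m k b j / gcd (fpoly m k b j) (gpoly m k b j))
      (fpoly m k b j / gcd (fpoly m k b j) (gpoly m k b j)))
    (hbne : b (j + 1) ≠ 0)
    (hndvd : ¬ (Polynomial.C (k (j + 1)) - Polynomial.C (b (j + 1)) * Polynomial.X) ∣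
      (fpoly m k b j / gcd (fpoly m k b j) (gpoly m k b j))) :
    gcd (fpoly m k b (j + 1)) (gpoly m k b (j + 1)) =
      gcd (fpoly m k b j) (gpoly m k b j) ∧
    Prec
      (fpoly m k b (j + 1) / gcd (fpoly m k b (j + 1)) (gpoly m k b (j + 1)))
      (fpoly m k b j * (Polynomial.C (k (j + 1)) - Polynomial.C (b (j + 1)) * Polynomial.X) /
        gcd (fpoly m k b j) (gpoly m k b j)) := by
  obtain ⟨t, rfl⟩ : ∃ t, j = t + 1 := ⟨j - 1, by omega⟩
  have hm' := hm (t+1+1) (by omega) (by omega)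
  have hk' := hk (t+1+1) (by omega) (by omega)
  have hb' := lt_of_le_of_ne (hb (t+1+1) (by omega) (by omega)) hbne.symm
  have hg := rec_g m k b t
  have hf := rec_f m k b t
  set p : ℝ[X] := C (k (t+1+1)) - C (b (t+1+1)) * X with hp
  change gpoly m k b (t+1+1) = _ + p * _ at hg
  change fpoly m k b (t+1+1) = p * _ - C (m (t+1+1)) * X * gpoly m k b (t+1+1) at hf
  generalize fpoly m k b (t+1+1) = f1 at *
  generalize gpoly m k b (t+1+1) = g1 at *
  generalize fpoly m k b (t+1) = f at *
  generalize gpoly m k b (t+1) = g at *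
  set D := gcd f g with hD
  have hD0 : D ≠ 0 := by
    intro h
    rw [h] at hndvd
    simp at hndvd
  obtain ⟨F, hF⟩ : D ∣ f := gcd_dvd_left f g
  obtain ⟨G, hG⟩ : D ∣ g := gcd_dvd_right f g
  have hcop : IsCoprime F G := by
    rw [← gcd_isUnit_iff]
    have h1 : gcd f g = normalize D * gcd F G := by
      conv_lhs => rw [hF, hG]
      exact gcd_mul_left _ _ _
    have h2 : normalize D = D := normalize_gcd f g
    rw [h2, ← hD] at h1
    have : gcd F G = 1 := (mul_right_eq_self₀.1 h1.symm).resolve_right hD0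
    rw [this]; exact isUnit_one
  have e1 : f / D = F := by rw [hF]; exact mul_div_cancel_left₀ F hD0
  have e2 : -X * g / D = -X * G := by
    rw [hG, mul_left_comm]; exact mul_div_cancel_left₀ _ hD0
  have e3 : f * p / D = F * p := by
    rw [hF, mul_assoc]; exact mul_div_cancel_left₀ _ hD0
  rw [e1] at hyp hndvd
  rw [e2] at hyp
  have hG1 : g1 = D * (F + p * G) := by rw [hg]; conv_lhs => rw [hF, hG]
                                        ring
  have hF1 : f1 = D * (p * F - C (m (t+1+1)) * X * (F + p * G)) := by
    rw [hf, hG1]; conv_lhs => rw [hF]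
    ring
  have hpirr : Irreducible p := by
    apply irreducible_of_degree_eq_one
    rw [hp, show C (k (t+1+1)) - C (b (t+1+1)) * X = C (-b (t+1+1)) * X + C (k (t+1+1)) by
      simp only [map_neg]; ring]
    exact degree_linear (by simpa using hbne)
  have hpF : IsCoprime p F := (hpirr.coprime_iff_not_dvd).2 hndvd
  have hc1 : IsCoprime (p * F - C (m (t+1+1)) * X * (F + p * G)) (F + p * G) := by
    have h1 : IsCoprime (p * F) (F + p * G) := by
      apply IsCoprime.mul_left
      · exact hpF.add_mul_left_right G
      · have := (hpF.symm.mul_right hcop).add_mul_left_right 1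
        rwa [mul_one, add_comm] at this
    have := h1.add_mul_right_left (-(C (m (t+1+1)) * X))
    rwa [neg_mul, ← sub_eq_add_neg] at this
  have hgcd : gcd f1 g1 = D := by
    rw [hF1, hG1, gcd_mul_left]
    have h2 : normalize D = D := normalize_gcd f g
    have h3 : gcd (p * F - C (m (t+1+1)) * X * (F + p * G)) (F + p * G) = 1 := by
      rw [← normalize_gcd, normalize_eq_one]
      exact (gcd_isUnit_iff _ _).2 hc1
    rw [h2, h3, mul_one]
  refine ⟨hgcd, ?_⟩
  have e4 : f1 / gcd f1 g1 = p * F - C (m (t+1+1)) * X * (F + p * G) := by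
    rw [hgcd, hF1]; exact mul_div_cancel_left₀ _ hD0
  rw [e4, e3]
  exact main_poly F G _ _ _ hm' hk' hb' hyp hndvd
end

section
/- Let m ≥ 1 and n ≥ 1 be integers, M_1,…,M_m > 0 real numbers, t_1,…,t_m positive integers with t_1 + ⋯ + t_m = n and t_i ≤ i for each i = 1,…,m, and 0 < λ_1 < λ_2 < ⋯ < λ_m real numbers. Then there exist real numbers m_j > 0, k_j > 0, b_j ≥ 0 (j = 1,…,n) and pairwise distinct indices i_1,…,i_m ∈ {1,…,n} such that m_{i_l} = M_l for every l = 1,…,m and ∏_{i=1}^{m}(λ − λ_i)^{t_i} divides det(K − λ(M+B)) in ℝ[λ]. -/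
open Polynomial

section Helpers
/-- tri -/
def tri {R : Type*} [CommRing R] (a o : ℕ → R) (n : ℕ) : Matrix (Fin n) (Fin n) R :=
  Matrix.of fun r c => if (r:ℕ) = c then a r else if (r:ℕ)+1 = c then o c else
    if (c:ℕ)+1 = r then o r else 0

theorem tri_rec {R : Type*} [CommRing R] (a o : ℕ → R) (n : ℕ) :
    (tri a o (n+2)).det = a (n+1) * (tri a o (n+1)).det - o (n+1)^2 * (tri a o n).det := by
  rw [Matrix.det_succ_row _ (Fin.last (n+1)), Fin.sum_univ_castSucc, Fin.sum_univ_castSucc]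
  rw [Finset.sum_eq_zero]
  · have h1 : (tri a o (n+2)).submatrix (Fin.last (n+1)).succAbove (Fin.last (n+1)).succAbove = tri a o (n+1) := by
      ext i j; simp [tri, Fin.succAbove_last]
    have h2 : ((tri a o (n+2)).submatrix (Fin.last (n+1)).succAbove (Fin.last n).castSucc.succAbove).det = o (n+1) * (tri a o n).det := by
      rw [Matrix.det_succ_column _ (Fin.last n), Fin.sum_univ_castSucc, Finset.sum_eq_zero]
      · have h3 : (((tri a o (n+2)).submatrix (Fin.last (n+1)).succAbove (Fin.last n).castSucc.succAbove).submatrix (Fin.last n).succAbove (Fin.last n).succAbove) = tri a o n := by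
          ext i j
          have : (Fin.last n).castSucc.succAbove j.castSucc = j.castSucc.castSucc := by
            rw [Fin.succAbove_of_castSucc_lt]; simp [Fin.lt_def]
          simp [tri, Fin.succAbove_last, this]
        rw [h3]
        have : (Fin.last n).castSucc.succAbove (Fin.last n) = Fin.last (n+1) := by
          rw [Fin.succAbove_of_le_castSucc]; simp; simp
        simp [tri, Fin.succAbove_last, this, ← two_mul]
      · intro i _
        have : (Fin.last n).castSucc.succAbove (Fin.last n) = Fin.last (n+1) := by
          rw [Fin.succAbove_of_le_castSucc]; simp; simp
        have hi := i.2
        have e1 : ((i:ℕ) = n+1) = False := by simp; omega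
        have e2 : ((i:ℕ) = n) = False := by simp; omega
        have e3 : (n + 1 + 1 = (i:ℕ)) = False := by simp; omega
        simp [tri, Fin.succAbove_last, this, e1, e2, e3]
    rw [h1, h2]
    have e : (n + 1 + n) = 2 * n + 1 := by ring
    have e4 : (n + 1 + 1 = n) = False := by simp; omega
    have h5 : (tri a o (n+2)) (Fin.last (n+1)) (Fin.last (n+1)) = a (n+1) := by simp [tri]
    have h6 : (tri a o (n+2)) (Fin.last (n+1)) (Fin.last n).castSucc = o (n+1) := by simp [tri, e4]
    rw [h5, h6]
    simp [← two_mul, e, pow_succ]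
    ring
  · intro i _
    have hi := i.2
    have e1 : (n + 1 = (i:ℕ)) = False := by simp; omega
    have e2 : (n + 1 + 1 = (i:ℕ)) = False := by simp; omega
    have e3 : ((i:ℕ) = n) = False := by simp; omega
    simp [tri, e1, e2, e3]

/-- pp -/
noncomputable def pp (k b : ℕ → ℝ) (j : ℕ) : ℝ[X] := C (k j) - X * C (b j)

/-- FG -/
noncomputable def FG (m k b : ℕ → ℝ) : ℕ → ℝ[X] × ℝ[X]
  | 0 => (1, 0)
  | n+1 => (pp k b (n+1) * (FG m k b n).1 -
      X * C (m (n+1)) * ((FG m k b n).1 + pp k b (n+1) * (FG m k b n).2),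
      (FG m k b n).1 + pp k b (n+1) * (FG m k b n).2)

theorem FG_congr (m k b m' k' b' : ℕ → ℝ) (n : ℕ)
    (hm : ∀ j ≤ n, m j = m' j) (hk : ∀ j ≤ n, k j = k' j) (hb : ∀ j ≤ n, b j = b' j) :
    FG m k b n = FG m' k' b' n := by
  induction n with
  | zero => rfl
  | succ n ih =>
    have := ih (fun j hj => hm j (by omega)) (fun j hj => hk j (by omega)) (fun j hj => hb j (by omega))
    simp only [FG, this, pp, hm (n+1) le_rfl, hk (n+1) le_rfl, hb (n+1) le_rfl]

/-- aa -/
noncomputable def aa (m k b : ℕ → ℝ) (r : ℕ) : ℝ[X] := pp k b (r+1) + pp k b (r+2) - X * C (m (r+1))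
/-- oo -/
noncomputable def oo (k b : ℕ → ℝ) (r : ℕ) : ℝ[X] := - pp k b (r+1)

theorem D_eq (m k b : ℕ → ℝ) (n : ℕ) :
    (tri (aa m k b) (oo k b) n).det = (FG m k b n).1 + pp k b (n+1) * (FG m k b n).2 := by
  induction n using Nat.strong_induction_on with
  | _ n ih =>
    match n, ih with
    | 0, _ => simp [FG]
    | 1, _ => simp [FG, tri, aa]; ring
    | n+2, ih =>
      rw [tri_rec, ih (n+1) (by omega), ih n (by omega)]
      simp only [FG, aa, oo]
      ring

theorem fpoly_eq (m k b : ℕ → ℝ) (n : ℕ) : fpoly m k b (n+1) = (FG m k b (n+1)).1 := by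
  have h : sysMat m k b (n+1) = tri (fun r => if r = n then pp k b (n+1) - X * C (m (n+1)) else aa m k b r) (oo k b) (n+1) := by
    ext1 i j
    simp only [sysMat, triMat, tri, Matrix.sub_apply, Matrix.map_apply, Matrix.smul_apply, Matrix.add_apply, Matrix.of_apply, Matrix.diagonal_apply, Fin.ext_iff, aa, oo, pp, smul_eq_mul, Nat.add_sub_cancel]
    split_ifs <;> simp_all <;> ring
  rw [fpoly, h]
  match n with
  | 0 => simp [FG, tri]
  | n+1 =>
    have h1 : ∀ N ≤ n + 1, tri (fun r => if r = n+1 then pp k b (n+1+1) - X * C (m (n+1+1)) else aa m k b r) (oo k b) N = tri (aa m k b) (oo k b) N := by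
      intro N hN
      ext1 i j
      have : (i:ℕ) ≠ n+1 := by omega
      simp [tri, this]
    rw [tri_rec, h1 _ le_rfl, h1 n (by omega), D_eq, D_eq]
    simp only [FG, oo, if_true]
    ring

/-- Chain of reduction steps. -/
inductive Ch (l : ℝ) : List ℝ → List ℝ → ℝ[X] → ℝ[X] → ℝ[X] → ℝ[X] → Prop
  | nil (P Q : ℝ[X]) : Ch l [] [] P Q P Q
  | stepA (Ms Ns : List ℝ) (P Q R Q' P0 Q0 : ℝ[X]) (m b v : ℝ) (hm : 0 < m) (hb : 0 < b)
      (hv : l < v) (hQ : Q.eval v ≠ 0) (h1 : P + X * C m * Q = C b * (C v - X) * R)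
      (h2 : Q - R = C b * Q') (h : Ch l Ms Ns ((C v - X) * R) Q' P0 Q0) :
      Ch l Ms (v :: Ns) P Q P0 Q0
  | stepB (Ms Ns : List ℝ) (P Q R Q' P0 Q0 : ℝ[X]) (m b v : ℝ) (hm : 0 < m) (hb : 0 < b)
      (hv : l < v) (hQ : Q.eval v ≠ 0) (h1 : P + X * C m * Q = C b * (C v - X) * R)
      (h2 : Q - R = C b * (C v - X) * Q') (h : Ch l Ms Ns R Q' P0 Q0) :
      Ch l (m :: Ms) Ns P Q P0 Q0

theorem Ch.trans {l : ℝ} {Ms Ns Ms' Ns' : List ℝ} {P Q P1 Q1 P0 Q0 : ℝ[X]}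
    (h : Ch l Ms Ns P Q P1 Q1) (h' : Ch l Ms' Ns' P1 Q1 P0 Q0) :
    Ch l (Ms ++ Ms') (Ns ++ Ns') P Q P0 Q0 := by
  induction h with
  | nil => exact h'
  | stepA Ms Ns P Q R Q' P0 Q0 m b v hm hb hv hQ h1 h2 h ih =>
    exact .stepA _ _ _ _ _ _ _ _ m b v hm hb hv hQ h1 h2 (ih h')
  | stepB Ms Ns P Q R Q' P0 Q0 m b v hm hb hv hQ h1 h2 h ih =>
    exact .stepB _ _ _ _ _ _ _ _ m b v hm hb hv hQ h1 h2 (ih h')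

theorem Ch.mono {l l' : ℝ} {Ms Ns : List ℝ} {P Q P0 Q0 : ℝ[X]} (hl : l' ≤ l)
    (h : Ch l Ms Ns P Q P0 Q0) : Ch l' Ms Ns P Q P0 Q0 := by
  induction h with
  | nil => exact .nil _ _
  | stepA Ms Ns P Q R Q' P0 Q0 m b v hm hb hv hQ h1 h2 h ih =>
    exact .stepA _ _ _ _ _ _ _ _ m b v hm hb (hl.trans_lt hv) hQ h1 h2 ih
  | stepB Ms Ns P Q R Q' P0 Q0 m b v hm hb hv hQ h1 h2 h ih =>
    exact .stepB _ _ _ _ _ _ _ _ m b v hm hb (hl.trans_lt hv) hQ h1 h2 ih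

theorem extend_real (n : ℕ) (m k b : ℕ → ℝ)
    (hm : ∀ j, 1 ≤ j → j ≤ n → 0 < m j) (hk : ∀ j, 1 ≤ j → j ≤ n → 0 < k j)
    (hb : ∀ j, 1 ≤ j → j ≤ n → 0 ≤ b j) (m1 b1 v1 : ℝ) (hm1 : 0 < m1) (hb1 : 0 < b1) (hv : 0 < v1) :
    ∃ m' k' b' : ℕ → ℝ, (∀ j, 1 ≤ j → j ≤ n+1 → 0 < m' j) ∧ (∀ j, 1 ≤ j → j ≤ n+1 → 0 < k' j) ∧
      (∀ j, 1 ≤ j → j ≤ n+1 → 0 ≤ b' j) ∧ (∀ j ≤ n, m' j = m j) ∧ m' (n+1) = m1 ∧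
      FG m' k' b' n = FG m k b n ∧ pp k' b' (n+1) = C b1 * (C v1 - X) := by
  refine ⟨fun j => if j = n+1 then m1 else m j, fun j => if j = n+1 then b1 * v1 else k j,
    fun j => if j = n+1 then b1 else b j, ?_, ?_, ?_, ?_, ?_, ?_, ?_⟩
  · intro j h1 h2; dsimp; split_ifs with h; exacts [hm1, hm j h1 (by omega)]
  · intro j h1 h2; dsimp; split_ifs with h; exacts [by positivity, hk j h1 (by omega)]
  · intro j h1 h2; dsimp; split_ifs with h; exacts [hb1.le, hb j h1 (by omega)]
  · intro j h1; dsimp; rw [if_neg (by omega)]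
  · simp
  · apply FG_congr <;> (intro j h1; rw [if_neg (by omega)])
  · simp [pp]; ring

theorem Ch.real {l s : ℝ} (hl : 0 ≤ l) (hs : s ≠ 0) {Ms Ns : List ℝ} {P Q P0 Q0 : ℝ[X]} (hP0 : P0 = C s)
    (hQ0 : Q0 = 0) (h : Ch l Ms Ns P Q P0 Q0) :
    ∃ m k b : ℕ → ℝ, (∀ j, 1 ≤ j → j ≤ Ms.length + Ns.length → 0 < m j) ∧
      (∀ j, 1 ≤ j → j ≤ Ms.length + Ns.length → 0 < k j) ∧
      (∀ j, 1 ≤ j → j ≤ Ms.length + Ns.length → 0 ≤ b j) ∧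
      (∃ idx : Fin Ms.length → ℕ, Function.Injective idx ∧
        (∀ i, 1 ≤ idx i ∧ idx i ≤ Ms.length + Ns.length) ∧ ∀ i, m (idx i) = Ms.get i) ∧
      C s * (FG m k b (Ms.length + Ns.length)).1 = P * (Ns.map fun v => C v - X).prod ∧
      C s * (FG m k b (Ms.length + Ns.length)).2 = Q * (Ns.map fun v => C v - X).prod := by
  induction h with
  | nil P Q =>
    refine ⟨0, 0, 0, ?_, ?_, ?_, ⟨fun i => 0, ?_, ?_, ?_⟩, ?_, ?_⟩
    · intro j h1 h2; simp at h2; omega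
    · intro j h1 h2; simp at h2; omega
    · intro j h1 h2; simp at h2; omega
    · intro i; exact i.elim0
    · intro i; exact i.elim0
    · intro i; exact i.elim0
    · simp [FG, hP0]
    · simp [FG, hQ0]
  | stepA Ms Ns P Q R Q' P0 Q0 m1 b1 v hm1 hb1 hv hQ h1 h2 h ih =>
    obtain ⟨m, k, b, hm, hk, hb, ⟨idx, hi, hr, hM⟩, hf, hg⟩ := ih hP0 hQ0
    obtain ⟨m', k', b', hm', hk', hb', hmm, hm1', hFG, hpp⟩ := extend_real _ m k b hm hk hb m1 b1 v hm1 hb1 (hl.trans_lt hv)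
    have e : Ms.length + (v :: Ns).length = (Ms.length + Ns.length) + 1 := by simp; omega
    rw [e]
    have hg2 : C s * (FG m' k' b' (Ms.length + Ns.length + 1)).2 = Q * ((C v - X) * (Ns.map fun v => C v - X).prod) := by
      simp only [FG, hFG, hpp]
      linear_combination hf + C b1 * (C v - X) * hg - (C v - X) * (Ns.map fun v => C v - X).prod * h2
    refine ⟨m', k', b', hm', hk', hb', ⟨idx, hi, fun i => ⟨(hr i).1, by have := (hr i).2; omega⟩, ?_⟩, ?_, ?_⟩
    · intro i; rw [hmm _ (hr i).2]; exact hM i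
    · rw [List.map_cons, List.prod_cons]
      simp only [FG, hFG, hpp, hm1'] at hg2 ⊢
      linear_combination C b1 * (C v - X) * hf - X * C m1 * hg2 - (C v - X) * (Ns.map fun v => C v - X).prod * h1
    · simpa using hg2
  | stepB Ms Ns P Q R Q' P0 Q0 m1 b1 v hm1 hb1 hv hQ h1 h2 h ih =>
    obtain ⟨m, k, b, hm, hk, hb, ⟨idx, hi, hr, hM⟩, hf, hg⟩ := ih hP0 hQ0
    obtain ⟨m', k', b', hm', hk', hb', hmm, hm1', hFG, hpp⟩ := extend_real _ m k b hm hk hb m1 b1 v hm1 hb1 (hl.trans_lt hv)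
    have e : (m1 :: Ms).length + Ns.length = (Ms.length + Ns.length) + 1 := by simp; omega
    rw [e]
    have hg2 : C s * (FG m' k' b' (Ms.length + Ns.length + 1)).2 = Q * ((Ns.map fun v => C v - X).prod) := by
      simp only [FG, hFG, hpp]
      linear_combination hf + C b1 * (C v - X) * hg - (Ns.map fun v => C v - X).prod * h2
    refine ⟨m', k', b', hm', hk', hb', ⟨Fin.cons (Ms.length + Ns.length + 1) idx, ?_, ?_, ?_⟩, ?_, hg2⟩
    · rw [Fin.cons_injective_iff]
      refine ⟨?_, hi⟩
      rintro ⟨i, h⟩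
      have := (hr i).2
      omega
    · intro i
      refine Fin.cases ?_ (fun i => ?_) i
      · simp
      · have := hr i
        simp only [Fin.cons_succ]; omega
    · intro i
      refine Fin.cases ?_ (fun i => ?_) i
      · simpa using hm1'
      · have := hM i
        simp only [Fin.cons_succ, hmm _ (hr i).2]
        simpa using this
    · simp only [FG, hFG, hpp, hm1'] at hg2 ⊢
      linear_combination C b1 * (C v - X) * hf - X * C m1 * hg2 - (Ns.map fun v => C v - X).prod * h1

open Filter Topology

/-- Coefficientwise convergence of a family of polynomials as the parameter tends to `0+`. -/
def PT (Pt : ℝ → ℝ[X]) (P : ℝ[X]) : Prop :=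
  ∀ i, Tendsto (fun e => (Pt e).coeff i) (𝓝[>] 0) (𝓝 (P.coeff i))

theorem PT.const (P : ℝ[X]) : PT (fun _ => P) P := fun _ => tendsto_const_nhds

theorem PT.add {Pt Qt : ℝ → ℝ[X]} {P Q : ℝ[X]} (h : PT Pt P) (h' : PT Qt Q) :
    PT (fun e => Pt e + Qt e) (P + Q) := fun i => by
  simpa using (h i).add (h' i)

theorem PT.sub {Pt Qt : ℝ → ℝ[X]} {P Q : ℝ[X]} (h : PT Pt P) (h' : PT Qt Q) :
    PT (fun e => Pt e - Qt e) (P - Q) := fun i => by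
  simpa using (h i).sub (h' i)

theorem PT.neg {Pt : ℝ → ℝ[X]} {P : ℝ[X]} (h : PT Pt P) :
    PT (fun e => - Pt e) (- P) := fun i => by
  simpa using (h i).neg

theorem PT.mul {Pt Qt : ℝ → ℝ[X]} {P Q : ℝ[X]} (h : PT Pt P) (h' : PT Qt Q) :
    PT (fun e => Pt e * Qt e) (P * Q) := fun i => by
  simp only [coeff_mul]
  exact tendsto_finsetSum _ fun j _ => (h _).mul (h' _)

theorem PT.C {c : ℝ → ℝ} {c0 : ℝ} (h : Tendsto c (𝓝[>] 0) (𝓝 c0)) :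
    PT (fun e => Polynomial.C (c e)) (Polynomial.C c0) := fun i => by
  simp only [coeff_C]
  split_ifs
  · exact h
  · exact tendsto_const_nhds

theorem PT.natDegree_le {Pt : ℝ → ℝ[X]} {P : ℝ[X]} {N : ℕ} (h : PT Pt P)
    (hN : ∀ e, (Pt e).natDegree ≤ N) : P.natDegree ≤ N := by
  rw [natDegree_le_iff_coeff_eq_zero]
  intro i hi
  refine tendsto_nhds_unique (h i) ?_
  have : (fun e => (Pt e).coeff i) = fun _ => 0 := by
    funext e; exact coeff_eq_zero_of_natDegree_lt ((hN e).trans_lt hi)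
  rw [this]; exact tendsto_const_nhds

theorem PT.eval {Pt : ℝ → ℝ[X]} {P : ℝ[X]} {N : ℕ} (h : PT Pt P)
    (hN : ∀ e, (Pt e).natDegree ≤ N) {c : ℝ → ℝ} {c0 : ℝ} (hc : Tendsto c (𝓝[>] 0) (𝓝 c0)) :
    Tendsto (fun e => (Pt e).eval (c e)) (𝓝[>] 0) (𝓝 (P.eval c0)) := by
  have h2 := h.natDegree_le hN
  rw [eval_eq_sum_range' (Nat.lt_succ_of_le h2)]
  have : (fun e => (Pt e).eval (c e)) = fun e => ∑ i ∈ Finset.range N.succ, (Pt e).coeff i * c e ^ i := by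
    funext e; rw [eval_eq_sum_range' (Nat.lt_succ_of_le (hN e))]
  rw [this]
  exact tendsto_finsetSum _ fun j _ => (h _).mul (hc.pow _)

theorem PT.div {Pt : ℝ → ℝ[X]} {P : ℝ[X]} {N : ℕ} (h : PT Pt P)
    (hN : ∀ e, (Pt e).natDegree ≤ N) {c : ℝ → ℝ} {c0 : ℝ} (hc : Tendsto c (𝓝[>] 0) (𝓝 c0)) :
    PT (fun e => Pt e /ₘ (X - Polynomial.C (c e))) (P /ₘ (X - Polynomial.C c0)) := by
  have h2 := h.natDegree_le hN
  have key : ∀ k i, N ≤ i + k → Tendsto (fun e => (Pt e /ₘ (X - Polynomial.C (c e))).coeff i) (𝓝[>] 0)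
      (𝓝 ((P /ₘ (X - Polynomial.C c0)).coeff i)) := by
    have hz : ∀ (p : ℝ[X]) (a : ℝ) (i : ℕ), p.natDegree ≤ N → N ≤ i → (p /ₘ (X - Polynomial.C a)).coeff i = p.coeff (i+1) := by
      intro p a i h1 h2
      rw [coeff_divByMonic_X_sub_C_rec, coeff_eq_zero_of_natDegree_lt (n := i+1) (p := p /ₘ _)]
      · simp
      · rw [natDegree_divByMonic _ (monic_X_sub_C a)]; omega
    intro k
    induction k with
    | zero =>
      intro i hi
      rw [add_zero] at hi
      rw [hz _ _ _ h2 hi]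
      have : (fun e => (Pt e /ₘ (X - Polynomial.C (c e))).coeff i) = fun e => (Pt e).coeff (i+1) := by
        funext e; exact hz _ _ _ (hN e) hi
      rw [this]; exact h _
    | succ k ih =>
      intro i hi
      rw [coeff_divByMonic_X_sub_C_rec]
      have : (fun e => (Pt e /ₘ (X - Polynomial.C (c e))).coeff i) = fun e => (Pt e).coeff (i+1) + c e * (Pt e /ₘ (X - Polynomial.C (c e))).coeff (i+1) := by
        funext e; rw [coeff_divByMonic_X_sub_C_rec]
      rw [this]
      exact (h _).add (hc.mul (ih _ (by omega)))
  exact fun i => key N i (by omega)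

theorem root_family {Ht : ℝ → ℝ[X]} {H S : ℝ[X]} {N : ℕ} (h : PT Ht H)
    (hN : ∀ e, (Ht e).natDegree ≤ N) {v : ℝ} (hH : H = (Polynomial.C v - X) * S) (hS : S.eval v ≠ 0) :
    ∃ vt : ℝ → ℝ, Tendsto vt (𝓝[>] 0) (𝓝 v) ∧ ∀ᶠ e in 𝓝[>] 0, (Ht e).eval (vt e) = 0 := by
  have hex : ∀ e, ∃ r : ℝ, ∀ r', (Ht e).eval r' = 0 → (Ht e).eval r = 0 ∧ dist v r ≤ dist v r' := by
    intro e
    by_cases hne : {r : ℝ | (Ht e).eval r = 0}.Nonempty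
    · have hcl : IsClosed {r : ℝ | (Ht e).eval r = 0} :=
        isClosed_eq (Ht e).continuous continuous_const
      obtain ⟨y, hy, hd⟩ := hcl.exists_infDist_eq_dist hne v
      exact ⟨y, fun r' hr' => ⟨hy, hd ▸ Metric.infDist_le_dist_of_mem hr'⟩⟩
    · exact ⟨0, fun r' hr' => (hne ⟨r', hr'⟩).elim⟩
  choose vt hvt using hex
  have key : ∀ δ > 0, ∀ᶠ e in 𝓝[>] 0, ∃ r', (Ht e).eval r' = 0 ∧ dist v r' < δ := by
    intro δ hδ
    have hc : ∀ᶠ y in 𝓝 v, S.eval y * S.eval v > 0 := by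
      have : ContinuousAt (fun y => S.eval y * S.eval v) v :=
        (S.continuous.mul continuous_const).continuousAt
      exact this.eventually (lt_mem_nhds (mul_self_pos.mpr hS))
    obtain ⟨η, hη, hball⟩ := Metric.eventually_nhds_iff.mp hc
    set r := min η δ / 2 with hr
    have hr0 : 0 < r := by have := lt_min hη hδ; positivity
    have hrη : r < η := by have := min_le_left η δ; have := lt_min hη hδ; linarith
    have hrδ : r < δ := by have := min_le_right η δ; have := lt_min hη hδ; linarith
    have h1 := hball (y := v - r) (by rw [Real.dist_eq, abs_lt]; constructor <;> linarith)
    have h2 := hball (y := v + r) (by rw [Real.dist_eq, abs_lt]; constructor <;> linarith)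
    have t1 := h.eval hN (tendsto_const_nhds (x := v - r))
    have t2 := h.eval hN (tendsto_const_nhds (x := v + r))
    have hneg : H.eval (v - r) * H.eval (v + r) < 0 := by
      simp only [hH, eval_mul, eval_sub, eval_C, eval_X]
      have h3 : 0 < (S.eval (v-r) * S.eval (v+r)) * (S.eval v)^2 := by
        have := mul_pos h1 h2; nlinarith
      have h4 : 0 < S.eval (v-r) * S.eval (v+r) := by
        by_contra hcon; push Not at hcon
        have := mul_nonpos_of_nonpos_of_nonneg hcon (sq_nonneg (S.eval v)); linarith
      nlinarith [mul_pos (mul_pos hr0 hr0) h4]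
    filter_upwards [(t1.mul t2).eventually (gt_mem_nhds hneg)] with e he
    have : ∃ r' ∈ Set.Icc (v - r) (v + r), (Ht e).eval r' = 0 := by
      have hco : ContinuousOn (fun y => (Ht e).eval y) (Set.Icc (v-r) (v+r)) := (Ht e).continuous.continuousOn
      rcases mul_neg_iff.mp he with ⟨ha, hb⟩ | ⟨ha, hb⟩
      · exact intermediate_value_Icc' (by linarith) hco ⟨hb.le, ha.le⟩
      · exact intermediate_value_Icc (by linarith) hco ⟨ha.le, hb.le⟩
    obtain ⟨r', ⟨ha, hb⟩, hr'⟩ := this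
    refine ⟨r', hr', lt_of_le_of_lt ?_ hrδ⟩
    rw [Real.dist_eq, abs_le]; constructor <;> linarith
  refine ⟨vt, ?_, ?_⟩
  · rw [Metric.tendsto_nhds]
    intro δ hδ
    filter_upwards [key δ hδ] with e ⟨r', h1, h2⟩
    rw [dist_comm]
    exact (hvt e r' h1).2.trans_lt h2
  · filter_upwards [key 1 one_pos] with e ⟨r', h1, h2⟩
    exact (hvt e r' h1).1

theorem div_lim (v : ℝ) (T : ℝ[X]) : ((C v - X) * T) /ₘ (X - C v) = - T := by
  have : (C v - X) * T = (X - C v) * (-T) := by ring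
  rw [this, mul_divByMonic_cancel_left _ (monic_X_sub_C v)]

/-- Perturbation data of a state. -/
structure Fam (x : ℝ) (d : ℕ) (P Q : ℝ[X]) (u v : ℝ) (Pt Qt : ℝ → ℝ[X]) : Prop where
  hP : PT Pt ((C x - X) * P)
  hQ : PT Qt ((C x - X) * Q)
  dP : ∀ e, (Pt e).natDegree ≤ d + 1
  dQ : ∀ e, (Qt e).natDegree ≤ d
  hu : Tendsto (fun e => (Pt e).eval x / e) (𝓝[>] 0) (𝓝 u)
  hv : Tendsto (fun e => (Qt e).eval x / e) (𝓝[>] 0) (𝓝 v)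
  hW : 0 < P.eval x * v - Q.eval x * u

/-- Common part of both steps: division by the root. -/
theorem step_common {x : ℝ} {d : ℕ} {P Q R : ℝ[X]} {u w : ℝ} {Pt Qt : ℝ → ℝ[X]}
    (F : Fam x d P Q u w Pt Qt) {m b v : ℝ} (hxv : x < v) (hb : 0 < b)
    (h1 : P + X * C m * Q = C b * (C v - X) * R)
    {mt bt vt : ℝ → ℝ} (hmt : Tendsto mt (𝓝[>] 0) (𝓝 m)) (hbt : Tendsto bt (𝓝[>] 0) (𝓝 b))
    (hvt : Tendsto vt (𝓝[>] 0) (𝓝 v))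
    (hroot : ∀ᶠ e in 𝓝[>] 0, (Pt e + X * C (mt e) * Qt e).eval (vt e) = 0) 
    {Rt : ℝ → ℝ[X]} 
    (hRt : Rt = fun e => C (bt e)⁻¹ * (-((Pt e + X * C (mt e) * Qt e) /ₘ (X - C (vt e))))) :
    PT Rt ((C x - X) * R) ∧ (∀ e, (Rt e).natDegree ≤ d) ∧
    Tendsto (fun e => (Rt e).eval x / e) (𝓝[>] 0) (𝓝 ((u + x * m * w) / (b * (v - x)))) ∧
    (∀ᶠ e in 𝓝[>] 0, Pt e + X * C (mt e) * Qt e = C (bt e) * (C (vt e) - X) * Rt e) := by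
  have hH : PT (fun e => Pt e + X * C (mt e) * Qt e) ((C v - X) * ((C x - X) * (C b * R))) := by
    have := F.hP.add (((PT.const X).mul (PT.C hmt)).mul F.hQ)
    convert this using 1
    linear_combination -(C x - X) * h1
  have dH : ∀ e, (Pt e + X * C (mt e) * Qt e).natDegree ≤ d + 1 := by
    intro e
    refine natDegree_add_le_of_degree_le (F.dP e) ?_
    rw [mul_assoc]
    refine (natDegree_mul_le).trans ?_
    have := (natDegree_C_mul_le (mt e) (Qt e)).trans (F.dQ e)
    rw [natDegree_X]; omega
  have hD := (hH.div dH hvt).neg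
  rw [div_lim, neg_neg] at hD
  have heq : ∀ᶠ e in 𝓝[>] 0, Pt e + X * C (mt e) * Qt e = C (bt e) * (C (vt e) - X) * Rt e := by
    filter_upwards [hroot, hbt.eventually (lt_mem_nhds hb)] with e he hbe
    have h3 := mul_divByMonic_eq_iff_isRoot.mpr he
    have h4 : C (bt e) * C (bt e)⁻¹ = (1 : ℝ[X]) := by
      rw [← C_mul, mul_inv_cancel₀ hbe.ne', C_1]
    rw [hRt]
    linear_combination -h3 + (C (vt e) - X) * ((Pt e + X * C (mt e) * Qt e) /ₘ (X - C (vt e))) * h4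
  refine ⟨?_, ?_, ?_, heq⟩
  · have := (PT.C (hbt.inv₀ hb.ne')).mul hD
    rw [hRt]
    convert this using 1
    have h4 : C b⁻¹ * C b = (1 : ℝ[X]) := by
      rw [← C_mul, inv_mul_cancel₀ hb.ne', C_1]
    linear_combination - (C x - X) * R * h4
  · intro e
    rw [hRt]
    refine (natDegree_C_mul_le _ _).trans ?_
    rw [natDegree_neg, natDegree_divByMonic _ (monic_X_sub_C _), natDegree_X_sub_C]
    have := dH e
    omega
  · have hlim := ((F.hu.add ((hmt.const_mul x).mul F.hv)).div (hbt.mul (hvt.sub_const x)) (by have : 0 < v - x := by linarith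
                                                                                              positivity))
    refine hlim.congr' ?_
    filter_upwards [heq, hbt.eventually (lt_mem_nhds hb), hvt.eventually (lt_mem_nhds hxv), self_mem_nhdsWithin] with e he hbe hve he0
    have he0 : 0 < e := he0
    have h5 := congrArg (Polynomial.eval x) he
    simp only [eval_add, eval_mul, eval_X, eval_C, eval_sub] at h5
    have h6 : 0 < vt e - x := by linarith
    simp only [Pi.div_apply, Pi.mul_apply, Pi.add_apply]
    field_simp
    linear_combination h5

theorem perturb {l : ℝ} {Ms Ns : List ℝ} {P Q P0 Q0 : ℝ[X]} (h : Ch l Ms Ns P Q P0 Q0)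
    {x : ℝ} (hx0 : 0 < x) (hxl : x ≤ l) : ∀ (Pt Qt : ℝ → ℝ[X]) (u w : ℝ),
    Fam x Ms.length P Q u w Pt Qt → ∃ (P0t Q0t : ℝ → ℝ[X]) (u0 w0 : ℝ),
      Fam x 0 P0 Q0 u0 w0 P0t Q0t ∧ ∀ᶠ e in 𝓝[>] 0, Ch l Ms Ns (Pt e) (Qt e) (P0t e) (Q0t e) := by
  induction h with
  | nil P Q =>
    intro Pt Qt u w F
    exact ⟨Pt, Qt, u, w, F, Eventually.of_forall fun e => .nil _ _⟩
  | stepA Ms Ns P Q R Q' P0 Q0 m b v hm hb hv hQ h1 h2 h ih =>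
    intro Pt Qt u w F
    have hxv : x < v := hxl.trans_lt hv
    have hv0 : 0 < v := hx0.trans hxv
    have hcv := tendsto_const_nhds (x := v) (f := 𝓝[>] (0:ℝ))
    have hcb := tendsto_const_nhds (x := b) (f := 𝓝[>] (0:ℝ))
    have tP := F.hP.eval F.dP hcv
    have tQ := F.hQ.eval F.dQ hcv
    have hQne : ((C x - X) * Q).eval v ≠ 0 := by
      simp only [eval_mul, eval_sub, eval_C, eval_X]
      exact mul_ne_zero (by linarith) hQ
    have hPv : P.eval v = - (v * m * Q.eval v) := by
      have := congrArg (Polynomial.eval v) h1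
      simp only [eval_add, eval_mul, eval_X, eval_C, eval_sub] at this
      linarith
    set mt : ℝ → ℝ := fun e => -(Pt e).eval v / (v * (Qt e).eval v) with hmtdef
    have hmt : Tendsto mt (𝓝[>] 0) (𝓝 m) := by
      have := tP.neg.div (tQ.const_mul v) (mul_ne_zero hv0.ne' hQne)
      have h9 : -eval v ((C x - X) * P) / (v * eval v ((C x - X) * Q)) = m := by
        simp only [eval_mul, eval_sub, eval_C, eval_X]
        rw [hPv]
        have : x - v ≠ 0 := by linarith
        field_simp
      rw [h9] at this
      exact this
    have hQe := tQ.eventually_ne hQne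
    have hroot : ∀ᶠ e in 𝓝[>] 0, (Pt e + X * C (mt e) * Qt e).eval v = 0 := by
      filter_upwards [hQe] with e he
      simp only [eval_add, eval_mul, eval_X, eval_C, hmtdef]
      field_simp
      ring
    set Rt : ℝ → ℝ[X] := fun e => C b⁻¹ * (-((Pt e + X * C (mt e) * Qt e) /ₘ (X - C v))) with hRt
    obtain ⟨rP, rd, ru, heq⟩ := step_common F hxv hb h1 hmt hcb hcv hroot hRt
    set u' := (u + x * m * w) / (b * (v - x)) with hu'
    have hcan : C b⁻¹ * C b = (1 : ℝ[X]) := by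
      rw [← C_mul, inv_mul_cancel₀ hb.ne', C_1]
    have hvx : 0 < v - x := by linarith
    have F' : Fam x Ms.length ((C v - X) * R) Q' ((v - x) * u') (b⁻¹ * (w - u'))
        (fun e => (C v - X) * Rt e) (fun e => C b⁻¹ * (Qt e - Rt e)) := by
      refine ⟨?_, ?_, ?_, ?_, ?_, ?_, ?_⟩
      · convert (PT.const (C v - X)).mul rP using 1
        ring
      · convert (PT.const (C b⁻¹)).mul (F.hQ.sub rP) using 1
        linear_combination (-(C x - X) * C b⁻¹) * h2 - (C x - X) * Q' * hcan
      · intro e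
        refine natDegree_mul_le.trans ?_
        have : (C v - X : ℝ[X]).natDegree ≤ 1 := by
          rw [← neg_sub, natDegree_neg, natDegree_X_sub_C]
        have := rd e
        omega
      · intro e
        refine (natDegree_C_mul_le _ _).trans ?_
        exact (natDegree_sub_le _ _).trans (max_le (F.dQ e) (rd e))
      · have := ru.const_mul (v - x)
        refine this.congr fun e => ?_
        simp; ring
      · have := (F.hv.sub ru).const_mul b⁻¹
        refine this.congr fun e => ?_
        simp; ring
      · have hW := F.hW
        have e1 := congrArg (Polynomial.eval x) h1
        have e2 := congrArg (Polynomial.eval x) h2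
        simp only [eval_add, eval_mul, eval_X, eval_C, eval_sub] at e1 e2 ⊢
        have e3 : P.eval x * w - Q.eval x * u = b ^ 2 * ((v - x) * R.eval x * (b⁻¹ * (w - u')) - Q'.eval x * ((v - x) * u')) := by
          have hu2 : u = b * (v - x) * u' - x * m * w := by rw [hu']; field_simp; ring
          have hq : Q'.eval x = (Q.eval x - R.eval x) / b := by field_simp; linarith
          have hp : P.eval x = b * (v - x) * R.eval x - x * m * Q.eval x := by linarith
          rw [hq, hp, hu2]; field_simp; ring
        rw [e3] at hW
        exact pos_of_mul_pos_right hW (by positivity)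
    obtain ⟨P0t, Q0t, u0, w0, G, hG⟩ := ih _ _ _ _ F'
    refine ⟨P0t, Q0t, u0, w0, G, ?_⟩
    filter_upwards [hG, heq, hQe, hmt.eventually (lt_mem_nhds hm)] with e g1 g2 g3 g4
    refine .stepA _ _ _ _ _ _ _ _ (mt e) b v g4 hb hv g3 g2 ?_ g1
    linear_combination -(Qt e - Rt e) * hcan
  | stepB Ms Ns P Q R Q' P0 Q0 m b v hm hb hv hQ h1 h2 h ih =>
    intro Pt Qt u w F
    have hxv : x < v := hxl.trans_lt hv
    have hvx : 0 < v - x := by linarith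
    have hv0 : 0 < v := hx0.trans hxv
    have hcm := tendsto_const_nhds (x := m) (f := 𝓝[>] (0:ℝ))
    have hRv : R.eval v = Q.eval v := by
      have := congrArg (Polynomial.eval v) h2
      simp only [eval_mul, eval_X, eval_C, eval_sub] at this
      linarith
    have hH : PT (fun e => Pt e + X * C m * Qt e) ((C v - X) * ((C x - X) * (C b * R))) := by
      have := F.hP.add (((PT.const X).mul (PT.C hcm)).mul F.hQ)
      convert this using 1
      linear_combination -(C x - X) * h1
    have dH : ∀ e, (Pt e + X * C m * Qt e).natDegree ≤ (m :: Ms).length + 1 := by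
      intro e
      refine natDegree_add_le_of_degree_le (F.dP e) ?_
      rw [mul_assoc]
      refine (natDegree_mul_le).trans ?_
      have := (natDegree_C_mul_le m (Qt e)).trans (F.dQ e)
      rw [natDegree_X]; omega
    have hSv : ((C x - X) * (C b * R)).eval v ≠ 0 := by
      simp only [eval_mul, eval_sub, eval_C, eval_X, hRv]
      exact mul_ne_zero (by linarith) (mul_ne_zero hb.ne' hQ)
    obtain ⟨vt, hvt, hroot⟩ := root_family hH dH rfl hSv
    have tQ := F.hQ.eval F.dQ hvt
    have hQne : ((C x - X) * Q).eval v ≠ 0 := by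
      simp only [eval_mul, eval_sub, eval_C, eval_X]
      exact mul_ne_zero (by linarith) hQ
    have hQe := tQ.eventually_ne hQne
    set St : ℝ → ℝ[X] := fun e => -((Pt e + X * C m * Qt e) /ₘ (X - C (vt e))) with hSt
    have tS : PT St ((C x - X) * (C b * R)) := by
      have hD := (hH.div dH hvt).neg
      rwa [div_lim, neg_neg] at hD
    have dS : ∀ e, (St e).natDegree ≤ (m :: Ms).length := by
      intro e
      rw [hSt]
      simp only [natDegree_neg]
      rw [natDegree_divByMonic _ (monic_X_sub_C _), natDegree_X_sub_C]
      have := dH e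
      omega
    have tSv := tS.eval dS hvt
    set bt : ℝ → ℝ := fun e => (St e).eval (vt e) / (Qt e).eval (vt e) with hbtdef
    have hbt : Tendsto bt (𝓝[>] 0) (𝓝 b) := by
      have := tSv.div tQ hQne
      have h9 : eval v ((C x - X) * (C b * R)) / eval v ((C x - X) * Q) = b := by
        simp only [eval_mul, eval_sub, eval_C, eval_X, hRv]
        have : x - v ≠ 0 := by linarith
        field_simp
      rw [h9] at this
      exact this
    have hbe := hbt.eventually (lt_mem_nhds hb)
    set Rt : ℝ → ℝ[X] := fun e => C (bt e)⁻¹ * (-((Pt e + X * C m * Qt e) /ₘ (X - C (vt e)))) with hRt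
    obtain ⟨rP, rd, ru, heq⟩ := step_common F hxv hb h1 hcm hbt hvt hroot hRt
    set u' := (u + x * m * w) / (b * (v - x)) with hu'
    have hdif : ∀ᶠ e in 𝓝[>] 0, Qt e - Rt e = C (bt e) * (C (vt e) - X) * (C (bt e)⁻¹ * (-((Qt e - Rt e) /ₘ (X - C (vt e))))) := by
      filter_upwards [hbe, hQe] with e g1 g2
      have hr : (Qt e - Rt e).IsRoot (vt e) := by
        have : (Rt e).eval (vt e) = (bt e)⁻¹ * (St e).eval (vt e) := by
          simp [hRt, hSt]
        rw [IsRoot, eval_sub, this]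
        have h7 : (St e).eval (vt e) = bt e * (Qt e).eval (vt e) := by
          rw [hbtdef]; field_simp
        rw [h7]; field_simp; ring
      have h3 := mul_divByMonic_eq_iff_isRoot.mpr hr
      have h4 : C (bt e) * C (bt e)⁻¹ = (1 : ℝ[X]) := by
        rw [← C_mul, mul_inv_cancel₀ g1.ne', C_1]
      linear_combination -h3 + (C (vt e) - X) * ((Qt e - Rt e) /ₘ (X - C (vt e))) * h4
    have hcan : C b⁻¹ * C b = (1 : ℝ[X]) := by
      rw [← C_mul, inv_mul_cancel₀ hb.ne', C_1]
    have dQR : ∀ e, (Qt e - Rt e).natDegree ≤ Ms.length + 1 := by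
      intro e
      exact (natDegree_sub_le _ _).trans (max_le (F.dQ e) (rd e))
    have F' : Fam x Ms.length R Q' u' ((w - u') / (b * (v - x)))
        Rt (fun e => C (bt e)⁻¹ * (-((Qt e - Rt e) /ₘ (X - C (vt e))))) := by
      refine ⟨rP, ?_, rd, ?_, ru, ?_, ?_⟩
      · have hD : PT (fun e => Qt e - Rt e) ((C v - X) * ((C x - X) * (C b * Q'))) := by
          convert F.hQ.sub rP using 1
          linear_combination -(C x - X) * h2
        have hD := (hD.div dQR hvt).neg
        rw [div_lim, neg_neg] at hD
        convert (PT.C (hbt.inv₀ hb.ne')).mul hD using 1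
        linear_combination - (C x - X) * Q' * hcan
      · intro e
        refine (natDegree_C_mul_le _ _).trans ?_
        rw [natDegree_neg, natDegree_divByMonic _ (monic_X_sub_C _), natDegree_X_sub_C]
        have := dQR e
        omega
      · have hlim := (F.hv.sub ru).div (hbt.mul (hvt.sub_const x)) (by positivity)
        refine hlim.congr' ?_
        filter_upwards [hdif, hbe, hvt.eventually (lt_mem_nhds hxv), self_mem_nhdsWithin] with e he hbe hve he0
        have he0 : 0 < e := he0
        have h5 := congrArg (Polynomial.eval x) he
        rw [eval_mul, eval_mul, eval_C, eval_sub, eval_sub, eval_C, eval_X] at h5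
        have h6 : 0 < vt e - x := by linarith
        simp only [Pi.div_apply, Pi.mul_apply, Pi.sub_apply]
        generalize (eval x (C (bt e)⁻¹ * -((Qt e - Rt e) /ₘ (X - C (vt e))))) = z at h5 ⊢
        field_simp
        linear_combination h5
      · have hW := F.hW
        have e1 := congrArg (Polynomial.eval x) h1
        have e2 := congrArg (Polynomial.eval x) h2
        simp only [eval_add, eval_mul, eval_X, eval_C, eval_sub] at e1 e2
        have e3 : P.eval x * w - Q.eval x * u = (b * (v - x)) ^ 2 * (R.eval x * ((w - u') / (b * (v - x))) - Q'.eval x * u') := by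
          have hu2 : u = b * (v - x) * u' - x * m * w := by rw [hu']; field_simp; ring
          have hq : Q'.eval x = (Q.eval x - R.eval x) / (b * (v - x)) := by field_simp; linarith
          have hp : P.eval x = b * (v - x) * R.eval x - x * m * Q.eval x := by linarith
          rw [hq, hp, hu2]; field_simp; ring
        rw [e3] at hW
        exact pos_of_mul_pos_right hW (by positivity)
    obtain ⟨P0t, Q0t, u0, w0, G, hG⟩ := ih _ _ _ _ F'
    refine ⟨P0t, Q0t, u0, w0, G, ?_⟩
    filter_upwards [hG, heq, hQe, hdif, hbe, hvt.eventually (lt_mem_nhds hv)] with e g1 g2 g3 g4 g5 g6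
    exact .stepB _ _ _ _ _ _ _ _ m (bt e) (vt e) hm g5 g6 g3 g2 g4 g1

theorem lone {M : ℝ} (hM : 0 < M) (T : List ℝ) : ∀ (l x α β : ℝ), 0 < x → l ≤ x → 0 < α → 0 < β →
    M * β < α → (x :: T).Pairwise (· < ·) →
    ∃ s > 0, Ch l [M] T (C α * (C x - X)) (C β) (C s) 0 := by
  induction T with
  | nil =>
    intro l x α β hx hl hα hβ hMα _
    have hd : 0 < α - M * β := by linarith
    refine ⟨β, hβ, .stepB [] [] _ _ (C β) 0 _ _ M ((α - M * β) / β) (α * x / (α - M * β)) hM (by positivity) ?_ ?_ ?_ ?_ (.nil _ _)⟩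
    · refine hl.trans_lt ?_
      rw [lt_div_iff₀ hd]
      nlinarith [mul_pos hx (mul_pos hM hβ)]
    · simpa using hβ.ne'
    · apply Polynomial.funext
      intro r
      simp only [eval_add, eval_mul, eval_X, eval_C, eval_sub]
      field_simp
      ring
    · simp
  | cons y T ih =>
    intro l x α β hx hl hα hβ hMα hT
    rw [List.pairwise_cons] at hT
    have hxy : x < y := hT.1 y (by simp)
    have hy : 0 < y := hx.trans hxy
    obtain ⟨b0, hb0⟩ : ∃ b0, b0 = α * x / (y * β) := ⟨_, rfl⟩
    have hb0p : 0 < b0 := by rw [hb0]; positivity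
    have hαx : α * x = b0 * y * β := by rw [hb0]; field_simp
    obtain ⟨q, hq⟩ : ∃ q, q = b0 / M := ⟨_, rfl⟩
    have hqp : 0 < q := by rw [hq]; positivity
    have hbM : b0 = q * M := by rw [hq]; field_simp
    have hs : 0 < 1 + q := by linarith
    have hβ' : (β - β / (1 + q)) / (b0 * (1 + q)) = β / (M * (1+q)^2) := by
      rw [hbM]; field_simp; ring
    obtain ⟨s, hs0, hC⟩ := ih l y (β / (1 + q)) (β / (M * (1+q)^2)) hy (hl.trans hxy.le) (by positivity) (by positivity)
      (by
        rw [lt_div_iff₀ hs]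
        have : M * (β / (M * (1+q)^2)) * (1 + q) = β / (1 + q) := by field_simp
        rw [this, div_lt_iff₀ hs]; nlinarith) hT.2
    refine ⟨s, hs0, .stepA _ _ _ _ (C (β / (1 + q))) (C (β / (M * (1+q)^2))) _ _ (α * (y - x) / (y * β)) (b0 * (1 + q)) y ?_ (by positivity) (hl.trans_lt hxy) ?_ ?_ ?_ ?_⟩
    · have : 0 < y - x := by linarith
      positivity
    · simpa using hβ.ne'
    · apply Polynomial.funext
      intro r
      simp only [eval_add, eval_mul, eval_X, eval_C, eval_sub]
      field_simp
      linear_combination (y - r) * hαx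
    · rw [← C_sub, ← C_mul, ← hβ']
      congr 1
      field_simp
    · rwa [mul_comm]

theorem main_ind (L : List (ℝ × ℝ × List ℝ)) : L.Pairwise (fun a b => a.1 < b.1) →
    (∀ a ∈ L, 0 < a.1 ∧ 0 < a.2.1 ∧ (a.1 :: a.2.2).Pairwise (· < ·)) → ∀ l, (∀ a ∈ L, l < a.1) →
    ∃ Q s, 0 < s ∧ (X * Q).natDegree ≤ L.length ∧
      Ch l ((L.map (fun a => a.2.1)).reverse) (L.reverse.flatMap (fun a => a.2.2))
      ((L.map fun a => C a.1 - X).prod) Q (C s) 0 := by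
  induction L with
  | nil =>
    intro _ _ l _
    exact ⟨0, 1, one_pos, by simp, by simpa using Ch.nil 1 0⟩
  | cons a L ih =>
    intro hL ha l hl
    obtain ⟨x, M, T⟩ := a
    rw [List.pairwise_cons] at hL
    obtain ⟨hx, hM, hT⟩ := ha (x, M, T) (by simp)
    have hlx : l < x := hl (x, M, T) (by simp)
    dsimp only at hx hM hT hL
    obtain ⟨Q, s, hs, hdQ, hC⟩ := ih hL.2 (fun a h => ha a (by simp [h])) x hL.1
    obtain ⟨P, hP⟩ : ∃ P, P = (L.map fun a => C a.1 - X).prod := ⟨_, rfl⟩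
    rw [← hP] at hC
    have hlin : ∀ z : ℝ, (C z - X : ℝ[X]).natDegree ≤ 1 := fun z => by
      rw [← neg_sub, natDegree_neg, natDegree_X_sub_C]
    have hPd : P.natDegree ≤ L.length := by
      rw [hP]
      refine (natDegree_list_prod_le _).trans ?_
      rw [List.map_map]
      refine (List.sum_le_card_nsmul _ 1 ?_).trans ?_
      · intro n hn
        simp only [List.mem_map, Function.comp] at hn
        obtain ⟨a, _, rfl⟩ := hn
        exact hlin _
      · simp
    have hPx : P.eval x ≠ 0 := by
      rw [hP, eval_list_prod]
      apply List.prod_ne_zero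
      simp only [List.map_map, List.mem_map, not_exists, not_and, Function.comp, eval_sub, eval_C, eval_X]
      intro a h1 h2
      have := hL.1 a h1
      linarith
    have hQd : ((C x - X) * Q).natDegree ≤ L.length := by
      by_cases hQ0 : Q = 0
      · simp [hQ0]
      · rw [natDegree_X_mul hQ0] at hdQ
        refine natDegree_mul_le.trans ?_
        have := hlin x
        omega
    have hQtd : ∀ e : ℝ, ((C x - X) * Q + C e * P).natDegree ≤ L.length := fun e =>
      natDegree_add_le_of_degree_le hQd ((natDegree_C_mul_le _ _).trans hPd)
    have hid : Tendsto (fun e : ℝ => e) (𝓝[>] 0) (𝓝 0) := tendsto_nhdsWithin_of_tendsto_nhds tendsto_id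
    have F : Fam x ((L.map (fun a => a.2.1)).reverse).length P Q 0 (P.eval x)
        (fun _ => (C x - X) * P) (fun e => (C x - X) * Q + C e * P) := by
      refine ⟨PT.const _, ?_, ?_, ?_, ?_, ?_, ?_⟩
      · convert (PT.const ((C x - X) * Q)).add ((PT.C hid).mul (PT.const P)) using 1
        simp
      · intro e
        refine natDegree_mul_le.trans ?_
        have := hlin x
        simp; omega
      · intro e
        simpa using hQtd e
      · simp
      · refine tendsto_const_nhds.congr' ?_
        filter_upwards [self_mem_nhdsWithin] with e he
        have he : 0 < e := he
        simp
        field_simp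
      · have := mul_self_pos.mpr hPx
        linarith
    obtain ⟨P0t, Q0t, u0, w0, F0, hev⟩ := perturb hC hx le_rfl _ _ _ _ F
    have hw0 : 0 < w0 := by
      have := F0.hW
      simp at this
      exact pos_of_mul_pos_right this hs.le
    have c1 : Tendsto (fun e => -(P0t e).coeff 1) (𝓝[>] 0) (𝓝 s) := by
      have := (F0.hP 1).neg
      simpa [coeff_X, coeff_C] using this
    have c0 : Tendsto (fun e => (P0t e).coeff 0) (𝓝[>] 0) (𝓝 (x * s)) := by
      have := (F0.hP 0)
      simpa using this
    have cb : Tendsto (fun e => (Q0t e).coeff 0) (𝓝[>] 0) (𝓝 0) := by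
      have := (F0.hQ 0)
      simpa using this
    have cx : Tendsto (fun e => (P0t e).coeff 0 / (-(P0t e).coeff 1)) (𝓝[>] 0) (𝓝 x) := by
      have := c0.div c1 hs.ne'
      rw [mul_div_cancel_right₀ _ hs.ne'] at this
      exact this
    obtain ⟨y0, hy0, hTy⟩ : ∃ y0, x < y0 ∧ ∀ y ∈ T, y0 ≤ y := by
      cases T with
      | nil => exact ⟨x + 1, by linarith, by simp⟩
      | cons y T =>
        rw [List.pairwise_cons, List.pairwise_cons] at hT
        refine ⟨y, hT.1 y (by simp), ?_⟩
        intro z hz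
        rcases List.mem_cons.mp hz with rfl | hz
        · exact le_rfl
        · exact (hT.2.1 z hz).le
    have e1 := c1.eventually (lt_mem_nhds hs)
    have e2 : ∀ᶠ e in 𝓝[>] 0, M * (Q0t e).coeff 0 < -(P0t e).coeff 1 := by
      have := (cb.const_mul M)
      rw [mul_zero] at this
      exact this.eventually_lt c1 hs
    have e3 := F0.hv.eventually (lt_mem_nhds hw0)
    have e4 := cx.eventually (lt_mem_nhds hlx)
    have e5 := cx.eventually (lt_mem_nhds hx)
    have e6 := cx.eventually (gt_mem_nhds hy0)
    obtain ⟨e, hCe, g1, g2, g3, g4, g5, g6, g7⟩ := (hev.and (e1.and (e2.and (e3.and (e4.and (e5.and (e6.and self_mem_nhdsWithin))))))).exists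
    have g7 : 0 < e := g7
    have hQ0 := eq_C_of_natDegree_le_zero (F0.dQ e)
    have hP0 := eq_X_add_C_of_natDegree_le_one (F0.dP e)
    have hβ : 0 < (Q0t e).coeff 0 := by
      rw [hQ0, eval_C] at g3
      have := mul_pos g3 g7
      rwa [div_mul_cancel₀ _ g7.ne'] at this
    set α := -(P0t e).coeff 1 with hα
    have hP0' : P0t e = C α * (C ((P0t e).coeff 0 / α) - X) := by
      have h8 : C α * C ((P0t e).coeff 0 / α) = C ((P0t e).coeff 0) := by
        rw [← C_mul, mul_div_cancel₀ _ g1.ne']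
      have h9 : C α = - C ((P0t e).coeff 1) := by rw [hα, C_neg]
      linear_combination hP0 - h8 + X * h9
    obtain ⟨s', hs', hlone⟩ := lone hM T l ((P0t e).coeff 0 / α) α ((Q0t e).coeff 0) g5 g4.le g1 hβ g2
      (by
        rw [List.pairwise_cons] at hT ⊢
        exact ⟨fun y hy => g6.trans_le (hTy y hy), hT.2⟩)
    rw [← hP0', ← hQ0] at hlone
    refine ⟨(C x - X) * Q + C e * P, s', hs', ?_, ?_⟩
    · refine natDegree_mul_le.trans ?_
      have := hQtd e
      rw [natDegree_X]; simp; omega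
    · have := (hCe.mono hlx.le).trans hlone
      simpa [hP] using this

theorem flat_prod {α β : Type*} {R : Type*} [CommMonoid R] (F : α → List β) (g : β → R)
    (L : List α) :
    ((L.reverse.flatMap F).map g).prod = (L.map fun a => ((F a).map g).prod).prod := by
  induction L with
  | nil => simp
  | cons a L ih =>
    rw [List.reverse_cons, List.flatMap_append, List.map_append, List.prod_append, ih]
    simp [mul_comm]

theorem flat_length {α β : Type*} (F : α → List β) (L : List α) :
    (L.reverse.flatMap F).length = (L.map fun a => (F a).length).sum := by
  induction L with
  | nil => simp
  | cons a L ih =>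
    rw [List.reverse_cons, List.flatMap_append, List.length_append, ih]
    simp [add_comm]

theorem filt_prod {β : Type*} {R : Type*} [CommMonoid R] (p : β → Prop) [DecidablePred p]
    (g : β → R) (L : List β) :
    ((L.filter (fun j => decide (p j))).map g).prod
      = (L.map fun j => if p j then g j else 1).prod := by
  induction L with
  | nil => simp
  | cons a L ih =>
    by_cases h : p a <;> simp [h, ih]

theorem filt_length {β : Type*} (p : β → Prop) [DecidablePred p] (L : List β) :
    (L.filter (fun j => decide (p j))).length = (L.map fun j => if p j then 1 else 0).sum := by
  induction L with
  | nil => simp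
  | cons a L ih =>
    by_cases h : p a <;> simp [h, ih, add_comm]

theorem count_lt (mm s : ℕ) (hs : 0 < s) (h : s ≤ mm) :
    (Finset.univ.filter (fun i : Fin mm => (i : ℕ) + 1 < s)).card + 1 = s := by
  have : (Finset.univ.filter (fun i : Fin mm => (i : ℕ) + 1 < s)).card = (Finset.range (s-1)).card := by
    apply Finset.card_bij (fun (i : Fin mm) _ => (i : ℕ))
    · intro a ha
      simp at ha ⊢
      omega
    · intro a _ b _ hab
      exact Fin.ext hab
    · intro c hc
      simp at hc
      exact ⟨⟨c, by omega⟩, by simp; omega, rfl⟩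
  rw [this, Finset.card_range]
  omega

/-- The list of targets created in step `i`. -/
noncomputable def Tl {mm : ℕ} (t : Fin mm → ℕ) (lam : Fin mm → ℝ) (i : Fin mm) : List ℝ :=
  ((List.finRange mm).filter (fun j => decide ((i : ℕ) + 1 < t j))).map lam

theorem Tl_sorted {mm : ℕ} (t : Fin mm → ℕ) (lam : Fin mm → ℝ)
    (hti : ∀ i : Fin mm, t i ≤ (i : ℕ) + 1) (hmono : StrictMono lam) (i : Fin mm) :
    (lam i :: Tl t lam i).Pairwise (· < ·) := by
  rw [List.pairwise_cons]
  constructor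
  · intro a ha
    simp only [Tl, List.mem_map, List.mem_filter, decide_eq_true_eq] at ha
    obtain ⟨j, ⟨_, hj⟩, rfl⟩ := ha
    apply hmono
    have := hti j
    show (i : ℕ) < j
    omega
  · unfold Tl
    rw [List.pairwise_map]
    apply List.Pairwise.filter
    exact (List.pairwise_lt_finRange mm).imp (fun h => hmono h)

theorem Tl_prod {mm : ℕ} (t : Fin mm → ℕ) (lam : Fin mm → ℝ) (ht : ∀ i, 0 < t i)
    (hti : ∀ i : Fin mm, t i ≤ (i : ℕ) + 1) {R : Type*} [CommMonoid R] (g : ℝ → R) :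
    (∏ i, g (lam i)) * ∏ i, ((Tl t lam i).map g).prod = ∏ i, g (lam i) ^ t i := by
  have h1 : ∀ i, ((Tl t lam i).map g).prod
      = ∏ j, if (i : ℕ) + 1 < t j then g (lam j) else 1 := by
    intro i
    unfold Tl
    rw [List.map_map, filt_prod, ← List.ofFn_eq_map, List.prod_ofFn]
    rfl
  simp_rw [h1]
  rw [Finset.prod_comm, ← Finset.prod_mul_distrib]
  apply Finset.prod_congr rfl
  intro j _
  rw [← Finset.prod_filter, Finset.prod_const, ← pow_succ',
    count_lt mm (t j) (ht j) ((hti j).trans j.2)]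

theorem Tl_length {mm : ℕ} (t : Fin mm → ℕ) (lam : Fin mm → ℝ) (ht : ∀ i, 0 < t i)
    (hti : ∀ i : Fin mm, t i ≤ (i : ℕ) + 1) :
    mm + ∑ i, (Tl t lam i).length = ∑ i, t i := by
  have h := Tl_prod t lam ht hti (R := Multiplicative ℕ) (fun _ => Multiplicative.ofAdd 1)
  have h2 := congrArg Multiplicative.toAdd h
  simpa [toAdd_prod] using h2

end Helpers

/-- Proposition `gd`: when `t_i ≤ i`, the assignment can be achieved with `m` prescribed
masses `M_1, …, M_m` placed at `m` distinct positions. -/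
theorem stmt_9 (n mm : ℕ) (hn : 1 ≤ n) (hmm : 1 ≤ mm)
    (Mass : Fin mm → ℝ) (hMass : ∀ l, 0 < Mass l)
    (t : Fin mm → ℕ) (ht : ∀ i, 0 < t i) (hsum : ∑ i, t i = n)
    (hti : ∀ i : Fin mm, t i ≤ (i : ℕ) + 1)
    (lam : Fin mm → ℝ) (hpos : ∀ i, 0 < lam i) (hmono : StrictMono lam) :
    ∃ m k b : ℕ → ℝ,
      (∀ j, 1 ≤ j → j ≤ n → 0 < m j) ∧
      (∀ j, 1 ≤ j → j ≤ n → 0 < k j) ∧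
      (∀ j, 1 ≤ j → j ≤ n → 0 ≤ b j) ∧
      ∃ idx : Fin mm → ℕ, Function.Injective idx ∧
        (∀ l, 1 ≤ idx l ∧ idx l ≤ n) ∧
        (∀ l, m (idx l) = Mass l) ∧
        (∏ i, (Polynomial.X - Polynomial.C (lam i)) ^ t i) ∣ fpoly m k b n := by
  set L : List (ℝ × ℝ × List ℝ) := List.ofFn (fun i : Fin mm => (lam i, Mass i, Tl t lam i))
    with hL
  have hLl : L.length = mm := by simp [hL]
  obtain ⟨Q, s, hs, -, hch⟩ := main_ind L
    (by
      rw [hL, List.pairwise_ofFn]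
      intro i j hij
      exact hmono hij)
    (by
      intro a ha
      rw [hL, List.mem_ofFn] at ha
      obtain ⟨i, rfl⟩ := ha
      exact ⟨hpos i, hMass i, Tl_sorted t lam hti hmono i⟩)
    0
    (by
      intro a ha
      rw [hL, List.mem_ofFn] at ha
      obtain ⟨i, rfl⟩ := ha
      exact hpos i)
  obtain ⟨m, k, b, hm, hk, hb, ⟨idx, hinj, hidx, hmi⟩, hF, -⟩ :=
    Ch.real le_rfl hs.ne' rfl rfl hch
  have hlen1 : ((L.map (fun a => a.2.1)).reverse).length = mm := by simp [hLl]
  have hlen2 : (L.reverse.flatMap (fun a => a.2.2)).length = ∑ i, (Tl t lam i).length := by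
    rw [flat_length, hL, List.map_ofFn, List.sum_ofFn]
    rfl
  have hlen : ((L.map (fun a => a.2.1)).reverse).length
      + (L.reverse.flatMap (fun a => a.2.2)).length = n := by
    rw [hlen1, hlen2, Tl_length t lam ht hti, hsum]
  have hprod : (L.map fun a => C a.1 - X).prod *
      ((L.reverse.flatMap (fun a => a.2.2)).map fun v => (C v - X : ℝ[X])).prod
      = ∏ i, (C (lam i) - X) ^ t i := by
    rw [flat_prod, hL, List.map_ofFn, List.map_ofFn, List.prod_ofFn, List.prod_ofFn]
    exact Tl_prod t lam ht hti (fun v => (C v - X : ℝ[X]))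
  rw [hlen] at hm hk hb hF
  rw [hprod] at hF
  refine ⟨m, k, b, hm, hk, hb, fun l => idx ((Fin.rev l).cast hlen1.symm), ?_, ?_, ?_, ?_⟩
  · intro x y hxy
    have := hinj hxy
    simpa using this
  · intro l
    have := hidx ((Fin.rev l).cast hlen1.symm)
    rwa [hlen] at this
  · intro l
    rw [hmi]
    have hl := l.2
    simp only [List.get_eq_getElem, List.getElem_reverse, List.getElem_map, hL,
      List.getElem_ofFn, Fin.val_cast, Fin.val_rev, List.length_map, List.length_ofFn]
    congr 1
    apply Fin.ext
    simp only
    omega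
  · have hfp : fpoly m k b n = (FG m k b n).1 := by
      obtain ⟨n', rfl⟩ : ∃ n', n = n' + 1 := ⟨n - 1, by omega⟩
      exact fpoly_eq m k b n'
    rw [hfp]
    have hd : (∏ i, (X - C (lam i)) ^ t i) ∣ C s * (FG m k b n).1 := by
      rw [hF]
      apply Finset.prod_dvd_prod_of_dvd
      intro i _
      apply pow_dvd_pow_of_dvd
      exact ⟨-1, by ring⟩
    exact (IsUnit.dvd_mul_left (isUnit_C.mpr hs.ne'.isUnit)).mp hd
end

section
/- Let p be an integer with 2 < p ≤ m, let F(λ) = ∏_{i=1}^{p}(λ − α_i) and G(λ) = ∏_{i=1}^{p−1}(λ − β_i) be real polynomials whose roots satisfy α_p ∈ [λ_p, Λ) and, for each i = 1,…,p−1: λ_i ≤ α_i, α_i + C_1^n·ρ_i < β_i, β_i < λ_i + (1 + C_2(i))^n·ρ_i, and λ_i + (1 + C_2(i))^n·ρ_i < λ_{i+1}. Let M > 0 and let μ, ν, m* be real numbers with 0 < m* < M and −μ/ν > C·M. Then there exist monic real polynomials F_0 and G_0, F_0 having p−1 distinct real roots α'_1 < ⋯ < α'_{p−1} and G_0 having p−2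 distinct real roots β'_1 < ⋯ < β'_{p−2}, such that α'_{p−1} ∈ (α_{p−1}, λ_p) and for each i = 1,…,p−2: α'_i ∈ (α_i, β_i) and C_1·(β_i − α_i) ≤ β'_i − α'_i ≤ C_2(i)·(β_i − α_i); moreover there exist real numbers λ* > 0, b* > 0 and μ_0, ν_0 with −μ_0/ν_0 > −μ/ν − m* such that the identities μ·F(λ) = −m*·ν·λ·G(λ) + b*·μ_0·(λ* − λ)·F_0(λ) and ν·G(λ) = μ_0·F_0(λ) + b*·ν_0·(λ* − λ)·G_0(λ) hold in ℝ[λ]. -/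
open Polynomial

/-- `Δ = (1/2)·min{1, min_{1≤i≤m−1}(λ_{i+1} − λ_i)}`. -/
noncomputable def Del (m : ℕ) (lam : ℕ → ℝ) : ℝ :=
  (1 / 2) * min 1 (sInf ((fun i => lam (i + 1) - lam i) '' Set.Icc 1 (m - 1)))

/-- `Λ = 1 + λ_m`. -/
noncomputable def Lamb (m : ℕ) (lam : ℕ → ℝ) : ℝ := 1 + lam m

/-- `ε = Δ^{n²+n+1}/(n·2^{3(n+1)³}·Λ^{(n+1)²})`. -/
noncomputable def eps (n m : ℕ) (lam : ℕ → ℝ) : ℝ :=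
  Del m lam ^ (n ^ 2 + n + 1) /
    ((n : ℝ) * 2 ^ (3 * (n + 1) ^ 3) * Lamb m lam ^ ((n + 1) ^ 2))

/-- `ρ_i = ε^{(n+1)^{m−i}}`. -/
noncomputable def rho (n m : ℕ) (lam : ℕ → ℝ) (i : ℕ) : ℝ :=
  eps n m lam ^ ((n + 1) ^ (m - i))

/-- `C_1 = Δ/(2^{n+1}Λ)`. -/
noncomputable def Cone (n m : ℕ) (lam : ℕ → ℝ) : ℝ :=
  Del m lam / (2 ^ (n + 1) * Lamb m lam)

/-- `C_2(j) = 2^{2(n+1)²}·Λ^{n+1}/(Δ^n·ε^{(n+1)^{m−j−1}})`. -/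
noncomputable def Ctwo (n m : ℕ) (lam : ℕ → ℝ) (j : ℕ) : ℝ :=
  2 ^ (2 * (n + 1) ^ 2) * Lamb m lam ^ (n + 1) /
    (Del m lam ^ n * eps n m lam ^ ((n + 1) ^ (m - j - 1)))

/-- `C = 2^{2n+1}(1 + Λ^n)/(C_1^{2n²}·ρ_1^{2n})`. -/
noncomputable def CC (n m : ℕ) (lam : ℕ → ℝ) : ℝ :=
  2 ^ (2 * n + 1) * (1 + Lamb m lam ^ n) /
    (Cone n m lam ^ (2 * n ^ 2) * rho n m lam 1 ^ (2 * n))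


lemma fac (N : ℕ) (A B : ℝ[X]) (hA : A.Monic) (hB : B.Monic) (hAN : A.natDegree = N + 1)
    (hBN : B.natDegree = N + 1) (κ : ℝ) (f : ℕ → ℝ) (x0 : ℝ)
    (hf : ∀ i j, 1 ≤ i → i < j → j ≤ N → f i < f j) (hx : ∀ i, 1 ≤ i → i ≤ N → f i < x0)
    (h : ∀ i, 1 ≤ i → i ≤ N → κ * A.eval (f i) + (1 - κ) * B.eval (f i) = 0)
    (h0 : κ * A.eval x0 + (1 - κ) * B.eval x0 = 0) :
    C κ * A + C (1 - κ) * B = (X - C x0) * ∏ i ∈ Finset.Icc 1 N, (X - C (f i)) := by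
  have hcop : ∀ a b : ℝ, a ≠ b → IsCoprime (X - C a) (X - C b) := fun a b hab =>
    isCoprime_X_sub_C_of_isUnit_sub (sub_ne_zero.mpr hab).isUnit
  have hdeg : (A - B).degree < B.degree := by
    have : A.degree = B.degree := by
      rw [degree_eq_natDegree hA.ne_zero, degree_eq_natDegree hB.ne_zero, hAN, hBN]
    rw [← this]
    exact degree_sub_lt_left this hA.ne_zero (by rw [hA.leadingCoeff, hB.leadingCoeff])
  have hdeg2 : (C κ * (A - B)).degree < B.degree := by
    rw [C_mul']; exact (degree_smul_le _ _).trans_lt hdeg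
  have e : C κ * A + C (1 - κ) * B = B + C κ * (A - B) := by
    rw [C_sub, C_1]; ring
  have hmon : (C κ * A + C (1 - κ) * B).Monic := by
    rw [e]; exact hB.add_of_left hdeg2
  have hnd : (C κ * A + C (1 - κ) * B).natDegree = N + 1 := by
    rw [e, natDegree_eq_of_degree_eq (degree_add_eq_left_of_degree_lt hdeg2), hBN]
  have hne : ∀ i j, i ∈ Finset.Icc 1 N → j ∈ Finset.Icc 1 N → i ≠ j → f i ≠ f j := by
    intro i j hi hj hij
    rw [Finset.mem_Icc] at hi hj
    rcases lt_or_gt_of_ne hij with h1 | h1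
    · exact (hf i j hi.1 h1 hj.2).ne
    · exact (hf j i hj.1 h1 hi.2).ne'
  have hd1 : (∏ i ∈ Finset.Icc 1 N, (X - C (f i))) ∣ C κ * A + C (1 - κ) * B := by
    apply Finset.prod_dvd_of_coprime
    · intro i hi j hj hij
      exact hcop _ _ (hne i j hi hj hij)
    · intro i hi
      rw [Finset.mem_Icc] at hi
      rw [dvd_iff_isRoot]
      simpa using h i hi.1 hi.2
  have hd : (X - C x0) * ∏ i ∈ Finset.Icc 1 N, (X - C (f i)) ∣ C κ * A + C (1 - κ) * B := by
    apply IsCoprime.mul_dvd _ _ hd1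
    · apply IsCoprime.prod_right
      intro i hi
      rw [Finset.mem_Icc] at hi
      exact hcop _ _ (hx i hi.1 hi.2).ne'
    · rw [dvd_iff_isRoot]
      simpa using h0
  have hpm : ((X - C x0) * ∏ i ∈ Finset.Icc 1 N, (X - C (f i))).Monic :=
    (monic_X_sub_C _).mul (monic_prod_of_monic _ _ fun _ _ => monic_X_sub_C _)
  symm
  symm
  apply eq_of_monic_of_dvd_of_natDegree_le hpm hmon hd
  rw [hnd, Monic.natDegree_mul (monic_X_sub_C _) (monic_prod_of_monic _ _ fun _ _ => monic_X_sub_C _)]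
  rw [natDegree_prod_of_monic _ _ (fun _ _ => monic_X_sub_C _)]
  simp [add_comm]

lemma ivt (P : ℝ → ℝ) (hP : Continuous P) (a b : ℝ) (hab : a < b) (h : P a * P b < 0) :
    ∃ c, a < c ∧ c < b ∧ P c = 0 := by
  rcases mul_neg_iff.mp h with ⟨h1, h2⟩ | ⟨h1, h2⟩
  · obtain ⟨c, hc, hc2⟩ := intermediate_value_Ioo' hab.le hP.continuousOn (show (0:ℝ) ∈ _ from ⟨h2, h1⟩)
    exact ⟨c, hc.1, hc.2, hc2⟩
  · obtain ⟨c, hc, hc2⟩ := intermediate_value_Ioo hab.le hP.continuousOn (show (0:ℝ) ∈ _ from ⟨h1, h2⟩)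
    exact ⟨c, hc.1, hc.2, hc2⟩

lemma natdeg_prod (N : ℕ) (f : ℕ → ℝ) :
    (∏ i ∈ Finset.Icc 1 N, (X - C (f i))).natDegree = N := by
  rw [natDegree_prod_of_monic _ _ (fun _ _ => monic_X_sub_C _)]
  simp

lemma monic_pr (N : ℕ) (f : ℕ → ℝ) :
    (∏ i ∈ Finset.Icc 1 N, (X - C (f i))).Monic :=
  monic_prod_of_monic _ _ fun _ _ => monic_X_sub_C _

lemma core (k : ℕ) (α β : ℕ → ℝ) (hab : ∀ i, 1 ≤ i → i ≤ k + 1 → α i < β i)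
    (hba : ∀ i j, 1 ≤ i → i < j → j ≤ k + 2 → β i < α j) (hα : 0 < α 1)
    (K ms : ℝ) (hms : 0 < ms) (hK : ms < K) :
    ∃ (α' β' : ℕ → ℝ) (ls r : ℝ),
      (∀ i, 1 ≤ i → i ≤ k + 1 → α i < α' i ∧ α' i < β i) ∧
      (∀ i, 1 ≤ i → i ≤ k → β i < β' i ∧ β' i < α' (i + 1)) ∧
      α (k + 2) < ls ∧ 0 < r ∧ r < 1 ∧
      (C (K / (K - ms)) * (∏ i ∈ Finset.Icc 1 (k + 2), (X - C (α i))) +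
        C (1 - K / (K - ms)) * (X * ∏ i ∈ Finset.Icc 1 (k + 1), (X - C (β i))) =
        (X - C ls) * ∏ i ∈ Finset.Icc 1 (k + 1), (X - C (α' i))) ∧
      (C (1 / (1 - r)) * (∏ i ∈ Finset.Icc 1 (k + 1), (X - C (β i))) +
        C (1 - 1 / (1 - r)) * (∏ i ∈ Finset.Icc 1 (k + 1), (X - C (α' i))) =
        (X - C ls) * ∏ i ∈ Finset.Icc 1 k, (X - C (β' i))) := by
  have hαpos : ∀ i, 1 ≤ i → i ≤ k + 2 → 0 < α i := by
    intro i h1 h2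
    rcases h1.eq_or_lt with h | h
    · rw [← h]; exact hα
    · have := hab 1 le_rfl (by omega)
      have := hba 1 i le_rfl h h2
      linarith
  have hKm : 0 < K - ms := by linarith
  set F : ℝ[X] := ∏ i ∈ Finset.Icc 1 (k + 2), (X - C (α i)) with hF
  set G : ℝ[X] := ∏ i ∈ Finset.Icc 1 (k + 1), (X - C (β i)) with hG
  set κ := K / (K - ms) with hκ
  have hκ1 : 1 < κ := by rw [hκ, lt_div_iff₀ hKm]; linarith
  have hFe : ∀ x, F.eval x = ∏ i ∈ Finset.Icc 1 (k + 2), (x - α i) := by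
    intro x; simp [hF, eval_prod]
  have hGe : ∀ x, G.eval x = ∏ i ∈ Finset.Icc 1 (k + 1), (x - β i) := by
    intro x; simp [hG, eval_prod]
  have hFα : ∀ i, 1 ≤ i → i ≤ k + 2 → F.eval (α i) = 0 := by
    intro i h1 h2
    rw [hFe]
    exact Finset.prod_eq_zero (Finset.mem_Icc.mpr ⟨h1, h2⟩) (sub_self _)
  have hGβ : ∀ i, 1 ≤ i → i ≤ k + 1 → G.eval (β i) = 0 := by
    intro i h1 h2
    rw [hGe]
    exact Finset.prod_eq_zero (Finset.mem_Icc.mpr ⟨h1, h2⟩) (sub_self _)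
  have hsign : ∀ i, 1 ≤ i → i ≤ k + 1 → 0 < G.eval (α i) * F.eval (β i) := by
    intro i h1 h2
    rw [hFe, Finset.prod_Icc_succ_top (by omega), hGe, ← mul_assoc, ← Finset.prod_mul_distrib]
    have hl : β i - α (k + 1 + 1) < 0 := by linarith [hba i (k+2) h1 (by omega) le_rfl]
    apply mul_pos_of_neg_of_neg _ hl
    rw [← Finset.mul_prod_erase _ _ (Finset.mem_Icc.mpr ⟨h1, h2⟩)]
    apply mul_neg_of_neg_of_pos
    · nlinarith [hab i h1 h2]
    · apply Finset.prod_pos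
      intro j hj
      rw [Finset.mem_erase, Finset.mem_Icc] at hj
      obtain ⟨hne, hj1, hj2⟩ := hj
      rcases lt_or_gt_of_ne hne with h | h
      · have := hba j i hj1 h (by omega)
        have := hab j hj1 hj2
        have := hab i h1 h2
        apply mul_pos <;> linarith
      · have := hba i j h1 h (by omega)
        have := hab j hj1 hj2
        have := hab i h1 h2
        apply mul_pos_of_neg_of_neg <;> linarith
  let P : ℝ → ℝ := fun x => κ * F.eval x + (1 - κ) * (x * G.eval x)
  have hPc : Continuous P := by
    have := F.continuous
    have := G.continuous
    fun_prop
  have hex1 : ∀ i, ∃ c, (1 ≤ i → i ≤ k + 1 → α i < c ∧ c < β i ∧ P c = 0) := by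
    intro i
    by_cases h : 1 ≤ i ∧ i ≤ k + 1
    · obtain ⟨c, hc⟩ := ivt P hPc (α i) (β i) (hab i h.1 h.2) (by
        simp only [P]
        rw [hFα i h.1 (by omega), hGβ i h.1 h.2]
        have h1 := hsign i h.1 h.2
        have h2 := hαpos i h.1 (by omega)
        have : 0 < κ * (κ - 1) * α i * (G.eval (α i) * F.eval (β i)) := by
          apply mul_pos _ h1
          apply mul_pos _ h2
          apply mul_pos <;> linarith
        linarith)
      exact ⟨c, fun _ _ => hc⟩
    · exact ⟨0, fun a b => absurd ⟨a, b⟩ h⟩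
  choose α' hα' using hex1
  have hGtop : 0 < G.eval (α (k + 2)) := by
    rw [hGe]
    apply Finset.prod_pos
    intro j hj
    rw [Finset.mem_Icc] at hj
    linarith [hba j (k + 2) hj.1 (by omega) le_rfl]
  have hFmon : F.Monic := monic_pr _ _
  have hGmon : G.Monic := monic_pr _ _
  have hFd : F.natDegree = k + 1 + 1 := natdeg_prod _ _
  have hGd : G.natDegree = k + 1 := natdeg_prod _ _
  have hXG : (X * G).Monic := monic_X.mul hGmon
  have hXGd : (X * G).natDegree = k + 1 + 1 := by
    rw [Monic.natDegree_mul monic_X hGmon, hGd, natDegree_X]; ring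
  have hls : ∃ ls, α (k + 2) < ls ∧ P ls = 0 := by
    have hPtop : P (α (k + 2)) < 0 := by
      simp only [P]
      rw [hFα (k+2) (by omega) le_rfl]
      have h2 := hαpos (k+2) (by omega) le_rfl
      have : 0 < (κ - 1) * (α (k+2) * G.eval (α (k+2))) := by
        apply mul_pos (by linarith) (mul_pos h2 hGtop)
      linarith
    have hdeg : (F - X * G).degree < (X * G).degree := by
      have : F.degree = (X * G).degree := by
        rw [degree_eq_natDegree hFmon.ne_zero, degree_eq_natDegree hXG.ne_zero, hFd, hXGd]
      rw [← this]
      exact degree_sub_lt_left this hFmon.ne_zero (by rw [hFmon.leadingCoeff, hXG.leadingCoeff])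
    have hdeg2 : (C κ * (F - X * G)).degree < (X * G).degree := by
      rw [C_mul']; exact (degree_smul_le _ _).trans_lt hdeg
    have hm : (X * G + C κ * (F - X * G)).Monic := hXG.add_of_left hdeg2
    have ht := tendsto_atTop_of_leadingCoeff_nonneg (X * G + C κ * (F - X * G))
      (by rw [degree_add_eq_left_of_degree_lt hdeg2, ← natDegree_pos_iff_degree_pos, hXGd]; omega)
      (by rw [hm.leadingCoeff]; norm_num)
    obtain ⟨b, hb1, hb2⟩ := ((ht.eventually_gt_atTop 0).and
      (Filter.eventually_gt_atTop (α (k+2)))).exists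
    have hPb : 0 < P b := by
      have : P b = eval b (X * G + C κ * (F - X * G)) := by
        simp [P]; ring
      rw [this]; exact hb1
    obtain ⟨c, h1, h2, h3⟩ := ivt P hPc _ b hb2 (mul_neg_of_neg_of_pos hPtop hPb)
    exact ⟨c, h1, h3⟩
  obtain ⟨ls, hls1, hls2⟩ := hls
  have hα1 : ∀ i, 1 ≤ i → i ≤ k + 1 → α i < α' i := fun i h1 h2 => (hα' i h1 h2).1
  have hα2 : ∀ i, 1 ≤ i → i ≤ k + 1 → α' i < β i := fun i h1 h2 => (hα' i h1 h2).2.1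
  have hβls : ∀ i, 1 ≤ i → i ≤ k + 1 → β i < ls := fun i h1 h2 => by
    linarith [hba i (k+2) h1 (by omega) le_rfl]
  have hα'inc : ∀ i j, 1 ≤ i → i < j → j ≤ k + 1 → β i < α' j := by
    intro i j h1 h2 h3
    linarith [hba i j h1 h2 (by omega), hα1 j (by omega) h3]
  have id1 := fac (k + 1) F (X * G) hFmon hXG hFd hXGd κ α' ls
    (by
      intro i j h1 h2 h3
      linarith [hα'inc i j h1 h2 h3, hα2 i h1 (by omega)])
    (by
      intro i h1 h2
      linarith [hβls i h1 h2, hα2 i h1 h2])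
    (by
      intro i h1 h2
      have := (hα' i h1 h2).2.2
      simpa [P] using this)
    (by simpa [P] using hls2)
  set F0 : ℝ[X] := ∏ i ∈ Finset.Icc 1 (k + 1), (X - C (α' i)) with hF0
  have hF0e : ∀ x, F0.eval x = ∏ i ∈ Finset.Icc 1 (k + 1), (x - α' i) := by
    intro x; simp [hF0, eval_prod]
  have hF0ls : 0 < F0.eval ls := by
    rw [hF0e]
    apply Finset.prod_pos
    intro j hj
    rw [Finset.mem_Icc] at hj
    linarith [hβls j hj.1 hj.2, hα2 j hj.1 hj.2]
  have hGls : 0 < G.eval ls := by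
    rw [hGe]
    apply Finset.prod_pos
    intro j hj
    rw [Finset.mem_Icc] at hj
    linarith [hβls j hj.1 hj.2]
  have hlt : G.eval ls < F0.eval ls := by
    rw [hF0e, hGe]
    apply Finset.prod_lt_prod
    · intro j hj
      rw [Finset.mem_Icc] at hj
      linarith [hβls j hj.1 hj.2]
    · intro j hj
      rw [Finset.mem_Icc] at hj
      linarith [hα2 j hj.1 hj.2]
    · exact ⟨1, by simp, by linarith [hα2 1 le_rfl (by omega)]⟩
  obtain ⟨r, hr⟩ : ∃ r, r = G.eval ls / F0.eval ls := ⟨_, rfl⟩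
  have hr0 : 0 < r := by rw [hr]; positivity
  have hr1 : r < 1 := by rw [hr, div_lt_one hF0ls]; exact hlt
  have hrG : G.eval ls = r * F0.eval ls := by rw [hr]; field_simp
  let Q : ℝ → ℝ := fun x => G.eval x - r * F0.eval x
  have hQc : Continuous Q := by
    have := F0.continuous
    have := G.continuous
    fun_prop
  have hF0α : ∀ i, 1 ≤ i → i ≤ k + 1 → F0.eval (α' i) = 0 := by
    intro i h1 h2
    rw [hF0e]
    exact Finset.prod_eq_zero (Finset.mem_Icc.mpr ⟨h1, h2⟩) (sub_self _)
  have hex2 : ∀ i, ∃ c, (1 ≤ i → i ≤ k → β i < c ∧ c < α' (i + 1) ∧ Q c = 0) := by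
    intro i
    by_cases h : 1 ≤ i ∧ i ≤ k
    · obtain ⟨c, hc⟩ := ivt Q hQc (β i) (α' (i+1)) (hα'inc i (i+1) h.1 (by omega) (by omega)) (by
        simp only [Q]
        rw [hF0α (i+1) (by omega) (by omega), hGβ i h.1 (by omega)]
        have : 0 < F0.eval (β i) * G.eval (α' (i+1)) := by
          rw [hF0e, hGe, ← Finset.prod_mul_distrib]
          apply Finset.prod_pos
          intro j hj
          rw [Finset.mem_Icc] at hj
          have e1 := hα2 j hj.1 hj.2
          have e2 := hα2 i h.1 (by omega)
          have e3 := hα2 (i+1) (by omega) (by omega)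
          by_cases hji : j ≤ i
          · have := hα'inc j (i+1) hj.1 (by omega) (by omega)
            rcases hji.eq_or_lt with h' | h'
            · subst h'
              apply mul_pos <;> linarith
            · have := hα'inc j i hj.1 h' (by omega)
              apply mul_pos <;> linarith
          · have := hα'inc i j h.1 (by omega) hj.2
            have : j = i + 1 ∨ i + 1 < j := by omega
            rcases this with h' | h'
            · subst h'
              apply mul_pos_of_neg_of_neg <;> linarith
            · have := hα'inc (i+1) j (by omega) h' (by omega)
              apply mul_pos_of_neg_of_neg <;> linarith
        have := mul_pos hr0 this
        linarith)
      exact ⟨c, fun _ _ => hc⟩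
    · exact ⟨0, fun a b => absurd ⟨a, b⟩ h⟩
  choose β' hβ' using hex2
  have h1r : 1 - r ≠ 0 := by linarith
  have hQ : ∀ x, Q x = 0 → 1 / (1 - r) * G.eval x + (1 - 1 / (1 - r)) * F0.eval x = 0 := by
    intro x hx
    have : G.eval x = r * F0.eval x := by simp only [Q] at hx; linarith
    rw [this]; field_simp; ring
  have id2 := fac k G F0 hGmon (monic_pr _ _) hGd (natdeg_prod _ _) (1 / (1 - r)) β' ls
    (by
      intro i j h1 h2 h3
      have a1 := (hβ' i h1 (by omega)).2.1
      have a2 := (hβ' j (by omega) h3).1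
      have a3 := hα2 (i+1) (by omega) (by omega)
      have : i + 1 = j ∨ i + 1 < j := by omega
      rcases this with h' | h'
      · subst h'; linarith
      · linarith [hα'inc (i+1) j (by omega) h' (by omega), hα2 j (by omega) (by omega)])
    (by
      intro i h1 h2
      linarith [(hβ' i h1 h2).2.1, hα2 (i+1) (by omega) (by omega), hβls (i+1) (by omega) (by omega)])
    (fun i h1 h2 => hQ _ (hβ' i h1 h2).2.2)
    (hQ _ (by simp only [Q]; linarith))
  exact ⟨α', β', ls, r, fun i h1 h2 => ⟨hα1 i h1 h2, hα2 i h1 h2⟩,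
    fun i h1 h2 => ⟨(hβ' i h1 h2).1, (hβ' i h1 h2).2.1⟩, hls1, hr0, hr1, id1, id2⟩

lemma bern (s : Finset ℕ) (x : ℕ → ℝ) (h0 : ∀ i ∈ s, 0 ≤ x i) (h1 : ∀ i ∈ s, x i ≤ 1) :
    1 - ∑ i ∈ s, x i ≤ ∏ i ∈ s, (1 - x i) := by
  induction s using Finset.induction_on with
  | empty => simp
  | insert a s ha ih =>
    rw [Finset.sum_insert ha, Finset.prod_insert ha]
    have hs := ih (fun i hi => h0 i (Finset.mem_insert_of_mem hi))
      (fun i hi => h1 i (Finset.mem_insert_of_mem hi))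
    have a0 := h0 a (Finset.mem_insert_self _ _)
    have a1 := h1 a (Finset.mem_insert_self _ _)
    have s0 : 0 ≤ ∑ i ∈ s, x i :=
      Finset.sum_nonneg (fun i hi => h0 i (Finset.mem_insert_of_mem hi))
    nlinarith [mul_le_mul_of_nonneg_left hs (sub_nonneg.mpr a1), mul_nonneg a0 s0]

/-- The new roots stay in the left halves. -/
lemma est1 (k : ℕ) (α β : ℕ → ℝ) (D L : ℝ) (hD : 0 < D)
    (hαβ : ∀ i, 1 ≤ i → i ≤ k + 1 → α i < β i)
    (hba : ∀ i j, 1 ≤ i → i < j → j ≤ k + 2 → β i + D ≤ α j)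
    (hαpos : ∀ i, 1 ≤ i → i ≤ k + 2 → 0 < α i)
    (hβL : ∀ i, 1 ≤ i → i ≤ k + 1 → β i < L)
    (K ms : ℝ) (hms : 0 < ms) (hK0 : 0 < K) (hK : ms * L ^ (k + 1) ≤ K * D ^ (k + 1))
    (i : ℕ) (hi1 : 1 ≤ i) (hi2 : i ≤ k + 1) (x : ℝ) (hx1 : α i < x) (hx2 : x < β i)
    (h : K * ∏ j ∈ Finset.Icc 1 (k + 2), (x - α j) =
      ms * (x * ∏ j ∈ Finset.Icc 1 (k + 1), (x - β j))) :
    x - α i ≤ β i - x := by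
  have hi : i ∈ Finset.Icc 1 (k + 1) := Finset.mem_Icc.mpr ⟨hi1, hi2⟩
  have hi' : i ∈ Finset.Icc 1 (k + 2) := Finset.mem_Icc.mpr ⟨hi1, by omega⟩
  have hαi := hαpos i hi1 (by omega)
  have hβi := hβL i hi1 hi2
  have ha := congrArg abs h
  simp only [abs_mul, Finset.abs_prod] at ha
  rw [← Finset.mul_prod_erase _ _ hi, ← Finset.mul_prod_erase _ _ hi'] at ha
  rw [abs_of_pos hms, abs_of_pos hK0, abs_of_pos (show 0 < x by linarith),
    abs_of_pos (show 0 < x - α i by linarith), abs_of_neg (show x - β i < 0 by linarith)] at ha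
  have c1 : D ^ (k + 1) ≤ ∏ j ∈ (Finset.Icc 1 (k + 2)).erase i, |x - α j| := by
    have : ((Finset.Icc 1 (k + 2)).erase i).card = k + 1 := by
      rw [Finset.card_erase_of_mem hi']; simp
    rw [← this, ← Finset.prod_const]
    apply Finset.prod_le_prod
    · intro j _; exact hD.le
    · intro j hj
      rw [Finset.mem_erase, Finset.mem_Icc] at hj
      obtain ⟨hne, hj1, hj2⟩ := hj
      rw [le_abs]
      rcases lt_or_gt_of_ne hne with h' | h'
      · left
        linarith [hba j i hj1 h' (by omega), hαβ j hj1 (by omega)]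
      · right
        linarith [hba i j hi1 h' (by omega)]
  have c2 : ∏ j ∈ (Finset.Icc 1 (k + 1)).erase i, |x - β j| ≤ L ^ k := by
    have : ((Finset.Icc 1 (k + 1)).erase i).card = k := by
      rw [Finset.card_erase_of_mem hi]; simp
    have e : L ^ k = ∏ _j ∈ (Finset.Icc 1 (k + 1)).erase i, L := by
      rw [Finset.prod_const, this]
    rw [e]
    apply Finset.prod_le_prod
    · intro j _; exact abs_nonneg _
    · intro j hj
      rw [Finset.mem_erase, Finset.mem_Icc] at hj
      obtain ⟨hne, hj1, hj2⟩ := hj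
      have := hβL j hj1 hj2
      have := hαpos j hj1 (by omega)
      have := hαβ j hj1 hj2
      rw [abs_le]; constructor <;> linarith
  set A := ∏ j ∈ (Finset.Icc 1 (k + 2)).erase i, |x - α j|
  set B := ∏ j ∈ (Finset.Icc 1 (k + 1)).erase i, |x - β j|
  have hB : 0 ≤ B := Finset.prod_nonneg fun _ _ => abs_nonneg _
  have hu : 0 < x - α i := by linarith
  have hv : 0 < β i - x := by linarith
  have hL : 0 < L := by linarith
  have hKD : 0 < K * D ^ (k + 1) := by positivity
  have e1 : K * D ^ (k + 1) * (x - α i) ≤ K * D ^ (k + 1) * (β i - x) := by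
    calc K * D ^ (k + 1) * (x - α i) = K * ((x - α i) * D ^ (k+1)) := by ring
      _ ≤ K * ((x - α i) * A) := by gcongr
      _ = ms * (x * ((β i - x) * B)) := by rw [ha]; ring
      _ ≤ ms * (L * ((β i - x) * L ^ k)) := by
        have : x ≤ L := by linarith
        gcongr
      _ = ms * L ^ (k + 1) * (β i - x) := by ring
      _ ≤ K * D ^ (k + 1) * (β i - x) := by gcongr
  exact le_of_mul_le_mul_left e1 hKD

/-- The upper estimate for the new gaps. -/
lemma est2 (k : ℕ) (α β α' : ℕ → ℝ) (D L : ℝ) (n : ℕ) (hkn : k ≤ n) (hn : 0 < n) (hD : 0 < D)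
    (hαβ : ∀ i, 1 ≤ i → i ≤ k + 1 → α i < β i)
    (hba : ∀ i j, 1 ≤ i → i < j → j ≤ k + 2 → β i + D ≤ α j)
    (hαpos : ∀ i, 1 ≤ i → i ≤ k + 2 → 0 < α i)
    (hβL : ∀ i, 1 ≤ i → i ≤ k + 1 → β i < L)
    (hα' : ∀ i, 1 ≤ i → i ≤ k + 1 → α i < α' i ∧ α' i < β i)
    (hmid : ∀ i, 1 ≤ i → i ≤ k + 1 → α' i - α i ≤ β i - α' i)
    (i : ℕ) (hi1 : 1 ≤ i) (hi2 : i ≤ k)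
    (hsm : ∀ j, 1 ≤ j → j < i → 8 * n * L * (β j - α j) ≤ D * (β (i + 1) - α (i + 1)))
    (x r : ℝ) (hx1 : β i < x) (hx2 : x < α' (i + 1)) (hr1 : r < 1)
    (h : ∏ j ∈ Finset.Icc 1 (k + 1), (x - β j) = r * ∏ j ∈ Finset.Icc 1 (k + 1), (x - α' j)) :
    (x - α' i) * (β (i + 1) - α (i + 1)) ≤ 8 * L * (β i - α i) := by
  have hn' : (1 : ℝ) ≤ n := by exact_mod_cast hn
  have hβi1 := hβL (i + 1) (by omega) (by omega)
  have hαi1 := hαpos (i + 1) (by omega) (by omega)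
  have hαi := hαpos i (by omega) (by omega)
  have habi := hαβ i (by omega) (by omega)
  have habi1 := hαβ (i+1) (by omega) (by omega)
  obtain ⟨ha1, ha2⟩ := hα' i (by omega) (by omega)
  obtain ⟨hb1, hb2⟩ := hα' (i+1) (by omega) (by omega)
  have hL : 0 < L := by linarith
  set w := β (i + 1) - α (i + 1) with hw
  have hwpos : 0 < w := by linarith
  have hwL : w ≤ L := by linarith
  have hlow : ∀ j, 1 ≤ j → j < i → α' j < β j ∧ β j + D ≤ x := by
    intro j h1 h2
    have := hba j i h1 h2 (by omega)
    exact ⟨(hα' j h1 (by omega)).2, by linarith⟩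
  have hhigh : ∀ j, i < j → j ≤ k + 1 → x < α' j ∧ α' j < β j := by
    intro j h1 h2
    refine ⟨?_, (hα' j (by omega) h2).2⟩
    have : j = i + 1 ∨ i + 1 < j := by omega
    rcases this with h' | h'
    · rw [h']; exact hx2
    · linarith [hba (i+1) j (by omega) h' (by omega), (hα' j (by omega) h2).1]
  have hne : ∀ j ∈ Finset.Icc 1 (k + 1), x - α' j ≠ 0 := by
    intro j hj
    rw [Finset.mem_Icc] at hj
    rcases lt_trichotomy j i with h' | h' | h'
    · have := hlow j hj.1 h'
      linarith
    · subst h'; linarith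
    · have := hhigh j h' hj.2
      linarith
  have hprod : ∏ j ∈ Finset.Icc 1 (k + 1), ((x - β j) / (x - α' j)) = r := by
    rw [Finset.prod_div_distrib, h, mul_div_assoc, div_self (Finset.prod_ne_zero_iff.mpr hne), mul_one]
  set T := w / (2 * L) with hT
  have hT0 : 0 < T := by positivity
  have hT1 : T ≤ 1 := by rw [hT, div_le_one (by positivity)]; linarith
  let y : ℕ → ℝ := fun j => if j ≤ i then (β j - α' j) / (x - α' j) else 0
  have hy : ∀ j ∈ Finset.Icc 1 (k + 1), 0 ≤ y j ∧ y j ≤ 1 := by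
    intro j hj
    rw [Finset.mem_Icc] at hj
    simp only [y]
    split_ifs with hji
    · have : α' j < β j ∧ β j ≤ x := by
        rcases hji.eq_or_lt with h' | h'
        · subst h'; exact ⟨ha2, hx1.le⟩
        · have := hlow j hj.1 h'; exact ⟨this.1, by linarith⟩
      constructor
      · apply div_nonneg <;> linarith
      · rw [div_le_one (by linarith)]; linarith
    · norm_num
  have hfac : ∀ j ∈ Finset.Icc 1 (k + 1),
      (1 - y j) * (if j = i + 1 then 1 + T else 1) ≤ (x - β j) / (x - α' j) := by
    intro j hj
    have hnej := hne j hj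
    rw [Finset.mem_Icc] at hj
    simp only [y]
    by_cases hji : j ≤ i
    · rw [if_pos hji, if_neg (by omega)]
      apply le_of_eq
      field_simp
      ring
    · rw [if_neg hji]
      have hh := hhigh j (by omega) hj.2
      have e : (x - β j) / (x - α' j) = 1 + (β j - α' j) / (α' j - x) := by
        have : α' j - x ≠ 0 := by linarith
        field_simp
        ring
      rw [e]
      split_ifs with hj1
      · subst hj1
        have hm := hmid (i+1) (by omega) (by omega)
        have : T ≤ (β (i+1) - α' (i+1)) / (α' (i+1) - x) := by
          rw [hT, div_le_div_iff₀ (by positivity) (by linarith)]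
          have q1 : w ≤ 2 * (β (i+1) - α' (i+1)) := by linarith
          have q2 : α' (i+1) - x ≤ L := by linarith
          have q3 : 0 < α' (i+1) - x := by linarith
          calc w * (α' (i+1) - x) ≤ (2 * (β (i+1) - α' (i+1))) * L := by
                apply mul_le_mul q1 q2 q3.le; linarith
            _ = _ := by ring
        linarith
      · have : 0 ≤ (β j - α' j) / (α' j - x) := by
          apply div_nonneg <;> linarith
        linarith
  have hle : ∏ j ∈ Finset.Icc 1 (k + 1), ((1 - y j) * (if j = i + 1 then 1 + T else 1)) ≤ r := by
    rw [← hprod]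
    apply Finset.prod_le_prod
    · intro j hj
      have := hy j hj
      apply mul_nonneg (by linarith)
      split_ifs <;> linarith
    · exact hfac
  rw [Finset.prod_mul_distrib, Finset.prod_ite_eq', if_pos (Finset.mem_Icc.mpr ⟨by omega, by omega⟩)] at hle
  have hb := bern (Finset.Icc 1 (k + 1)) y (fun j hj => (hy j hj).1) (fun j hj => (hy j hj).2)
  set S := ∑ j ∈ Finset.Icc 1 (k + 1), y j with hS
  have hST : T / 2 < S := by
    have : (1 - S) * (1 + T) < 1 := by
      have := mul_le_mul_of_nonneg_right hb (show 0 ≤ 1 + T by linarith)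
      linarith
    by_contra hc
    push Not at hc
    nlinarith
  have himem : i ∈ Finset.Icc 1 (k + 1) := Finset.mem_Icc.mpr ⟨hi1, by omega⟩
  have hSle : S ≤ y i + T / 4 := by
    rw [hS, ← Finset.add_sum_erase _ _ himem]
    have : ∑ j ∈ (Finset.Icc 1 (k + 1)).erase i, y j ≤
        ((Finset.Icc 1 (k + 1)).erase i).card • (T / (4 * n)) := by
      apply Finset.sum_le_card_nsmul
      intro j hj
      rw [Finset.mem_erase, Finset.mem_Icc] at hj
      obtain ⟨hne', hj1, hj2⟩ := hj
      simp only [y]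
      split_ifs with hji
      · have hjl : j < i := lt_of_le_of_ne hji hne'
        have q := hlow j hj1 hjl
        have q2 := hsm j hj1 hjl
        have q3 := (hα' j hj1 hj2).1
        have : (β j - α' j) / (x - α' j) ≤ (β j - α j) / D := by
          apply div_le_div₀ <;> linarith
        apply this.trans
        rw [hT, div_div, div_le_div_iff₀ hD (by positivity)]
        linarith
      · positivity
    have hcard : ((Finset.Icc 1 (k + 1)).erase i).card = k := by
      rw [Finset.card_erase_of_mem himem]; simp
    rw [hcard, nsmul_eq_mul] at this
    have : (k : ℝ) * (T / (4 * n)) ≤ T / 4 := by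
      have : (k : ℝ) ≤ n := by exact_mod_cast hkn
      calc (k : ℝ) * (T / (4 * n)) ≤ n * (T / (4 * n)) := by gcongr
        _ = T / 4 := by field_simp
    linarith
  have hyi : T / 4 < y i := by linarith
  simp only [y, le_refl, if_true] at hyi
  rw [hT, lt_div_iff₀ (by linarith)] at hyi
  have e : w / (2 * L) / 4 * (x - α' i) * (8 * L) = (x - α' i) * w := by field_simp; ring
  rw [← e]
  have : w / (2 * L) / 4 * (x - α' i) * (8 * L) ≤ (β i - α' i) * (8 * L) := by gcongr
  nlinarith

lemma Del_facts (m : ℕ) (lam : ℕ → ℝ) (hm : 2 ≤ m)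
    (hmono : ∀ i, 1 ≤ i → i < m → lam i < lam (i + 1)) :
    0 < Del m lam ∧ Del m lam ≤ 1 / 2 ∧
      ∀ i, 1 ≤ i → i < m → 2 * Del m lam ≤ lam (i + 1) - lam i := by
  have hfin : ((fun i => lam (i + 1) - lam i) '' Set.Icc 1 (m - 1)).Finite :=
    (Set.finite_Icc _ _).image _
  have hne : ((fun i => lam (i + 1) - lam i) '' Set.Icc 1 (m - 1)).Nonempty :=
    ⟨_, 1, ⟨le_rfl, by omega⟩, rfl⟩
  have hpos : 0 < sInf ((fun i => lam (i + 1) - lam i) '' Set.Icc 1 (m - 1)) := by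
    obtain ⟨i, hi, he⟩ := hne.csInf_mem hfin
    rw [← he]
    have := hmono i hi.1 (by have := hi.2; omega)
    simp only
    linarith
  refine ⟨?_, ?_, ?_⟩
  · unfold Del; positivity
  · unfold Del
    have := min_le_left (1 : ℝ) (sInf ((fun i => lam (i + 1) - lam i) '' Set.Icc 1 (m - 1)))
    linarith
  · intro i h1 h2
    unfold Del
    have a := min_le_right (1 : ℝ) (sInf ((fun i => lam (i + 1) - lam i) '' Set.Icc 1 (m - 1)))
    have b : sInf ((fun i => lam (i + 1) - lam i) '' Set.Icc 1 (m - 1)) ≤ lam (i + 1) - lam i :=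
      csInf_le hfin.bddBelow ⟨i, ⟨h1, by omega⟩, rfl⟩
    linarith

/-- Auxiliary constant. -/
noncomputable def BB (n m : ℕ) (lam : ℕ → ℝ) : ℝ :=
  2 ^ (n + 2 * (n + 1) ^ 2 * n) * Lamb m lam ^ ((n + 1) * n) / Del m lam ^ (n * n)

section consts
variable (n m : ℕ) (lam : ℕ → ℝ) (hn : 2 ≤ n) (hD : 0 < Del m lam) (hD1 : Del m lam ≤ 1 / 2)
  (hL : 1 ≤ Lamb m lam)

lemma BB_pos (hD : 0 < Del m lam) (hL : 1 ≤ Lamb m lam) : 0 < BB n m lam := by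
  have : 0 < Lamb m lam := by linarith
  unfold BB; positivity

lemma Cone_facts (hD : 0 < Del m lam) (hL : 1 ≤ Lamb m lam) :
    0 < Cone n m lam ∧ Cone n m lam ≤ Del m lam := by
  have : 0 < Lamb m lam := by linarith
  unfold Cone
  constructor
  · positivity
  · apply div_le_self hD.le
    have : (1 : ℝ) ≤ 2 ^ (n + 1) := one_le_pow₀ (by norm_num)
    nlinarith

lemma eps_facts (hn : 2 ≤ n) (hD : 0 < Del m lam) (hD1 : Del m lam ≤ 1 / 2)
    (hL : 1 ≤ Lamb m lam) : 0 < eps n m lam ∧ eps n m lam ≤ 1 := by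
  have : 0 < Lamb m lam := by linarith
  have hn' : (2 : ℝ) ≤ n := by exact_mod_cast hn
  unfold eps
  constructor
  · positivity
  · rw [div_le_one (by positivity)]
    have h1 : Del m lam ^ (n ^ 2 + n + 1) ≤ 1 := pow_le_one₀ hD.le (by linarith)
    have h2 : (1 : ℝ) ≤ 2 ^ (3 * (n + 1) ^ 3) := one_le_pow₀ (by norm_num)
    have h3 : (1 : ℝ) ≤ Lamb m lam ^ ((n + 1) ^ 2) := one_le_pow₀ hL
    have h4 : (1 : ℝ) ≤ n * 2 ^ (3 * (n + 1) ^ 3) :=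
      one_le_mul_of_one_le_of_one_le (by linarith) h2
    exact h1.trans (one_le_mul_of_one_le_of_one_le h4 h3)

lemma key_const (hn : 2 ≤ n) (hD : 0 < Del m lam)
    (hL : 1 ≤ Lamb m lam) :
    8 * n * Lamb m lam * (BB n m lam * eps n m lam) ≤ Del m lam * Cone n m lam ^ n := by
  have hL0 : 0 < Lamb m lam := by linarith
  have hn' : (2 : ℝ) ≤ n := by exact_mod_cast hn
  unfold BB eps Cone
  set D := Del m lam
  set L := Lamb m lam
  have e1 : 8 * n * L * (2 ^ (n + 2 * (n + 1) ^ 2 * n) * L ^ ((n + 1) * n) / D ^ (n * n) *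
      (D ^ (n ^ 2 + n + 1) / (n * 2 ^ (3 * (n + 1) ^ 3) * L ^ ((n + 1) ^ 2)))) =
      2 ^ (3 + n + 2 * (n + 1) ^ 2 * n) / 2 ^ (3 * (n + 1) ^ 3) * (D ^ (n + 1) / L ^ n) := by
    rw [show (n + 1) ^ 2 = (n + 1) * n + 1 + n by ring, show n ^ 2 + n + 1 = n * n + (n + 1) by ring,
      pow_add L, pow_add L, pow_add D (n * n), pow_add (2:ℝ) (3 + n), pow_add (2:ℝ) 3,
      pow_add (2:ℝ) n]
    field_simp
    norm_num
  have e2 : D * (D / (2 ^ (n + 1) * L)) ^ n = 1 / 2 ^ ((n + 1) * n) * (D ^ (n + 1) / L ^ n) := by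
    rw [div_pow, mul_pow, pow_mul, pow_succ D]
    field_simp
  rw [e1, e2]
  apply mul_le_mul_of_nonneg_right _ (by positivity)
  rw [div_le_div_iff₀ (by positivity) (by positivity), ← pow_add, one_mul]
  apply pow_le_pow_right₀ (by norm_num)
  ring_nf
  nlinarith

lemma rho_pos (hn : 2 ≤ n) (hD : 0 < Del m lam) (hD1 : Del m lam ≤ 1 / 2)
    (hL : 1 ≤ Lamb m lam) (i : ℕ) : 0 < rho n m lam i :=
  pow_pos (eps_facts n m lam hn hD hD1 hL).1 _

lemma rho_mono (hn : 2 ≤ n) (hD : 0 < Del m lam) (hD1 : Del m lam ≤ 1 / 2)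
    (hL : 1 ≤ Lamb m lam) (i j : ℕ) (hij : i ≤ j) : rho n m lam i ≤ rho n m lam j := by
  obtain ⟨h1, h2⟩ := eps_facts n m lam hn hD hD1 hL
  apply pow_le_pow_of_le_one h1.le h2
  exact Nat.pow_le_pow_right (by omega) (by omega)

lemma rho_le (hn : 2 ≤ n) (hD : 0 < Del m lam) (hD1 : Del m lam ≤ 1 / 2)
    (hL : 1 ≤ Lamb m lam) (i : ℕ) : rho n m lam i ≤ eps n m lam := by
  obtain ⟨h1, h2⟩ := eps_facts n m lam hn hD hD1 hL
  exact pow_le_of_le_one h1.le h2 (by positivity)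

lemma rho_succ (i : ℕ) (hi : i < m) : rho n m lam i = rho n m lam (i + 1) ^ (n + 1) := by
  unfold rho
  rw [← pow_mul, show m - i = m - (i + 1) + 1 by omega, pow_succ (n + 1)]

lemma rho_step (hn : 2 ≤ n) (hD : 0 < Del m lam) (hD1 : Del m lam ≤ 1 / 2)
    (hL : 1 ≤ Lamb m lam) (i : ℕ) (hi : i < m) :
    rho n m lam i ≤ eps n m lam * rho n m lam (i + 1) := by
  obtain ⟨h1, h2⟩ := eps_facts n m lam hn hD hD1 hL
  have h3 := rho_pos n m lam hn hD hD1 hL (i + 1)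
  have h4 := rho_le n m lam hn hD hD1 hL (i + 1)
  rw [rho_succ n m lam i hi, pow_succ]
  apply mul_le_mul_of_nonneg_right _ h3.le
  exact (pow_le_of_le_one h3.le (h4.trans h2) (by omega)).trans h4

lemma delta_le (hn : 2 ≤ n) (hD : 0 < Del m lam) (hD1 : Del m lam ≤ 1 / 2)
    (hL : 1 ≤ Lamb m lam) (i : ℕ) (hi : i < m) :
    (1 + Ctwo n m lam i) ^ n * rho n m lam i ≤ BB n m lam * rho n m lam (i + 1) := by
  have hL0 : 0 < Lamb m lam := by linarith
  obtain ⟨h1, h2⟩ := eps_facts n m lam hn hD hD1 hL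
  have hr0 := rho_pos n m lam hn hD hD1 hL (i + 1)
  have hr1 := (rho_le n m lam hn hD hD1 hL (i + 1)).trans h2
  have hC : Ctwo n m lam i = 2 ^ (2 * (n + 1) ^ 2) * Lamb m lam ^ (n + 1) /
    (Del m lam ^ n * rho n m lam (i + 1)) := by
    unfold Ctwo rho
    rw [Nat.sub_sub]
  have hC1 : 1 ≤ Ctwo n m lam i := by
    rw [hC, one_le_div (by positivity)]
    have a1 : Del m lam ^ n ≤ 1 := pow_le_one₀ hD.le (by linarith)
    have a2 : Del m lam ^ n * rho n m lam (i + 1) ≤ 1 := mul_le_one₀ a1 hr0.le hr1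
    exact a2.trans (one_le_mul_of_one_le_of_one_le (one_le_pow₀ (by norm_num)) (one_le_pow₀ hL))
  have hri := rho_pos n m lam hn hD hD1 hL i
  calc (1 + Ctwo n m lam i) ^ n * rho n m lam i ≤ (2 * Ctwo n m lam i) ^ n * rho n m lam i := by
        gcongr; linarith
    _ = BB n m lam * rho n m lam (i + 1) := by
        rw [rho_succ n m lam i hi, hC]
        unfold BB
        set r := rho n m lam (i + 1)
        rw [mul_pow, div_pow, mul_pow, mul_pow, pow_add (2:ℝ) n, pow_mul (2:ℝ) (2 * (n+1)^2) n,
          pow_mul (Lamb m lam), pow_mul (Del m lam), pow_succ r]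
        field_simp

lemma ctwo_ge (hn : 2 ≤ n) (hD : 0 < Del m lam) (hD1 : Del m lam ≤ 1 / 2)
    (hL : 1 ≤ Lamb m lam) (i : ℕ) : 0 ≤ Ctwo n m lam i ∧
    8 * Lamb m lam ≤ Ctwo n m lam i * (Cone n m lam ^ n * rho n m lam (i + 1)) := by
  have hL0 : 0 < Lamb m lam := by linarith
  have hr0 := rho_pos n m lam hn hD hD1 hL (i + 1)
  have hC : Ctwo n m lam i = 2 ^ (2 * (n + 1) ^ 2) * Lamb m lam ^ (n + 1) /
    (Del m lam ^ n * rho n m lam (i + 1)) := by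
    unfold Ctwo rho
    rw [Nat.sub_sub]
  rw [hC]
  refine ⟨by positivity, ?_⟩
  unfold Cone
  set r := rho n m lam (i + 1)
  set D := Del m lam
  set L := Lamb m lam
  have : 2 ^ (2 * (n + 1) ^ 2) * L ^ (n + 1) / (D ^ n * r) * ((D / (2 ^ (n + 1) * L)) ^ n * r) =
      2 ^ (2 * (n + 1) ^ 2) / 2 ^ ((n + 1) * n) * L := by
    rw [div_pow, mul_pow, pow_mul (2:ℝ) (n+1) n, pow_succ L]
    field_simp
  rw [this]
  apply mul_le_mul_of_nonneg_right _ hL0.le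
  rw [le_div_iff₀ (by positivity), show (8:ℝ) = 2 ^ 3 by norm_num, ← pow_add]
  apply pow_le_pow_right₀ (by norm_num)
  nlinarith

lemma CC_ge (hn : 2 ≤ n) (hD : 0 < Del m lam) (hD1 : Del m lam ≤ 1 / 2)
    (hL : 1 ≤ Lamb m lam) : Lamb m lam ^ n ≤ CC n m lam * Del m lam ^ n := by
  have hL0 : 0 < Lamb m lam := by linarith
  obtain ⟨h1, h2⟩ := eps_facts n m lam hn hD hD1 hL
  have hr0 := rho_pos n m lam hn hD hD1 hL 1
  have hr1 := (rho_le n m lam hn hD hD1 hL 1).trans h2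
  obtain ⟨hc0, hc1⟩ := Cone_facts n m lam hD hL
  have hden : Cone n m lam ^ (2 * n ^ 2) * rho n m lam 1 ^ (2 * n) ≤ Del m lam ^ n := by
    calc Cone n m lam ^ (2 * n ^ 2) * rho n m lam 1 ^ (2 * n) ≤ Cone n m lam ^ (2 * n ^ 2) * 1 := by
          gcongr; exact pow_le_one₀ hr0.le hr1
      _ = Cone n m lam ^ (2 * n ^ 2) := mul_one _
      _ ≤ Cone n m lam ^ n := by
          apply pow_le_pow_of_le_one hc0.le (by linarith)
          nlinarith
      _ ≤ _ := by gcongr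
  unfold _root_.CC
  rw [div_mul_eq_mul_div, le_div_iff₀ (by positivity)]
  have : (1:ℝ) ≤ 2 ^ (2 * n + 1) := one_le_pow₀ (by norm_num)
  apply mul_le_mul _ hden (by positivity) (by positivity)
  have : 0 < Lamb m lam ^ n := by positivity
  nlinarith
end consts

/-- Lemma `cas1`(i): the case `p > 2`. -/
theorem stmt_14 (n m : ℕ) (hm : 2 ≤ m) (hmn : m ≤ n) (lam : ℕ → ℝ)
    (hpos : 0 < lam 1) (hmono : ∀ i, 1 ≤ i → i < m → lam i < lam (i + 1))
    (p : ℕ) (hp2 : 2 < p) (hpm : p ≤ m)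
    (α β : ℕ → ℝ)
    (hαp : lam p ≤ α p ∧ α p < Lamb m lam)
    (hroots : ∀ i, 1 ≤ i → i ≤ p - 1 →
      lam i ≤ α i ∧
      α i + Cone n m lam ^ n * rho n m lam i < β i ∧
      β i < lam i + (1 + Ctwo n m lam i) ^ n * rho n m lam i ∧
      lam i + (1 + Ctwo n m lam i) ^ n * rho n m lam i < lam (i + 1))
    (MM μ ν mstar : ℝ) (hMM : 0 < MM) (hms : 0 < mstar ∧ mstar < MM)
    (hν : ν ≠ 0) (hμν : -μ / ν > CC n m lam * MM) :
    ∃ (α' β' : ℕ → ℝ) (lamstar bstar μ₀ ν₀ : ℝ),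
      (∀ i, 1 ≤ i → i < p - 1 → α' i < α' (i + 1)) ∧
      (∀ i, 1 ≤ i → i < p - 2 → β' i < β' (i + 1)) ∧
      α (p - 1) < α' (p - 1) ∧ α' (p - 1) < lam p ∧
      (∀ i, 1 ≤ i → i ≤ p - 2 →
        α i < α' i ∧ α' i < β i ∧
        Cone n m lam * (β i - α i) ≤ β' i - α' i ∧
        β' i - α' i ≤ Ctwo n m lam i * (β i - α i)) ∧
      0 < lamstar ∧ 0 < bstar ∧ -μ₀ / ν₀ > -μ / ν - mstar ∧
      Polynomial.C μ * ∏ i ∈ Finset.Icc 1 p, (Polynomial.X - Polynomial.C (α i)) =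
        -(Polynomial.C mstar * Polynomial.C ν) * Polynomial.X *
            ∏ i ∈ Finset.Icc 1 (p - 1), (Polynomial.X - Polynomial.C (β i)) +
          Polynomial.C bstar * Polynomial.C μ₀ * (Polynomial.C lamstar - Polynomial.X) *
            ∏ i ∈ Finset.Icc 1 (p - 1), (Polynomial.X - Polynomial.C (α' i)) ∧
      Polynomial.C ν * ∏ i ∈ Finset.Icc 1 (p - 1), (Polynomial.X - Polynomial.C (β i)) =
        Polynomial.C μ₀ *
            ∏ i ∈ Finset.Icc 1 (p - 1), (Polynomial.X - Polynomial.C (α' i)) +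
          Polynomial.C bstar * Polynomial.C ν₀ * (Polynomial.C lamstar - Polynomial.X) *
            ∏ i ∈ Finset.Icc 1 (p - 2), (Polynomial.X - Polynomial.C (β' i)) := by
  obtain ⟨hD, hD1, hgap⟩ := Del_facts m lam hm hmono
  have hn : 2 ≤ n := hm.trans hmn
  have hn' : (2 : ℝ) ≤ n := by exact_mod_cast hn
  have hlm : ∀ i j, 1 ≤ i → i ≤ j → j ≤ m → lam i ≤ lam j := by
    intro i j h1 hij
    induction j, hij using Nat.le_induction with
    | base => intro _; exact le_rfl
    | succ j hj ih =>
      intro h2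
      exact (ih (by omega)).trans (hmono j (by omega) (by omega)).le
  have hL : 1 ≤ Lamb m lam := by
    have := hlm 1 m le_rfl (by omega) le_rfl
    unfold Lamb; linarith
  have hL0 : 0 < Lamb m lam := by linarith
  obtain ⟨he0, he1⟩ := eps_facts n m lam hn hD hD1 hL
  obtain ⟨hc0, hc1⟩ := Cone_facts n m lam hD hL
  have hB := BB_pos n m lam hD hL
  have hkey := key_const n m lam hn hD hL
  have hρ := rho_pos n m lam hn hD hD1 hL
  obtain ⟨k, rfl⟩ : ∃ k, p = k + 2 := ⟨p - 2, by omega⟩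
  simp only [show k + 2 - 1 = k + 1 by omega, show k + 2 - 2 = k by omega] at *
  have hcn : Cone n m lam ^ n ≤ 1 := pow_le_one₀ hc0.le (by linarith)
  have hBe : BB n m lam * eps n m lam ≤ Del m lam := by
    have h1 : Del m lam * Cone n m lam ^ n ≤ Del m lam := mul_le_of_le_one_right hD.le hcn
    have h2 : BB n m lam * eps n m lam ≤ 8 * n * Lamb m lam * (BB n m lam * eps n m lam) := by
      apply le_mul_of_one_le_left (by positivity)
      nlinarith
    linarith
  have hαβ : ∀ i, 1 ≤ i → i ≤ k + 1 → α i < β i := by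
    intro i h1 h2
    have := (hroots i h1 h2).2.1
    have : 0 < Cone n m lam ^ n * rho n m lam i := mul_pos (pow_pos hc0 n) (hρ i)
    linarith
  have hβl : ∀ i, 1 ≤ i → i ≤ k + 1 → β i < lam i + BB n m lam * rho n m lam (i + 1) := by
    intro i h1 h2
    have := (hroots i h1 h2).2.2.1
    have := delta_le n m lam hn hD hD1 hL i (by omega)
    linarith
  have hlα : ∀ i, 1 ≤ i → i ≤ k + 2 → lam i ≤ α i := by
    intro i h1 h2
    rcases h2.eq_or_lt with h | h
    · rw [h]; exact hαp.1
    · exact (hroots i h1 (by omega)).1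
  have hba : ∀ i j, 1 ≤ i → i < j → j ≤ k + 2 → β i + Del m lam ≤ α j := by
    intro i j h1 h2 h3
    have a1 := hβl i h1 (by omega)
    have a2 : BB n m lam * rho n m lam (i + 1) ≤ BB n m lam * eps n m lam := by
      gcongr; exact rho_le n m lam hn hD hD1 hL _
    have a3 := hgap i h1 (by omega)
    have a4 := hlm (i + 1) j (by omega) h2 (by omega)
    have a5 := hlα j (by omega) h3
    linarith
  have hαpos : ∀ i, 1 ≤ i → i ≤ k + 2 → 0 < α i := by
    intro i h1 h2
    have := hlα i h1 h2
    have := hlm 1 i le_rfl h1 (by omega)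
    linarith
  have hβL : ∀ i, 1 ≤ i → i ≤ k + 1 → β i < Lamb m lam := by
    intro i h1 h2
    have := hba i (k + 2) h1 (by omega) le_rfl
    linarith [hαp.2]
  obtain ⟨K, hK⟩ : ∃ K, K = -μ / ν := ⟨_, rfl⟩
  have hμ : μ = -K * ν := by rw [hK]; field_simp
  rw [← hK] at hμν ⊢
  obtain ⟨hms0, hms1⟩ := hms
  have hCC := CC_ge n m lam hn hD hD1 hL
  have hdiv : ∀ j, j ≤ n → Lamb m lam ^ j ≤ CC n m lam * Del m lam ^ j := by
    intro j hj
    have h1 : (Lamb m lam / Del m lam) ^ n ≤ CC n m lam := by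
      rw [div_pow, div_le_iff₀ (by positivity)]; exact hCC
    have h2 : (Lamb m lam / Del m lam) ^ j ≤ (Lamb m lam / Del m lam) ^ n := by
      apply pow_le_pow_right₀ _ hj
      rw [one_le_div hD]; linarith
    have h3 := h2.trans h1
    rwa [div_pow, div_le_iff₀ (by positivity)] at h3
  have hCC1 : 1 ≤ CC n m lam := by simpa using hdiv 0 (by omega)
  have hKms : CC n m lam * mstar < K := by
    have : CC n m lam * mstar < CC n m lam * MM := by gcongr
    linarith
  have hKm : mstar < K := by nlinarith
  have hK0 : 0 < K := by linarith
  obtain ⟨α', β', ls, r, hα', hβ', hls, hr0, hr1, id1, id2⟩ :=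
    core k α β hαβ (fun i j h1 h2 h3 => by linarith [hba i j h1 h2 h3])
      (hαpos 1 le_rfl (by omega)) K mstar hms0 hKm
  have hKm' : K - mstar ≠ 0 := by linarith
  have hr1' : 1 - r ≠ 0 := by linarith
  have hmid : ∀ i, 1 ≤ i → i ≤ k + 1 → α' i - α i ≤ β i - α' i := by
    intro i h1 h2
    apply est1 k α β (Del m lam) (Lamb m lam) hD hαβ hba hαpos hβL K mstar hms0 hK0 _ i h1 h2
      (α' i) (hα' i h1 h2).1 (hα' i h1 h2).2
    · have := congrArg (Polynomial.eval (α' i)) id1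
      simp only [eval_add, eval_mul, eval_C, eval_X, eval_sub, eval_prod] at this
      rw [Finset.prod_eq_zero (f := fun j => α' i - α' j) (Finset.mem_Icc.mpr ⟨h1, h2⟩) (sub_self _)] at this
      field_simp at this
      linarith
    · have h3 := hdiv (k + 1) (by omega)
      calc mstar * Lamb m lam ^ (k + 1) ≤ mstar * (CC n m lam * Del m lam ^ (k + 1)) := by gcongr
        _ = CC n m lam * mstar * Del m lam ^ (k + 1) := by ring
        _ ≤ K * Del m lam ^ (k + 1) := by gcongr
  have hup : ∀ i, 1 ≤ i → i ≤ k → β' i - α' i ≤ Ctwo n m lam i * (β i - α i) := by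
    intro i h1 h2
    have hw := (hroots (i + 1) (by omega) (by omega)).2.1
    have hcr : 0 < Cone n m lam ^ n * rho n m lam (i + 1) := mul_pos (pow_pos hc0 n) (hρ _)
    have e2 := est2 k α β α' (Del m lam) (Lamb m lam) n (by omega) (by omega) hD hαβ hba hαpos hβL
      hα' hmid i h1 h2 (by
        intro j hj1 hj2
        have b1 : β j - α j ≤ BB n m lam * rho n m lam (j + 1) := by
          linarith [hβl j hj1 (by omega), hlα j hj1 (by omega)]
        have b2 : rho n m lam (j + 1) ≤ eps n m lam * rho n m lam (i + 1) :=
          (rho_mono n m lam hn hD hD1 hL _ _ hj2).trans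
            (rho_step n m lam hn hD hD1 hL i (by omega))
        have := hρ (i + 1)
        calc 8 * n * Lamb m lam * (β j - α j)
            ≤ 8 * n * Lamb m lam * (BB n m lam * (eps n m lam * rho n m lam (i + 1))) := by
              gcongr
              exact b1.trans (by gcongr)
          _ = 8 * n * Lamb m lam * (BB n m lam * eps n m lam) * rho n m lam (i + 1) := by ring
          _ ≤ Del m lam * Cone n m lam ^ n * rho n m lam (i + 1) := by gcongr
          _ = Del m lam * (Cone n m lam ^ n * rho n m lam (i + 1)) := by ring
          _ ≤ _ := by gcongr; linarith)
      (β' i) r (hβ' i h1 h2).1 (hβ' i h1 h2).2 hr1 (by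
        have := congrArg (Polynomial.eval (β' i)) id2
        simp only [eval_add, eval_mul, eval_C, eval_X, eval_sub, eval_prod] at this
        rw [Finset.prod_eq_zero (f := fun j => β' i - β' j) (Finset.mem_Icc.mpr ⟨h1, h2⟩) (sub_self _)] at this
        field_simp at this
        linarith)
    obtain ⟨g0, g1⟩ := ctwo_ge n m lam hn hD hD1 hL i
    have hv := hαβ i h1 (by omega)
    have hwpos : 0 < β (i + 1) - α (i + 1) := by linarith
    refine le_of_mul_le_mul_right (e2.trans ?_) hwpos
    calc 8 * Lamb m lam * (β i - α i)
        ≤ Ctwo n m lam i * (Cone n m lam ^ n * rho n m lam (i + 1)) * (β i - α i) := by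
          apply mul_le_mul_of_nonneg_right g1; linarith
      _ ≤ Ctwo n m lam i * (β (i + 1) - α (i + 1)) * (β i - α i) := by
          apply mul_le_mul_of_nonneg_right _ (by linarith)
          apply mul_le_mul_of_nonneg_left _ g0; linarith
      _ = _ := by ring
  refine ⟨α', β', ls, (K - mstar) / r, ν * r, ν * (r - 1) * r / (K - mstar),
    ?_, ?_, (hα' (k + 1) (by omega) le_rfl).1, ?_, ?_, ?_, ?_, ?_, ?_, ?_⟩
  · intro i h1 h2
    linarith [(hα' i h1 (by omega)).2, hba i (i + 1) h1 (by omega) (by omega),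
      (hα' (i + 1) (by omega) (by omega)).1]
  · intro i h1 h2
    linarith [(hβ' i h1 (by omega)).2, (hβ' (i + 1) (by omega) (by omega)).1,
      (hα' (i + 1) (by omega) (by omega)).2]
  · have := (hroots (k + 1) (by omega) le_rfl)
    linarith [this.2.2.1, this.2.2.2, (hα' (k + 1) (by omega) le_rfl).2]
  · intro i h1 h2
    refine ⟨(hα' i h1 (by omega)).1, (hα' i h1 (by omega)).2, ?_, hup i h1 h2⟩
    have := hmid i h1 (by omega)
    have := hαβ i h1 (by omega)
    have := (hβ' i h1 h2).1
    have : Cone n m lam * (β i - α i) ≤ 1 / 2 * (β i - α i) := by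
      apply mul_le_mul_of_nonneg_right <;> linarith
    linarith
  · linarith [hαpos (k + 2) (by omega) le_rfl]
  · apply div_pos _ hr0; linarith
  · have e : -(ν * r) / (ν * (r - 1) * r / (K - mstar)) = (K - mstar) / (1 - r) := by
      have : r - 1 ≠ 0 := by linarith
      have := hr0.ne'
      field_simp
      ring
    rw [e, gt_iff_lt, lt_div_iff₀ (by linarith)]
    nlinarith
  · have hb : (K - mstar) / r * (ν * r) = (K - mstar) * ν := by
      have := hr0.ne'
      field_simp
    have c1 : C (K - mstar) * C (K / (K - mstar)) = C K := by
      rw [← C_mul]; congr 1; field_simp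
    have c2 : C (K - mstar) * C (1 - K / (K - mstar)) = - C mstar := by
      rw [← C_mul, ← C_neg]; congr 1; field_simp; ring
    rw [← C_mul (a := (K - mstar) / r), hb, hμ, C_mul, C_mul, C_neg]
    generalize (∏ i ∈ Finset.Icc 1 (k + 2), (X - C (α i))) = F at *
    generalize (∏ i ∈ Finset.Icc 1 (k + 1), (X - C (β i))) = G at *
    generalize (∏ i ∈ Finset.Icc 1 (k + 1), (X - C (α' i))) = F0 at *
    linear_combination (C ν * F) * c1 + C ν * X * G * c2 + (-C (K - mstar) * C ν) * id1
  · have hb : (K - mstar) / r * (ν * (r - 1) * r / (K - mstar)) = ν * (r - 1) := by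
      have := hr0.ne'
      field_simp
    have c1 : C (1 - r) * C (1 / (1 - r)) = 1 := by
      rw [← C_mul, ← C_1]; congr 1; field_simp
    have c2 : C (1 - r) * C (1 - 1 / (1 - r)) = - C r := by
      rw [← C_mul, ← C_neg]; congr 1; field_simp; ring
    have c3 : C (r - 1) = - C (1 - r) := by rw [← C_neg]; congr 1; ring
    rw [← C_mul (a := (K - mstar) / r), hb, C_mul, C_mul, c3]
    generalize (∏ i ∈ Finset.Icc 1 k, (X - C (β' i))) = G0 at *
    generalize (∏ i ∈ Finset.Icc 1 (k + 1), (X - C (β i))) = G at *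
    generalize (∏ i ∈ Finset.Icc 1 (k + 1), (X - C (α' i))) = F0 at *
    linear_combination (-C ν * G) * c1 - C ν * F0 * c2 + (C (1 - r) * C ν) * id2
end

section
/- Let p be an integer with 2 ≤ p ≤ m, let λ* be a real number with λ_p < λ* < Λ, and let μ, ν be real numbers with μ/ν < 0. Let F(λ) = ∏_{i=1}^{p}(λ − α_i) and G(λ) = ∏_{i=1}^{p−1}(λ − β_i) be real polynomials whose roots satisfy α_p ∈ [λ_p, λ*) and, for each i = 1,…,p−1: λ_i ≤ α_i, α_i + C_1^n·ρ_i < β_i, β_i < λ_i + (1 + C_2(i))^n·ρ_i, and λ_i + (1 + C_2(i))^n·ρ_i < λ_{i+1}. Then there exist monic real polynomials F_0 and G_0, F_0 having p distinct real roots α'_1 < ⋯ < α'_p and G_0 having p−1 distinct real roots β'_1 < ⋯ < β'_{p−1}, such that α'_p = λ* and for each i = 1,…,p−1: α'_i ∈ (α_i, β_i) and C_1·(β_i − α_i) ≤ β'_i − α'_i ≤ C_2(i)·(β_i − α_i); moreover there exist real numbers m* > 0, b* > 0 and μ_0, ν_0 with −μ_0/ν_0 > −(λ_1/Λ)·(μ/ν)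 such that the identities μ·F(λ) = −m*·ν·λ·G(λ) − b*·μ_0·F_0(λ) and ν·(λ − λ*)·G(λ) = μ_0·F_0(λ) + b*·ν_0·(λ* − λ)·G_0(λ) hold in ℝ[λ]. -/
open Polynomial

theorem aux_poly (q : ℕ) (c : ℝ) (r : ℕ → ℝ) (Q : ℝ[X])
    (hd : Q.natDegree ≤ q) (hc : Q.coeff q = c)
    (hr : ∀ i ∈ Finset.Icc 1 q, ∀ j ∈ Finset.Icc 1 q, r i = r j → i = j)
    (h0 : ∀ i ∈ Finset.Icc 1 q, Q.eval (r i) = 0) :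
    Q = C c * ∏ i ∈ Finset.Icc 1 q, (X - C (r i)) := by
  have hmon : (∏ i ∈ Finset.Icc 1 q, (X - C (r i))).Monic :=
    monic_prod_of_monic _ _ (fun i _ => monic_X_sub_C _)
  have hnd : (∏ i ∈ Finset.Icc 1 q, (X - C (r i))).natDegree = q := by
    rw [natDegree_prod_of_monic _ _ (fun i _ => monic_X_sub_C _)]
    simp
  have hcf : (∏ i ∈ Finset.Icc 1 q, (X - C (r i))).coeff q = 1 := by
    have := hmon.coeff_natDegree
    rwa [hnd] at this
  rw [← sub_eq_zero]
  have hinj : Set.InjOn r (Finset.Icc 1 q : Finset ℕ) := by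
    intro i hi j hj hij
    exact hr i hi j hj hij
  refine Polynomial.eq_zero_of_degree_lt_of_eval_index_eq_zero _ hinj ?_ ?_
  · simp only [Nat.card_Icc, Nat.add_sub_cancel]
    rw [degree_lt_iff_coeff_zero]
    intro k hk
    rcases hk.eq_or_lt with rfl | hk
    · simp [hc, hcf]
    · rw [coeff_sub, coeff_C_mul, coeff_eq_zero_of_natDegree_lt (lt_of_le_of_lt hd hk),
        coeff_eq_zero_of_natDegree_lt (by rw [hnd]; exact hk)]
      simp
  · intro i hi
    rw [eval_sub, h0 i hi, eval_mul, eval_prod, Finset.prod_eq_zero hi (by simp)]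
    simp

theorem aux_monic (q : ℕ) (r : ℕ → ℝ) :
    (∏ i ∈ Finset.Icc 1 q, (X - C (r i))).natDegree = q ∧
    (∏ i ∈ Finset.Icc 1 q, (X - C (r i))).coeff q = 1 := by
  have hmon : (∏ i ∈ Finset.Icc 1 q, (X - C (r i))).Monic :=
    monic_prod_of_monic _ _ (fun i _ => monic_X_sub_C _)
  have hnd : (∏ i ∈ Finset.Icc 1 q, (X - C (r i))).natDegree = q := by
    rw [natDegree_prod_of_monic _ _ (fun i _ => monic_X_sub_C _)]
    simp
  refine ⟨hnd, ?_⟩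
  have := hmon.coeff_natDegree
  rwa [hnd] at this

theorem aux_inj (q : ℕ) (r : ℕ → ℝ) (h : ∀ i j, 1 ≤ i → i < j → j ≤ q → r i < r j) :
    ∀ i ∈ Finset.Icc 1 q, ∀ j ∈ Finset.Icc 1 q, r i = r j → i = j := by
  intro i hi j hj hij
  rw [Finset.mem_Icc] at hi hj
  rcases lt_trichotomy i j with hl | hl | hl
  · exact absurd hij (h i j hi.1 hl hj.2).ne
  · exact hl
  · exact absurd hij (h j i hj.1 hl hi.2).ne'

theorem aux_ratio (t : Finset ℕ) (a b : ℕ → ℝ) (x : ℝ)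
    (h : ∀ j ∈ t, (a j < x ∧ b j < x) ∨ (x < a j ∧ x < b j)) :
    0 < ∏ j ∈ t, ((x - a j) / (x - b j)) := by
  refine Finset.prod_pos fun j hj => ?_
  rcases h j hj with ⟨h1, h2⟩ | ⟨h1, h2⟩
  · exact div_pos (sub_pos.2 h1) (sub_pos.2 h2)
  · exact div_pos_of_neg_of_neg (sub_neg.2 h1) (sub_neg.2 h2)

theorem aux_ratio_cont (t : Finset ℕ) (a b : ℕ → ℝ) (S : Set ℝ)
    (h : ∀ x ∈ S, ∀ j ∈ t, x - b j ≠ 0) :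
    ContinuousOn (fun x => ∏ j ∈ t, ((x - a j) / (x - b j))) S := by
  refine continuousOn_finsetProd _ fun j hj => ?_
  exact ContinuousOn.div (by fun_prop) (by fun_prop) (fun x hx => h x hx j hj)

theorem aux_ord (q : ℕ) (α β : ℕ → ℝ)
    (h : ∀ i, 1 ≤ i → i ≤ q → α i < β i ∧ β i < α (i + 1)) :
    ∀ i j, 1 ≤ i → i < j → j ≤ q + 1 → β i < α j := by
  intro i j hi hij
  induction j, hij using Nat.le_induction with
  | base => intro hj; exact (h i hi (by omega)).2
  | succ k hk ih =>
    intro hj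
    have := h k (by omega) (by omega)
    linarith [ih (by omega)]

theorem aux_root1 (q : ℕ) (α β : ℕ → ℝ) (κ m : ℝ) (hκ : 0 < κ) (hm : 0 < m)
    (h : ∀ i, 1 ≤ i → i ≤ q → α i < β i ∧ β i < α (i + 1))
    (i : ℕ) (hi : 1 ≤ i) (hiq : i ≤ q) (hα : 0 < α i) :
    ∃ x, α i < x ∧ x < β i ∧
      κ * (x - α i) * (α (q + 1) - x) *
        (∏ j ∈ (Finset.Icc 1 q).erase i, ((x - α j) / (x - β j))) = m * x * (β i - x) ∧
      κ * ∏ j ∈ Finset.Icc 1 (q + 1), (x - α j) = m * x * ∏ j ∈ Finset.Icc 1 q, (x - β j) := by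
  have ho := aux_ord q α β h
  have hi' := h i hi hiq
  have hsep : ∀ x ∈ Set.Icc (α i) (β i), ∀ j ∈ (Finset.Icc 1 q).erase i,
      (α j < x ∧ β j < x) ∨ (x < α j ∧ x < β j) := by
    intro x hx j hj
    rw [Finset.mem_erase, Finset.mem_Icc] at hj
    have hj' := h j hj.2.1 hj.2.2
    rcases lt_or_gt_of_ne hj.1 with hl | hl
    · left
      have := ho j i hj.2.1 hl (by omega)
      constructor <;> linarith [hx.1]
    · right
      have := ho i j hi hl (by omega)
      constructor <;> linarith [hx.2]
  have hne : ∀ x ∈ Set.Icc (α i) (β i), ∀ j ∈ (Finset.Icc 1 q).erase i, x - β j ≠ 0 := by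
    intro x hx j hj
    rcases hsep x hx j hj with h1 | h1
    · exact (sub_pos.2 h1.2).ne'
    · exact (sub_neg.2 h1.2).ne
  have htop : β i < α (q + 1) := ho i (q + 1) hi (by omega) le_rfl
  let g : ℝ → ℝ := fun x => κ * (x - α i) * (α (q + 1) - x) *
        (∏ j ∈ (Finset.Icc 1 q).erase i, ((x - α j) / (x - β j))) - m * x * (β i - x)
  have hg : ContinuousOn g (Set.Icc (α i) (β i)) := by
    refine ContinuousOn.sub (ContinuousOn.mul (by fun_prop) (aux_ratio_cont _ _ _ _ hne)) (by fun_prop)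
  have hga : g (α i) < 0 := by
    have : 0 < m * α i * (β i - α i) := mul_pos (mul_pos hm hα) (by linarith [hi'.1])
    simp only [g]; simp; linarith
  have hgb : 0 < g (β i) := by
    have hR := aux_ratio _ α β (β i) (hsep (β i) ⟨hi'.1.le, le_rfl⟩)
    have : 0 < κ * (β i - α i) * (α (q + 1) - β i) *
        (∏ j ∈ (Finset.Icc 1 q).erase i, ((β i - α j) / (β i - β j))) :=
      mul_pos (mul_pos (mul_pos hκ (by linarith [hi'.1])) (by linarith)) hR
    simp only [g]; simpa using this
  obtain ⟨x, hx, hgx⟩ := intermediate_value_Ioo hi'.1.le hg ⟨hga, hgb⟩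
  have hxI : x ∈ Set.Icc (α i) (β i) := ⟨hx.1.le, hx.2.le⟩
  have e1 : κ * (x - α i) * (α (q + 1) - x) *
        (∏ j ∈ (Finset.Icc 1 q).erase i, ((x - α j) / (x - β j))) = m * x * (β i - x) := by
    simp only [g] at hgx; linarith
  refine ⟨x, hx.1, hx.2, e1, ?_⟩
  have hmem : i ∈ Finset.Icc 1 q := Finset.mem_Icc.2 ⟨hi, hiq⟩
  rw [Finset.prod_Icc_succ_top (by omega), ← Finset.mul_prod_erase _ _ hmem,
    ← Finset.mul_prod_erase _ (fun j => x - β j) hmem]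
  rw [Finset.prod_div_distrib] at e1
  have hB : (∏ j ∈ (Finset.Icc 1 q).erase i, (x - β j)) ≠ 0 :=
    Finset.prod_ne_zero_iff.2 (hne x hxI)
  field_simp at e1
  linear_combination -e1

theorem aux_root2 (q : ℕ) (a b d e : ℕ → ℝ)
    (h : ∀ i, 1 ≤ i → i ≤ q → d i < a i ∧ a i < b i ∧ b i < d (i + 1) ∧ b i < e i) :
    ∃ s, 0 < s ∧ s < 1 ∧ ∀ i, 1 ≤ i → i ≤ q → ∃ x, b i < x ∧ x < d (i + 1) ∧ x < e i ∧
      ∏ j ∈ Finset.Icc 1 q, (x - b j) = s * ∏ j ∈ Finset.Icc 1 q, (x - a j) := by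
  have ho := aux_ord q d b (fun i h1 h2 => by have := h i h1 h2; constructor <;> linarith)
  have hsep : ∀ i, 1 ≤ i → i ≤ q → ∀ x ∈ Set.Ico (b i) (d (i + 1)),
      ∀ j ∈ (Finset.Icc 1 q).erase i, (b j < x ∧ a j < x) ∨ (x < b j ∧ x < a j) := by
    intro i hi hiq x hx j hj
    rw [Finset.mem_erase, Finset.mem_Icc] at hj
    have hj' := h j hj.2.1 hj.2.2
    have hi' := h i hi hiq
    rcases lt_or_gt_of_ne hj.1 with hl | hl
    · left
      have := ho j i hj.2.1 hl (by omega)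
      constructor <;> linarith [hx.1]
    · right
      have : d (i + 1) ≤ d j := by
        rcases (show i + 1 ≤ j from hl).eq_or_lt with h1 | h1
        · rw [h1]
        · have h2 := ho (i + 1) j (by omega) h1 (by omega)
          have h3 := h (i + 1) (by omega) (by omega)
          linarith
      constructor <;> linarith [hx.2]
  let c : ℕ → ℝ := fun i => (b i + min (d (i + 1)) (e i)) / 2
  have hc : ∀ i, 1 ≤ i → i ≤ q → b i < c i ∧ c i < d (i + 1) ∧ c i < e i := by
    intro i hi hiq
    have hi' := h i hi hiq
    have h1 : b i < min (d (i + 1)) (e i) := lt_min hi'.2.2.1 hi'.2.2.2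
    have h2 := min_le_left (d (i + 1)) (e i)
    have h3 := min_le_right (d (i + 1)) (e i)
    simp only [c]
    refine ⟨?_, ?_, ?_⟩ <;> linarith
  let T : ℕ → ℝ → ℝ := fun i x => ∏ j ∈ (Finset.Icc 1 q).erase i, ((x - b j) / (x - a j))
  let w : ℕ → ℝ := fun i => (c i - b i) * T i (c i) / (c i - a i)
  have hw : ∀ i ∈ Finset.Icc 1 q, 0 < w i := by
    intro i hi
    rw [Finset.mem_Icc] at hi
    have hc' := hc i hi.1 hi.2
    have hi' := h i hi.1 hi.2
    have hT : 0 < T i (c i) := aux_ratio _ b a _ (hsep i hi.1 hi.2 _ ⟨hc'.1.le, hc'.2.1⟩)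
    exact div_pos (mul_pos (by linarith) hT) (by linarith)
  have hex : ∃ s : ℝ, 0 < s ∧ s < 1 ∧ ∀ i ∈ Finset.Icc 1 q, s < w i := by
    have h1 : ∀ᶠ s in nhdsWithin (0 : ℝ) (Set.Ioi 0), ∀ i ∈ Finset.Icc 1 q, s < w i := by
      rw [Filter.eventually_all_finset]
      intro i hi
      exact nhdsWithin_le_nhds (Iio_mem_nhds (hw i hi))
    have h2 : ∀ᶠ s in nhdsWithin (0 : ℝ) (Set.Ioi 0), s < 1 :=
      nhdsWithin_le_nhds (Iio_mem_nhds one_pos)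
    have h3 : ∀ᶠ s in nhdsWithin (0 : ℝ) (Set.Ioi 0), 0 < s := self_mem_nhdsWithin
    obtain ⟨s, hs⟩ := (h1.and (h2.and h3)).exists
    exact ⟨s, hs.2.2, hs.2.1, hs.1⟩
  obtain ⟨s, hs0, hs1, hsw⟩ := hex
  refine ⟨s, hs0, hs1, fun i hi hiq => ?_⟩
  have hmem : i ∈ Finset.Icc 1 q := Finset.mem_Icc.2 ⟨hi, hiq⟩
  have hc' := hc i hi hiq
  have hi' := h i hi hiq
  have hne : ∀ x ∈ Set.Icc (b i) (c i), ∀ j ∈ (Finset.Icc 1 q).erase i, x - a j ≠ 0 := by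
    intro x hx j hj
    rcases hsep i hi hiq x ⟨hx.1, by linarith [hx.2]⟩ j hj with h1 | h1
    · exact (sub_pos.2 h1.2).ne'
    · exact (sub_neg.2 h1.2).ne
  let g : ℝ → ℝ := fun x => (x - b i) * T i x - s * (x - a i)
  have hg : ContinuousOn g (Set.Icc (b i) (c i)) :=
    ContinuousOn.sub (ContinuousOn.mul (by fun_prop) (aux_ratio_cont _ _ _ _ hne)) (by fun_prop)
  have hga : g (b i) < 0 := by
    have : 0 < s * (b i - a i) := mul_pos hs0 (by linarith)
    simp only [g]; simp; linarith
  have hgb : 0 < g (c i) := by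
    have h1 := hsw i hmem
    simp only [w] at h1
    rw [lt_div_iff₀ (by linarith)] at h1
    simp only [g]; linarith
  obtain ⟨x, hx, hgx⟩ := intermediate_value_Ioo hc'.1.le hg ⟨hga, hgb⟩
  refine ⟨x, hx.1, by linarith [hx.2], by linarith [hx.2], ?_⟩
  have e1 : (x - b i) * T i x = s * (x - a i) := by
    simp only [g] at hgx; linarith
  rw [← Finset.mul_prod_erase _ _ hmem, ← Finset.mul_prod_erase _ (fun j => x - a j) hmem]
  simp only [T] at e1
  rw [Finset.prod_div_distrib] at e1
  have hB : (∏ j ∈ (Finset.Icc 1 q).erase i, (x - a j)) ≠ 0 :=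
    Finset.prod_ne_zero_iff.2 (hne x ⟨hx.1.le, hx.2.le⟩)
  field_simp at e1
  linear_combination e1

theorem aux_core (q : ℕ) (α β : ℕ → ℝ) (κ m L : ℝ) (hκ : 0 < κ) (hm : 0 < m)
    (h : ∀ i, 1 ≤ i → i ≤ q → 0 < α i ∧ α i < β i ∧ β i < α (i + 1))
    (hL : α (q + 1) < L)
    (hmL : κ * ∏ j ∈ Finset.Icc 1 (q + 1), (L - α j) = m * L * ∏ j ∈ Finset.Icc 1 q, (L - β j)) :
    ∃ (α' β' : ℕ → ℝ) (s : ℝ), 0 < s ∧ s < 1 ∧ α' (q + 1) = L ∧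
      (∀ i, 1 ≤ i → i ≤ q → α i < α' i ∧ α' i < β i ∧ β i < β' i ∧ β' i < α (i + 1) ∧
        β' i - α' i ≤ β i - α i ∧
        κ * (α' i - α i) * (α (q + 1) - α' i) *
        (∏ j ∈ (Finset.Icc 1 q).erase i, ((α' i - α j) / (α' i - β j))) =
          m * α' i * (β i - α' i)) ∧
      C κ * ∏ i ∈ Finset.Icc 1 (q + 1), (X - C (α i)) =
        C m * X * ∏ i ∈ Finset.Icc 1 q, (X - C (β i)) +
          C (κ - m) * ∏ i ∈ Finset.Icc 1 (q + 1), (X - C (α' i)) ∧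
      ∏ i ∈ Finset.Icc 1 q, (X - C (β i)) =
        C s * ∏ i ∈ Finset.Icc 1 q, (X - C (α' i)) +
          C (1 - s) * ∏ i ∈ Finset.Icc 1 q, (X - C (β' i)) := by
  have hr : ∀ i, ∃ x, 1 ≤ i → i ≤ q → α i < x ∧ x < β i ∧
      κ * (x - α i) * (α (q + 1) - x) *
        (∏ j ∈ (Finset.Icc 1 q).erase i, ((x - α j) / (x - β j))) = m * x * (β i - x) ∧
      κ * ∏ j ∈ Finset.Icc 1 (q + 1), (x - α j) = m * x * ∏ j ∈ Finset.Icc 1 q, (x - β j) := by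
    intro i
    by_cases hi : 1 ≤ i ∧ i ≤ q
    · obtain ⟨x, hx⟩ := aux_root1 q α β κ m hκ hm (fun i h1 h2 => (h i h1 h2).2) i hi.1 hi.2
        (h i hi.1 hi.2).1
      exact ⟨x, fun _ _ => hx⟩
    · exact ⟨0, fun h1 h2 => absurd ⟨h1, h2⟩ hi⟩
  choose u hu using hr
  let a : ℕ → ℝ := fun i => if i = q + 1 then L else u i
  have haL : a (q + 1) = L := by simp [a]
  have hau : ∀ i, i ≤ q → a i = u i := fun i hi => by
    simp only [a]; rw [if_neg (by omega)]
  have ha : ∀ i, 1 ≤ i → i ≤ q → α i < a i ∧ a i < β i ∧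
      κ * (a i - α i) * (α (q + 1) - a i) *
        (∏ j ∈ (Finset.Icc 1 q).erase i, ((a i - α j) / (a i - β j))) = m * a i * (β i - a i) ∧
      κ * ∏ j ∈ Finset.Icc 1 (q + 1), (a i - α j) =
        m * a i * ∏ j ∈ Finset.Icc 1 q, (a i - β j) := by
    intro i h1 h2
    rw [hau i h2]
    exact hu i h1 h2
  obtain ⟨s, hs0, hs1, hs⟩ := aux_root2 q a β α (fun i => β i + (a i - α i))
    (fun i h1 h2 => by
      have := h i h1 h2
      have := ha i h1 h2
      refine ⟨?_, ?_, ?_, ?_⟩ <;> linarith)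
  have hr2 : ∀ i, ∃ x, 1 ≤ i → i ≤ q → β i < x ∧ x < α (i + 1) ∧ x < β i + (a i - α i) ∧
      ∏ j ∈ Finset.Icc 1 q, (x - β j) = s * ∏ j ∈ Finset.Icc 1 q, (x - a j) := by
    intro i
    by_cases hi : 1 ≤ i ∧ i ≤ q
    · obtain ⟨x, hx⟩ := hs i hi.1 hi.2
      exact ⟨x, fun _ _ => hx⟩
    · exact ⟨0, fun h1 h2 => absurd ⟨h1, h2⟩ hi⟩
  choose b hb using hr2
  have ho := aux_ord q α β (fun i h1 h2 => (h i h1 h2).2)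
  have hob := aux_ord q α b (fun i h1 h2 => by
    have := h i h1 h2
    have := hb i h1 h2
    constructor <;> linarith)
  refine ⟨a, b, s, hs0, hs1, haL, ?_, ?_, ?_⟩
  · intro i h1 h2
    have h3 := ha i h1 h2
    have h4 := hb i h1 h2
    exact ⟨h3.1, h3.2.1, h4.1, h4.2.1, by linarith, h3.2.2.1⟩
  · have key := aux_poly (q + 1) (κ - m) a
      (C κ * ∏ i ∈ Finset.Icc 1 (q + 1), (X - C (α i)) -
        C m * X * ∏ i ∈ Finset.Icc 1 q, (X - C (β i))) ?_ ?_ ?_ ?_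
    · rw [← key]; ring
    · refine (natDegree_sub_le _ _).trans (max_le ?_ ?_)
      · exact (natDegree_C_mul_le _ _).trans (aux_monic (q + 1) α).1.le
      · rw [mul_assoc]
        refine (natDegree_C_mul_le _ _).trans (natDegree_mul_le.trans ?_)
        rw [(aux_monic q β).1, natDegree_X, add_comm]
    · rw [coeff_sub, coeff_C_mul, (aux_monic (q + 1) α).2, mul_assoc, coeff_C_mul, coeff_X_mul,
        (aux_monic q β).2]; ring
    · apply aux_inj
      intro i j hi hij hj
      have h1 := ha i hi (by omega)
      have h2 := ho i j hi hij hj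
      rcases hj.eq_or_lt with h3 | h3
      · subst h3; rw [haL]; linarith
      · have := ha j (by omega) (by omega)
        linarith
    · intro i hi
      rw [Finset.mem_Icc] at hi
      simp only [eval_sub, eval_mul, eval_C, eval_X, eval_prod]
      rcases hi.2.eq_or_lt with h3 | h3
      · rw [h3, haL, hmL]; ring
      · rw [(ha i hi.1 (by omega)).2.2.2]; ring
  · have key := aux_poly q (1 - s) b
      (∏ i ∈ Finset.Icc 1 q, (X - C (β i)) -
        C s * ∏ i ∈ Finset.Icc 1 q, (X - C (a i))) ?_ ?_ ?_ ?_
    · rw [← key]; ring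
    · refine (natDegree_sub_le _ _).trans (max_le ?_ ?_)
      · exact (aux_monic q β).1.le
      · exact (natDegree_C_mul_le _ _).trans (aux_monic q a).1.le
    · rw [coeff_sub, coeff_C_mul, (aux_monic q a).2, (aux_monic q β).2]; ring
    · apply aux_inj
      intro i j hi hij hj
      have h2 := hob i j hi hij (by omega)
      have h3 := h j (by omega) hj
      have h4 := hb j (by omega) hj
      linarith
    · intro i hi
      rw [Finset.mem_Icc] at hi
      simp only [eval_sub, eval_mul, eval_C, eval_X, eval_prod]
      rw [(hb i hi.1 hi.2).2.2.2]; ring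

theorem aux_lam_le (m : ℕ) (lam : ℕ → ℝ)
    (hmono : ∀ i, 1 ≤ i → i < m → lam i < lam (i + 1)) :
    ∀ i j, 1 ≤ i → i ≤ j → j ≤ m → lam i ≤ lam j := by
  intro i j hi hij
  induction j, hij using Nat.le_induction with
  | base => intro _; exact le_rfl
  | succ k hk ih =>
    intro hj
    linarith [ih (by omega), hmono k (by omega) (by omega)]

theorem aux_Del (m : ℕ) (hm : 2 ≤ m) (lam : ℕ → ℝ)
    (hmono : ∀ i, 1 ≤ i → i < m → lam i < lam (i + 1)) :
    0 < Del m lam ∧ Del m lam ≤ 1 / 2 ∧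
      ∀ i, 1 ≤ i → i < m → 2 * Del m lam ≤ lam (i + 1) - lam i := by
  have hfin : ((fun i => lam (i + 1) - lam i) '' Set.Icc 1 (m - 1)).Finite :=
    (Set.finite_Icc 1 (m - 1)).image _
  have hne : ((fun i => lam (i + 1) - lam i) '' Set.Icc 1 (m - 1)).Nonempty :=
    ⟨_, 1, ⟨le_rfl, by omega⟩, rfl⟩
  have hpos : 0 < sInf ((fun i => lam (i + 1) - lam i) '' Set.Icc 1 (m - 1)) := by
    obtain ⟨i, hi, he⟩ := hne.csInf_mem hfin
    rw [← he]
    have := hmono i hi.1 (by have := hi.2; omega)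
    simp only
    linarith
  refine ⟨?_, ?_, ?_⟩
  · unfold Del
    have := lt_min one_pos hpos
    linarith
  · unfold Del
    have := min_le_left 1 (sInf ((fun i => lam (i + 1) - lam i) '' Set.Icc 1 (m - 1)))
    linarith
  · intro i h1 h2
    have h3 := min_le_right 1 (sInf ((fun i => lam (i + 1) - lam i) '' Set.Icc 1 (m - 1)))
    have h4 : sInf ((fun i => lam (i + 1) - lam i) '' Set.Icc 1 (m - 1)) ≤ lam (i + 1) - lam i :=
      csInf_le hfin.bddBelow ⟨i, ⟨h1, by omega⟩, rfl⟩
    unfold Del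
    linarith

theorem aux_small (n m : ℕ) (hn : 2 ≤ n) (lam : ℕ → ℝ)
    (hD0 : 0 < Del m lam) (hD1 : Del m lam ≤ 1 / 2) (hL : 1 ≤ Lamb m lam)
    (i : ℕ) (him : i < m) :
    1 ≤ Ctwo n m lam i ∧
    (1 + Ctwo n m lam i) ^ n * rho n m lam i ≤
      Del m lam * (Del m lam / (4 * n * Lamb m lam)) := by
  have hn0 : (1 : ℝ) ≤ n := by exact_mod_cast (by omega : 1 ≤ n)
  have hL0 : 0 < Lamb m lam := by linarith
  have hee : eps n m lam = Del m lam ^ (n ^ 2 + n + 1) /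
    ((n : ℝ) * 2 ^ (3 * (n + 1) ^ 3) * Lamb m lam ^ ((n + 1) ^ 2)) := rfl
  have heps0 : 0 < eps n m lam := by rw [hee]; positivity
  have heps1 : eps n m lam ≤ 1 := by
    rw [hee, div_le_one (by positivity)]
    have h1 : Del m lam ^ (n ^ 2 + n + 1) ≤ 1 := pow_le_one₀ hD0.le (by linarith)
    have h2 : (1 : ℝ) ≤ 2 ^ (3 * (n + 1) ^ 3) := one_le_pow₀ (by norm_num)
    have h3 : 1 ≤ Lamb m lam ^ ((n + 1) ^ 2) := one_le_pow₀ hL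
    exact h1.trans (one_le_mul_of_one_le_of_one_le (one_le_mul_of_one_le_of_one_le hn0 h2) h3)
  set Δ := Del m lam with hΔ
  set Λ := Lamb m lam with hΛ
  set ε := eps n m lam with hε
  obtain ⟨e, he⟩ : ∃ e, e = ε ^ ((n + 1) ^ (m - i - 1)) := ⟨_, rfl⟩
  have he0 : 0 < e := by rw [he]; positivity
  have heε : e ≤ ε := by
    rw [he]
    exact pow_le_of_le_one heps0.le heps1 (by positivity)
  have he1 : e ≤ 1 := heε.trans heps1
  have hrho : rho n m lam i = e ^ (n + 1) := by
    unfold rho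
    rw [he, ← pow_mul, ← pow_succ]
    congr 2
    omega
  obtain ⟨A, hA⟩ : ∃ A, A = 2 ^ (2 * (n + 1) ^ 2) * Λ ^ (n + 1) / Δ ^ n := ⟨_, rfl⟩
  have hC : Ctwo n m lam i = A / e := by
    unfold Ctwo
    rw [hA, he, div_div]
  have hA1 : 1 ≤ A := by
    rw [hA, one_le_div (by positivity)]
    have h1 : Δ ^ n ≤ 1 := pow_le_one₀ hD0.le (by linarith)
    have h2 : (1 : ℝ) ≤ 2 ^ (2 * (n + 1) ^ 2) := one_le_pow₀ (by norm_num)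
    have h3 : 1 ≤ Λ ^ (n + 1) := one_le_pow₀ hL
    exact h1.trans (one_le_mul_of_one_le_of_one_le h2 h3)
  have hAe : 1 ≤ A / e := by
    rw [one_le_div he0]; linarith
  refine ⟨by rw [hC]; exact hAe, ?_⟩
  rw [hC, hrho]
  have h1 : (1 + A / e) ^ n * e ^ (n + 1) ≤ (2 * A) ^ n * ε := by
    calc (1 + A / e) ^ n * e ^ (n + 1) ≤ (2 * A / e) ^ n * e ^ (n + 1) := by
          have : 1 + A / e ≤ 2 * A / e := by rw [mul_div_assoc]; linarith
          gcongr
      _ = (2 * A) ^ n * e := by rw [div_pow, pow_succ]; field_simp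
      _ ≤ (2 * A) ^ n * ε := by gcongr
  refine h1.trans ?_
  have h2 : (2 * A) ^ n * ε =
      (2 ^ (n + 2 * (n + 1) ^ 2 * n) * 4 / 2 ^ (3 * (n + 1) ^ 3)) * (Δ * Δ ^ n) /
        (4 * n * Λ ^ (n + 1)) := by
    rw [hA, hee]
    have : (n + 1) ^ 2 = (n + 1) * n + (n + 1) := by ring
    have e1 : Λ ^ ((n + 1) ^ 2) = (Λ ^ (n + 1)) ^ n * Λ ^ (n + 1) := by
      rw [← pow_mul, ← pow_add, this]
    have e2 : Δ ^ (n ^ 2 + n + 1) = (Δ ^ n) ^ n * Δ ^ n * Δ := by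
      rw [← pow_mul]; ring
    have e3 : (2 : ℝ) ^ (n + 2 * (n + 1) ^ 2 * n) = 2 ^ n * (2 ^ (2 * (n + 1) ^ 2)) ^ n := by
      rw [pow_add, pow_mul]
    rw [e1, e2, e3, mul_pow, div_pow, mul_pow]
    field_simp
  rw [h2]
  have h3 : (2 : ℝ) ^ (n + 2 * (n + 1) ^ 2 * n) * 4 / 2 ^ (3 * (n + 1) ^ 3) ≤ 1 := by
    rw [div_le_one (by positivity)]
    have : (2 : ℝ) ^ (n + 2 * (n + 1) ^ 2 * n) * 4 = 2 ^ (n + 2 * (n + 1) ^ 2 * n + 2) := by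
      rw [pow_add (2 : ℝ) (n + 2 * (n + 1) ^ 2 * n) 2]; norm_num
    rw [this]
    apply pow_le_pow_right₀ (by norm_num)
    nlinarith [Nat.zero_le (n ^ 2), Nat.zero_le (n ^ 3)]
  have h4 : Δ ^ n ≤ Δ := pow_le_of_le_one hD0.le (by linarith) (by omega)
  have h5 : Λ ≤ Λ ^ (n + 1) := le_self_pow₀ hL (by omega)
  calc _ ≤ 1 * (Δ * Δ) / (4 * n * Λ) := by gcongr
    _ = _ := by ring

set_option maxHeartbeats 2000000 in
/-- Lemma `cas2`(i). -/
theorem stmt_16 (n m : ℕ) (hm : 2 ≤ m) (hmn : m ≤ n) (lam : ℕ → ℝ)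
    (hpos : 0 < lam 1) (hmono : ∀ i, 1 ≤ i → i < m → lam i < lam (i + 1))
    (p : ℕ) (hp2 : 2 ≤ p) (hpm : p ≤ m)
    (lamstar : ℝ) (hls : lam p < lamstar ∧ lamstar < Lamb m lam)
    (μ ν : ℝ) (hν : ν ≠ 0) (hμν : μ / ν < 0)
    (α β : ℕ → ℝ)
    (hαp : lam p ≤ α p ∧ α p < lamstar)
    (hroots : ∀ i, 1 ≤ i → i ≤ p - 1 →
      lam i ≤ α i ∧
      α i + Cone n m lam ^ n * rho n m lam i < β i ∧
      β i < lam i + (1 + Ctwo n m lam i) ^ n * rho n m lam i ∧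
      lam i + (1 + Ctwo n m lam i) ^ n * rho n m lam i < lam (i + 1)) :
    ∃ (α' β' : ℕ → ℝ) (mstar bstar μ₀ ν₀ : ℝ),
      (∀ i, 1 ≤ i → i < p → α' i < α' (i + 1)) ∧
      (∀ i, 1 ≤ i → i < p - 1 → β' i < β' (i + 1)) ∧
      α' p = lamstar ∧
      (∀ i, 1 ≤ i → i ≤ p - 1 →
        α i < α' i ∧ α' i < β i ∧
        Cone n m lam * (β i - α i) ≤ β' i - α' i ∧
        β' i - α' i ≤ Ctwo n m lam i * (β i - α i)) ∧
      0 < mstar ∧ 0 < bstar ∧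
      -μ₀ / ν₀ > -(lam 1 / Lamb m lam) * (μ / ν) ∧
      Polynomial.C μ * ∏ i ∈ Finset.Icc 1 p, (Polynomial.X - Polynomial.C (α i)) =
        -(Polynomial.C mstar * Polynomial.C ν) * Polynomial.X *
            ∏ i ∈ Finset.Icc 1 (p - 1), (Polynomial.X - Polynomial.C (β i)) -
          Polynomial.C bstar * Polynomial.C μ₀ *
            ∏ i ∈ Finset.Icc 1 p, (Polynomial.X - Polynomial.C (α' i)) ∧
      Polynomial.C ν * (Polynomial.X - Polynomial.C lamstar) *
          ∏ i ∈ Finset.Icc 1 (p - 1), (Polynomial.X - Polynomial.C (β i)) =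
        Polynomial.C μ₀ * ∏ i ∈ Finset.Icc 1 p, (Polynomial.X - Polynomial.C (α' i)) +
          Polynomial.C bstar * Polynomial.C ν₀ * (Polynomial.C lamstar - Polynomial.X) *
            ∏ i ∈ Finset.Icc 1 (p - 1), (Polynomial.X - Polynomial.C (β' i)) := by
  obtain ⟨q, rfl⟩ : ∃ q, p = q + 1 := ⟨p - 1, by omega⟩
  simp only [Nat.add_sub_cancel] at hroots ⊢
  obtain ⟨hD0, hD1, hgap⟩ := aux_Del m hm lam hmono
  have hle := aux_lam_le m lam hmono
  have hlampos : ∀ i, 1 ≤ i → i ≤ m → 0 < lam i := fun i h1 h2 =>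
    hpos.trans_le (hle 1 i le_rfl h1 h2)
  have hΛ : 1 ≤ Lamb m lam := by
    unfold Lamb; linarith [hlampos m (by omega) le_rfl]
  have hsm := fun i => aux_small n m (by omega) lam hD0 hD1 hΛ i
  obtain ⟨Δ, hΔ⟩ : ∃ Δ, Δ = Del m lam := ⟨_, rfl⟩
  obtain ⟨Λ, hΛe⟩ : ∃ Λ, Λ = Lamb m lam := ⟨_, rfl⟩
  have hC1 : Cone n m lam = Δ / (2 ^ (n + 1) * Λ) := by rw [hΔ, hΛe]; rfl
  rw [← hΔ] at hD0 hD1 hgap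
  rw [← hΛe] at hΛ hls ⊢
  simp only [← hΔ, ← hΛe] at hsm
  have hn0 : (2 : ℝ) ≤ n := by exact_mod_cast (by omega : 2 ≤ n)
  have hΛ0 : 0 < Λ := by linarith
  obtain ⟨y, hy⟩ : ∃ y, y = Δ / (4 * n * Λ) := ⟨_, rfl⟩
  have hy0 : 0 < y := by rw [hy]; positivity
  have hny : n * y = Δ / (4 * Λ) := by rw [hy]; field_simp
  have hnyΛ : n * y * Λ = Δ / 4 := by rw [hny]; field_simp
  have hny1 : n * y ≤ 1 / 8 := by
    rw [hny, div_le_iff₀ (by positivity)]; linarith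
  have hy1 : y ≤ 1 / 8 := by nlinarith
  simp only [← hy] at hsm
  have hΔy : Δ * y ≤ Δ := by nlinarith
  -- basic facts on the roots
  have hC1pos : 0 < Cone n m lam := by rw [hC1]; positivity
  have hrho0 : ∀ i, 0 < rho n m lam i := by
    intro i
    have : 0 < eps n m lam := by
      unfold eps
      rw [← hΔ, ← hΛe]
      positivity
    unfold rho
    positivity
  have hr : ∀ i, 1 ≤ i → i ≤ q → lam i ≤ α i ∧ α i < β i ∧ β i < lam i + Δ * y := by
    intro i h1 h2
    have h3 := hroots i h1 h2
    have h4 := (hsm i (by omega)).2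
    have h5 := mul_pos (pow_pos hC1pos n) (hrho0 i)
    refine ⟨h3.1, ?_, ?_⟩ <;> linarith
  have hαlam : ∀ i, 1 ≤ i → i ≤ q + 1 → lam i ≤ α i := by
    intro i h1 h2
    rcases h2.eq_or_lt with h3 | h3
    · rw [h3]; exact hαp.1
    · exact (hr i h1 (by omega)).1
  have hsep : ∀ i j, 1 ≤ i → i < j → j ≤ q + 1 → β i + Δ ≤ lam j := by
    intro i j h1 h2 h3
    have h4 := hr i h1 (by omega)
    have h5 := hgap i h1 (by omega)
    have h6 := hle (i + 1) j (by omega) h2 (by omega)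
    linarith
  have hlace : ∀ i, 1 ≤ i → i ≤ q → 0 < α i ∧ α i < β i ∧ β i < α (i + 1) := by
    intro i h1 h2
    have h3 := hr i h1 h2
    have h4 := hsep i (i + 1) h1 (by omega) (by omega)
    have h5 := hαlam (i + 1) (by omega) (by omega)
    have h6 := hlampos i h1 (by omega)
    refine ⟨?_, ?_, ?_⟩ <;> linarith
  have hLpos : 0 < lamstar := by linarith [hlampos (q + 1) (by omega) hpm]
  have hLα : ∀ i, 1 ≤ i → i ≤ q → Δ ≤ lamstar - α i ∧ (1 - y) * (lamstar - α i) ≤ lamstar - β i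
      ∧ 0 < lamstar - β i := by
    intro i h1 h2
    have h3 := hr i h1 h2
    have h4 := hsep i (q + 1) h1 (by omega) le_rfl
    have h5 : Δ ≤ lamstar - α i := by linarith
    refine ⟨h5, ?_, by linarith⟩
    nlinarith
  obtain ⟨A, hA⟩ : ∃ A, A = ∏ i ∈ Finset.Icc 1 q, (lamstar - α i) := ⟨_, rfl⟩
  obtain ⟨G, hG⟩ : ∃ G, G = ∏ i ∈ Finset.Icc 1 q, (lamstar - β i) := ⟨_, rfl⟩
  have hA0 : 0 < A := by
    rw [hA]
    refine Finset.prod_pos fun i hi => ?_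
    rw [Finset.mem_Icc] at hi
    linarith [(hLα i hi.1 hi.2).1]
  have hG0 : 0 < G := by
    rw [hG]
    refine Finset.prod_pos fun i hi => ?_
    rw [Finset.mem_Icc] at hi
    exact (hLα i hi.1 hi.2).2.2
  have hGA : (1 - n * y) * A ≤ G := by
    have h1 : (1 - y) ^ q * A ≤ G := by
      have : (1 - y) ^ q * A = ∏ i ∈ Finset.Icc 1 q, ((1 - y) * (lamstar - α i)) := by
        rw [Finset.prod_mul_distrib, ← hA]; simp
      rw [this, hG]
      refine Finset.prod_le_prod ?_ ?_
      · intro i hi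
        rw [Finset.mem_Icc] at hi
        exact mul_nonneg (by linarith) (by linarith [(hLα i hi.1 hi.2).1])
      · intro i hi
        rw [Finset.mem_Icc] at hi
        exact (hLα i hi.1 hi.2).2.1
    have h2 : 1 - n * y ≤ (1 - y) ^ q := by
      have h3 := one_add_mul_le_pow (a := -y) (by linarith) q
      have h4 : (q : ℝ) ≤ n := by exact_mod_cast (by omega : q ≤ n)
      have h5 : (1 : ℝ) + -y = 1 - y := by ring
      rw [h5] at h3
      nlinarith
    exact (mul_le_mul_of_nonneg_right h2 hA0.le).trans h1
  obtain ⟨κ, hκ⟩ : ∃ κ, κ = -(μ / ν) := ⟨_, rfl⟩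
  have hκ0 : 0 < κ := by linarith
  have hμ : μ = -κ * ν := by rw [hκ]; field_simp
  obtain ⟨M, hM⟩ : ∃ M, M = κ * ((lamstar - α (q + 1)) * A) / (lamstar * G) := ⟨_, rfl⟩
  have hM0 : 0 < M := by
    rw [hM]
    have : 0 < lamstar - α (q + 1) := by linarith
    positivity
  have hMκ : M < κ * (1 - lam 1 / Λ) := by
    rw [hM, div_lt_iff₀ (by positivity), mul_assoc]
    refine mul_lt_mul_of_pos_left ?_ hκ0
    have h1 : (lamstar - α (q + 1)) * Λ < lamstar * ((1 - n * y) * (Λ - lam 1)) := by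
      have h2 := hgap 1 le_rfl (by omega)
      have h3 := hle 2 (q + 1) (by omega) hp2 hpm
      have h4 : lamstar * lam (q + 1) < Λ * lam (q + 1) :=
        mul_lt_mul_of_pos_right hls.2 (hlampos (q + 1) (by omega) hpm)
      have h5 : Λ * lam (q + 1) ≤ Λ * α (q + 1) := mul_le_mul_of_nonneg_left hαp.1 hΛ0.le
      have h6 : Λ - lam (q + 1) ≤ (1 - n * y) * (Λ - lam 1) := by
        have : 0 < n * y * lam 1 := by positivity
        norm_num at h2
        nlinarith
      have h7 := mul_le_mul_of_nonneg_left h6 hLpos.le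
      nlinarith
    have hl1 : 0 < Λ - lam 1 := by
      have := hle 1 m le_rfl (by omega) le_rfl
      rw [hΛe]; unfold Lamb; linarith
    have h8 : (lamstar - α (q + 1)) * Λ * A < lamstar * (Λ - lam 1) * G := by
      calc _ < lamstar * ((1 - n * y) * (Λ - lam 1)) * A := mul_lt_mul_of_pos_right h1 hA0
        _ = lamstar * (Λ - lam 1) * ((1 - n * y) * A) := by ring
        _ ≤ _ := mul_le_mul_of_nonneg_left hGA (by positivity)
    have h9 : (1 - lam 1 / Λ) * (lamstar * G) = lamstar * (Λ - lam 1) * G / Λ := by field_simp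
    rw [h9, lt_div_iff₀ hΛ0]
    linarith
  have hl0 : 0 < lam 1 / Λ := by positivity
  have hMκ' : M < κ := by nlinarith
  obtain ⟨α', β', s, hs0, hs1, hα'L, hab, hP1, hP2⟩ := aux_core q α β κ M lamstar hκ0 hM0 hlace
    hαp.2 (by
      rw [Finset.prod_Icc_succ_top (by omega), ← hA, ← hG, hM]; field_simp)
  have hbpos : 0 < (κ - M) / s := div_pos (by linarith) hs0
  refine ⟨α', β', M, (κ - M) / s, s * ν, -(1 - s) * ν * s / (κ - M), ?_, ?_, hα'L, ?_, hM0,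
    hbpos, ?_, ?_, ?_⟩
  · intro i h1 h2
    have h3 := hab i h1 (by omega)
    have h4 := hlace i h1 (by omega)
    rcases (show i + 1 ≤ q + 1 by omega).eq_or_lt with h5 | h5
    · rw [h5] at h4 ⊢
      rw [hα'L]; linarith
    · have h6 := hab (i + 1) (by omega) (by omega)
      linarith
  · intro i h1 h2
    have h3 := hab i h1 (by omega)
    have h4 := hab (i + 1) (by omega) (by omega)
    linarith
  · intro i h1 h2
    obtain ⟨g1, g2, g3, g4, g5, g6⟩ := hab i h1 h2
    have hi := hlace i h1 h2
    refine ⟨g1, g2, ?_, ?_⟩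
    · obtain ⟨k, rfl⟩ : ∃ k, n = k + 2 := ⟨n - 2, by omega⟩
      have hR : (1 / 2 : ℝ) ^ k ≤
          ∏ j ∈ (Finset.Icc 1 q).erase i, ((α' i - α j) / (α' i - β j)) := by
        have hcard : ((Finset.Icc 1 q).erase i).card ≤ k := by
          rw [Finset.card_erase_of_mem (Finset.mem_Icc.2 ⟨h1, h2⟩)]
          simp; omega
        calc (1 / 2 : ℝ) ^ k ≤ (1 / 2 : ℝ) ^ ((Finset.Icc 1 q).erase i).card :=
              pow_le_pow_of_le_one (by norm_num) (by norm_num) hcard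
          _ = ∏ j ∈ (Finset.Icc 1 q).erase i, (1 / 2 : ℝ) := by rw [Finset.prod_const]
          _ ≤ _ := by
            refine Finset.prod_le_prod (fun _ _ => by norm_num) fun j hj => ?_
            rw [Finset.mem_erase, Finset.mem_Icc] at hj
            have hj' := hr j hj.2.1 hj.2.2
            rcases lt_or_gt_of_ne hj.1 with hl | hl
            · have := hsep j i hj.2.1 hl (by omega)
              have := hr i h1 h2
              rw [le_div_iff₀ (by linarith)]
              linarith
            · have := hsep i j h1 hl (by omega)
              rw [le_div_iff_of_neg (by linarith)]
              linarith
      have hp' := hsep i (q + 1) h1 (by omega) le_rfl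
      have hdist : Δ ≤ α (q + 1) - α' i := by linarith [hαp.1]
      have hα'Λ : α' i ≤ Λ := by linarith [hls.2]
      have e1 : κ * (α' i - α i) * Δ * (1 / 2 : ℝ) ^ k ≤ κ * Λ * (β i - α' i) := by
        calc _ ≤ κ * (α' i - α i) * (α (q + 1) - α' i) *
              (∏ j ∈ (Finset.Icc 1 q).erase i, ((α' i - α j) / (α' i - β j))) := by
              have : 0 ≤ α' i - α i := by linarith
              have : 0 ≤ α (q + 1) - α' i := by linarith
              gcongr
          _ = M * α' i * (β i - α' i) := g6
          _ ≤ _ := by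
              have : 0 ≤ β i - α' i := by linarith
              have : 0 ≤ α' i := by linarith
              gcongr
      obtain ⟨r, hrr⟩ : ∃ r, r = Δ * (1 / 2 : ℝ) ^ k / Λ := ⟨_, rfl⟩
      have e2 : (α' i - α i) * r ≤ β i - α' i := by
        rw [hrr, ← mul_div_assoc, div_le_iff₀ hΛ0]
        refine le_of_mul_le_mul_left ?_ hκ0
        linarith
      have hr1 : r ≤ 1 := by
        rw [hrr, div_le_one hΛ0]
        have : (1 / 2 : ℝ) ^ k ≤ 1 := pow_le_one₀ (by norm_num) (by norm_num)
        nlinarith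
      have hC : Cone (k + 2) m lam = r / 8 := by
        rw [hC1, hrr, one_div, inv_pow, pow_succ, pow_succ, pow_succ]
        field_simp
        norm_num
      rw [hC]
      nlinarith
    · have h3 := (hsm i (by omega)).1
      nlinarith
  · have h1 : -(s * ν) / (-(1 - s) * ν * s / (κ - M)) = (κ - M) / (1 - s) := by
      have : 1 - s ≠ 0 := by linarith
      have : κ - M ≠ 0 := by linarith
      field_simp
    rw [h1, gt_iff_lt, lt_div_iff₀ (by linarith)]
    have h2 : -(lam 1 / Λ) * (μ / ν) = lam 1 / Λ * κ := by rw [hκ]; ring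
    rw [h2]
    have h3 : 0 < lam 1 / Λ * κ := by positivity
    nlinarith
  · have h1 : C ((κ - M) / s) * C (s * ν) = C (κ - M) * C ν := by
      rw [← C_mul, ← C_mul]; congr 1; field_simp
    have h2 : C μ = -C κ * C ν := by rw [hμ, C_mul, C_neg]
    rw [h1, h2]
    linear_combination (-C ν) * hP1
  · have h1 : C ((κ - M) / s) * C (-(1 - s) * ν * s / (κ - M)) = -C (1 - s) * C ν := by
      rw [← C_mul, ← C_neg, ← C_mul]; congr 1
      have : κ - M ≠ 0 := by linarith
      field_simp
    rw [h1, Finset.prod_Icc_succ_top (by omega), hα'L, C_mul]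
    linear_combination (C ν * (X - C lamstar)) * hP2
end
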